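/- Fix θ ∈ ℝ and for a C² function u of (x, y, t) ∈ ℝ³ write u_X = cosθ·∂_x u − sinθ·∂_y u, u_Y = sinθ·∂_x u + cosθ·∂_y u, with u_XX, u_XY, u_Xt, u_YY, u_tt the corresponding second derivatives. Let F : ℝ³ → ℝ be any smooth ℤ³-periodic function satisfying the normalization ∫_{[0,1]³} (e^{F} − 1) dx dy dt = 0. Then there exists a smooth ℤ³-periodic function u : ℝ³ → ℝ satisfying, at every point, (u_XX + 1)(u_YY + u_tt + u_t + 1) − u_XY² − u_Xt² = e^F together with u_XX + 1 > 0 and u_YY + u_tt + u_t + 1 > 0. -/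

import Mathlib

open MeasureTheory

/-- The partial derivative of `w : ℝ³ → ℝ` in the `i`-th coordinate direction
(coordinates `(x, y, t)` correspond to indices `0, 1, 2`). -/
noncomputable def pd (i : Fin 3) (w : EuclideanSpace ℝ (Fin 3) → ℝ) :
    EuclideanSpace ℝ (Fin 3) → ℝ :=
  fun x => fderiv ℝ w x (EuclideanSpace.single i (1 : ℝ))

/-- The derivative `w_X = cos θ ∂_x w − sin θ ∂_y w`. -/
noncomputable def Xd (θ : ℝ) (w : EuclideanSpace ℝ (Fin 3) → ℝ) :
    EuclideanSpace ℝ (Fin 3) → ℝ :=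
  fun x => Real.cos θ * pd 0 w x - Real.sin θ * pd 1 w x

/-- The derivative `w_Y = sin θ ∂_x w + cos θ ∂_y w`. -/
noncomputable def Yd (θ : ℝ) (w : EuclideanSpace ℝ (Fin 3) → ℝ) :
    EuclideanSpace ℝ (Fin 3) → ℝ :=
  fun x => Real.sin θ * pd 0 w x + Real.cos θ * pd 1 w x

/-!
The equation is solved by the continuity method along the right-hand sides `1 + τ (E - 1)`,
`E = exp F`, starting from `u = 0`. The maximum principle bounds the trace
`2 + u_XX + u_YY + u_tt + u_t` along the path, so that the equations are uniformly elliptic. The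
vector fields `(1 + u_XX)⁻¹ ∂_X`, `∂_Y - (1 + u_XX)⁻¹ u_XY ∂_X`, `∂_t - (1 + u_XX)⁻¹ u_Xt ∂_X`
commute, being the coordinate fields of a partial Legendre transform in `X`, and in this frame the
linearized operator is in divergence form, up to the term of first order, with respect to the
density `1 + u_XX`. Energy estimates and interpolation then bound the frame coefficients and their
first and second frame derivatives uniformly in the sup, `L⁴` and `L²` norms respectively, and hence
the inverse of the linearization as an operator from `H²` to `H⁴`. As the equation is quadratic in
`u`, a quantitative inverse function theorem on the completions `H⁴ → H²` gives a step in `τ` of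
uniform length. A solution in `H⁴` is smooth: its translates solve the equation with translated
right-hand sides, so the inverse function theorem makes its orbit under translations smooth.
-/

namespace KodairaThurston

open Filter Topology Set
open scoped ContDiff

/-! ### Smooth periodic functions -/

/-- Membership in the standard lattice `ℤ^ι` of `ℝ^ι`. -/
def IsLatticeVector {ι : Type*} (a : EuclideanSpace ℝ ι) : Prop := ∀ i, ∃ k : ℤ, a i = (k : ℝ)

/-- The smooth `ℤ^ι`-periodic functions on `ℝ^ι`, as a subalgebra of all functions. -/
def smoothPeriodicSubalgebra (ι : Type*) [Fintype ι] : Subalgebra ℝ (EuclideanSpace ℝ ι → ℝ) where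
  carrier := {f | ContDiff ℝ ∞ f ∧ ∀ x a, IsLatticeVector a → f (x + a) = f x}
  mul_mem' := fun {f g} hf hg =>
    ⟨hf.1.mul hg.1, fun x a ha => by simp only [Pi.mul_apply, hf.2 x a ha, hg.2 x a ha]⟩
  add_mem' := fun {f g} hf hg =>
    ⟨hf.1.add hg.1, fun x a ha => by simp only [Pi.add_apply, hf.2 x a ha, hg.2 x a ha]⟩
  algebraMap_mem' := fun _ => ⟨contDiff_const, fun _ _ _ => rfl⟩

/-- Smooth functions on the torus `ℝ^ι / ℤ^ι`, encoded as smooth periodic functions on `ℝ^ι`. -/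
def SmoothPeriodic (ι : Type*) [Fintype ι] : Type _ := smoothPeriodicSubalgebra ι

namespace SmoothPeriodic

variable {ι : Type*} [Fintype ι]

noncomputable instance : CommRing (SmoothPeriodic ι) :=
  inferInstanceAs (CommRing (smoothPeriodicSubalgebra ι))

noncomputable instance : Algebra ℝ (SmoothPeriodic ι) :=
  inferInstanceAs (Algebra ℝ (smoothPeriodicSubalgebra ι))

instance : FunLike (SmoothPeriodic ι) (EuclideanSpace ℝ ι) ℝ :=
  ⟨fun f => f.1, Subtype.val_injective⟩

variable (f g : SmoothPeriodic ι) (x e s : EuclideanSpace ℝ ι)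

lemma contDiff : ContDiff ℝ ∞ f := f.2.1

lemma continuous : Continuous f := f.contDiff.continuous

lemma differentiableAt : DifferentiableAt ℝ f x := f.contDiff.differentiable (by simp) x

lemma periodic {a : EuclideanSpace ℝ ι} (ha : IsLatticeVector a) : f (x + a) = f x := f.2.2 x a ha

@[ext] lemma ext {f g : SmoothPeriodic ι} (h : ∀ x, f x = g x) : f = g := DFunLike.ext _ _ h

@[simp] lemma add_apply : (f + g) x = f x + g x := rfl
@[simp] lemma mul_apply : (f * g) x = f x * g x := rfl
@[simp] lemma sub_apply : (f - g) x = f x - g x := rfl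
@[simp] lemma neg_apply : (-f) x = -f x := rfl
@[simp] lemma one_apply : (1 : SmoothPeriodic ι) x = 1 := rfl
@[simp] lemma zero_apply : (0 : SmoothPeriodic ι) x = 0 := rfl
@[simp] lemma smul_apply (c : ℝ) : (c • f) x = c * f x := rfl

/-- Evaluation at a point, as an algebra homomorphism. -/
def evalAt : SmoothPeriodic ι →ₐ[ℝ] ℝ where
  toFun f := f x
  map_one' := rfl
  map_mul' _ _ := rfl
  map_zero' := rfl
  map_add' _ _ := rfl
  commutes' _ := rfl

@[simp] lemma sum_apply {κ : Type*} (s : Finset κ) (f : κ → SmoothPeriodic ι) :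
    (∑ i ∈ s, f i) x = ∑ i ∈ s, f i x :=
  map_sum (evalAt x) f s

/-- Postcomposition with a smooth function of one variable. -/
def comp (φ : ℝ → ℝ) (hφ : ContDiff ℝ ∞ φ) (f : SmoothPeriodic ι) : SmoothPeriodic ι :=
  ⟨fun x => φ (f x), hφ.comp f.contDiff, fun x _ ha => congrArg φ (f.periodic x ha)⟩

@[simp] lemma comp_apply (φ : ℝ → ℝ) (hφ : ContDiff ℝ ∞ φ) : comp φ hφ f x = φ (f x) := rfl

/-- The pointwise reciprocal of a nowhere vanishing function. -/
noncomputable def inv (hf : ∀ x, f x ≠ 0) : SmoothPeriodic ι :=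
  ⟨fun x => (f x)⁻¹, f.contDiff.inv hf, fun x _ ha => congrArg Inv.inv (f.periodic x ha)⟩

lemma mul_inv (hf : ∀ x, f x ≠ 0) : f * inv f hf = 1 := ext fun x => mul_inv_cancel₀ (hf x)

/-- The closed unit cube, which contains a fundamental domain of the lattice `ℤ^ι`. -/
def unitCube (ι : Type*) : Set (EuclideanSpace ℝ ι) := {x | ∀ i, x i ∈ Icc (0 : ℝ) 1}

lemma exists_mem_unitCube_eq : ∃ y ∈ unitCube ι, ∀ f : SmoothPeriodic ι, f x = f y := by
  refine ⟨WithLp.toLp 2 fun i => Int.fract (x i),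
    fun i => ⟨Int.fract_nonneg _, (Int.fract_lt_one _).le⟩, fun f => ?_⟩
  have hx : x = WithLp.toLp 2 (fun i => Int.fract (x i)) + WithLp.toLp 2 fun i => (⌊x i⌋ : ℝ) :=
    PiLp.ext fun i => (Int.fract_add_floor (x i)).symm
  conv_lhs => rw [hx]
  exact f.periodic _ fun i => ⟨⌊x i⌋, rfl⟩

lemma isCompact_unitCube (ι : Type*) : IsCompact (unitCube ι) := by
  have h := (isCompact_univ_pi fun _ : ι => isCompact_Icc (a := (0 : ℝ)) (b := 1)).image
    (PiLp.continuous_toLp 2 fun _ : ι => ℝ)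
  convert h using 1
  ext y
  constructor
  · exact fun hy => ⟨fun i => y i, fun i _ => hy i, rfl⟩
  · rintro ⟨z, hz, rfl⟩ i
    exact hz i trivial

lemma exists_forall_le : ∃ x, ∀ y, f y ≤ f x := by
  obtain ⟨x, -, hx⟩ := (isCompact_unitCube ι).exists_isMaxOn ⟨0, fun _ => by simp⟩
    f.continuous.continuousOn
  refine ⟨x, fun y => ?_⟩
  obtain ⟨z, hz, hyz⟩ := exists_mem_unitCube_eq y
  exact hyz f ▸ hx hz

lemma exists_abs_le : ∃ C, ∀ x, |f x| ≤ C := by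
  obtain ⟨C, hC⟩ := (isCompact_unitCube ι).exists_bound_of_continuousOn f.continuous.continuousOn
  refine ⟨C, fun x => ?_⟩
  obtain ⟨y, hy, hxy⟩ := exists_mem_unitCube_eq x
  exact hxy f ▸ hC y hy

/-- The supremum norm. -/
noncomputable def supNorm : ℝ := ⨆ x, |f x|

lemma abs_le_supNorm : |f x| ≤ supNorm f := by
  obtain ⟨C, hC⟩ := f.exists_abs_le
  exact le_ciSup (f := fun x => |f x|) ⟨C, forall_mem_range.2 hC⟩ x

lemma supNorm_le {f : SmoothPeriodic ι} {C : ℝ} (h : ∀ x, |f x| ≤ C) : supNorm f ≤ C := ciSup_le h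

lemma supNorm_nonneg : 0 ≤ supNorm f := (abs_nonneg (f 0)).trans (f.abs_le_supNorm 0)

/-! ### Directional derivatives and translations -/

/-- The derivative along the constant vector field `e`, as a derivation. -/
noncomputable def dirDeriv : Derivation ℝ (SmoothPeriodic ι) (SmoothPeriodic ι) where
  toFun f := ⟨fun x => fderiv ℝ f x e,
    (f.contDiff.fderiv_right (m := ∞) (by simp)).clm_apply contDiff_const, fun x a ha => by
      have h : (fun y => f (y + a)) = f := funext fun y => f.periodic y ha
      simp only [← fderiv_comp_add_right a, h]⟩
  map_add' f g := by
    ext x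
    exact DFunLike.congr_fun (fderiv_add (f.differentiableAt x) (g.differentiableAt x)) e
  map_smul' c f := by
    ext x
    exact DFunLike.congr_fun (fderiv_const_smul (f.differentiableAt x) c) e
  map_one_eq_zero' := by
    ext x
    exact DFunLike.congr_fun (fderiv_const_apply (1 : ℝ)) e
  leibniz' f g := by
    ext x
    exact DFunLike.congr_fun (fderiv_mul (f.differentiableAt x) (g.differentiableAt x)) e

lemma dirDeriv_apply : dirDeriv e f x = fderiv ℝ f x e := rfl

lemma dirDeriv_dirDeriv_apply (e e' : EuclideanSpace ℝ ι) :
    dirDeriv e (dirDeriv e' f) x = fderiv ℝ (fderiv ℝ f) x e e' := by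
  have h : DifferentiableAt ℝ (fderiv ℝ f) x :=
    (f.contDiff.fderiv_right (m := ∞) (by simp)).differentiable (by simp) x
  change fderiv ℝ (fun y => fderiv ℝ f y e') x e = _
  rw [fderiv_clm_apply h (differentiableAt_const _)]
  simp

lemma dirDeriv_comm (e e' : EuclideanSpace ℝ ι) :
    dirDeriv e (dirDeriv e' f) = dirDeriv e' (dirDeriv e f) := by
  ext x
  rw [dirDeriv_dirDeriv_apply, dirDeriv_dirDeriv_apply]
  exact f.contDiff.contDiffAt.isSymmSndFDerivAt (n := ∞)
    (by simpa using WithTop.coe_le_coe.2 (le_top : (2 : ℕ∞) ≤ ⊤)) e e'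

lemma dirDeriv_add_dir (e e' : EuclideanSpace ℝ ι) :
    dirDeriv (e + e') f = dirDeriv e f + dirDeriv e' f :=
  ext fun x => map_add (fderiv ℝ f x) e e'

lemma dirDeriv_smul_dir (c : ℝ) : dirDeriv (c • e) f = c • dirDeriv e f :=
  ext fun x => map_smul (fderiv ℝ f x) c e

lemma dirDeriv_eq_sum [DecidableEq ι] :
    dirDeriv e f = ∑ i, e i • dirDeriv (EuclideanSpace.single i 1) f := by
  have he : e = ∑ i, e i • EuclideanSpace.single i (1 : ℝ) := by
    simpa using ((EuclideanSpace.basisFun ι ℝ).sum_repr e).symm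
  ext x
  rw [dirDeriv_apply]
  conv_lhs => rw [he]
  simp only [map_sum, map_smul, smul_eq_mul, sum_apply, smul_apply, dirDeriv_apply]

/-- Translation by `s`, as an algebra homomorphism. -/
def translate : SmoothPeriodic ι →ₐ[ℝ] SmoothPeriodic ι where
  toFun f := ⟨fun x => f (x + s), f.contDiff.comp (contDiff_id.add contDiff_const),
    fun x a ha => by simp only [add_right_comm x a, f.periodic _ ha]⟩
  map_one' := rfl
  map_mul' _ _ := rfl
  map_zero' := rfl
  map_add' _ _ := rfl
  commutes' _ := rfl

@[simp] lemma translate_apply : translate s f x = f (x + s) := rfl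

lemma translate_translate (s s' : EuclideanSpace ℝ ι) :
    translate s (translate s' f) = translate (s + s') f := by
  ext x
  simp only [translate_apply, add_assoc]

lemma translate_zero : translate 0 f = f := by
  ext x
  simp only [translate_apply, add_zero]

lemma dirDeriv_translate : dirDeriv e (translate s f) = translate s (dirDeriv e f) :=
  ext fun _ => DFunLike.congr_fun (fderiv_comp_add_right (f := f) s) e

lemma hasDerivAt_line (r : ℝ) :
    HasDerivAt (fun r : ℝ => f (x + r • e)) (dirDeriv e f (x + r • e)) r := by
  have h : HasDerivAt (fun r : ℝ => x + r • e) e r := by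
    simpa using ((hasDerivAt_id r).smul_const e).const_add x
  exact (f.differentiableAt _).hasFDerivAt.comp_hasDerivAt r h

variable {f x}

lemma dirDeriv_eq_zero_of_forall_le (hx : ∀ y, f y ≤ f x) : dirDeriv e f x = 0 := by
  have h : IsLocalMax f x := Eventually.of_forall hx
  rw [dirDeriv_apply, h.fderiv_eq_zero, _root_.zero_apply]

-- A positive second derivative would make the maximum a local minimum along the line, so the
-- function would be locally constant there and the second derivative would vanish.
lemma dirDeriv_dirDeriv_nonpos_of_forall_le (hx : ∀ y, f y ≤ f x) :
    dirDeriv e (dirDeriv e f) x ≤ 0 := by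
  by_contra! hpos
  set g : ℝ → ℝ := fun r => f (x + r • e) with hg
  have hg' : deriv g = fun r => dirDeriv e f (x + r • e) :=
    funext fun r => (f.hasDerivAt_line x e r).deriv
  have hg'' : deriv (deriv g) 0 = dirDeriv e (dirDeriv e f) x := by
    rw [hg', ((dirDeriv e f).hasDerivAt_line x e 0).deriv, zero_smul, add_zero]
  have hmin : IsLocalMin g 0 := by
    refine isLocalMin_of_deriv_deriv_pos (hg'' ▸ hpos) ?_ (f.hasDerivAt_line x e 0).continuousAt
    simpa [hg'] using dirDeriv_eq_zero_of_forall_le e hx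
  have hconst : g =ᶠ[𝓝 0] fun _ => g 0 := by
    filter_upwards [hmin] with r hr
    exact le_antisymm (by simpa [hg] using hx (x + r • e)) hr
  have hzero : deriv (deriv g) 0 = 0 := by
    rw [hconst.deriv.deriv_eq]
    simp
  exact hpos.ne' (hg'' ▸ hzero)

end SmoothPeriodic

namespace SmoothPeriodic

variable {ι : Type*} [Fintype ι]

attribute [local instance] instMeasureSpaceUnitAddCircle

local instance : Measure.IsAddHaarMeasure (volume : Measure UnitAddCircle) :=
  inferInstanceAs (Measure.IsAddHaarMeasure AddCircle.haarAddCircle)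

local instance : IsProbabilityMeasure (volume : Measure UnitAddCircle) :=
  inferInstanceAs (IsProbabilityMeasure AddCircle.haarAddCircle)

section Mean

/-! ### The mean over the torus and the `L²` norm -/

/-- The projection from `ℝ^ι` to the torus. -/
def torusProj (x : EuclideanSpace ℝ ι) : UnitAddTorus ι := fun i => (x i : UnitAddCircle)

omit [Fintype ι] in
lemma torusProj_add (x y : EuclideanSpace ℝ ι) :
    torusProj (x + y) = torusProj x + torusProj y := rfl

omit [Fintype ι] in
lemma isOpenQuotientMap_torusProj :
    IsOpenQuotientMap (torusProj : EuclideanSpace ℝ ι → UnitAddTorus ι) :=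
  (IsOpenQuotientMap.piMap fun _ => QuotientAddGroup.isOpenQuotientMap_mk).comp
    (EuclideanSpace.equiv ι ℝ).toHomeomorph.isOpenQuotientMap

variable (f g : SmoothPeriodic ι) (x e s : EuclideanSpace ℝ ι)

variable {x} in
lemma eq_of_torusProj_eq {y : EuclideanSpace ℝ ι} (h : torusProj x = torusProj y) : f x = f y := by
  have hxy : IsLatticeVector (x - y) := fun i => by
    obtain ⟨k, hk⟩ := AddSubgroup.mem_zmultiples_iff.1
      (QuotientAddGroup.eq_iff_sub_mem.1 (congrFun h i))
    exact ⟨k, by simpa using hk.symm⟩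
  rw [← f.periodic y hxy, add_sub_cancel]

/-- The function on the torus induced by a periodic function. -/
noncomputable def lift (z : UnitAddTorus ι) : ℝ :=
  f (Function.surjInv isOpenQuotientMap_torusProj.surjective z)

lemma lift_torusProj : lift f (torusProj x) = f x :=
  f.eq_of_torusProj_eq (Function.surjInv_eq _ _)

lemma continuous_lift : Continuous (lift f) := by
  rw [isOpenQuotientMap_torusProj.isQuotientMap.continuous_iff]
  exact f.continuous.congr fun x => (f.lift_torusProj x).symm

lemma integrable_lift : Integrable (lift f) :=
  f.continuous_lift.integrable_of_hasCompactSupport (HasCompactSupport.of_compactSpace _)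

/-- The mean value of a periodic function, as the integral over the torus, which has volume `1`. -/
noncomputable def mean : SmoothPeriodic ι →ₗ[ℝ] ℝ where
  toFun f := ∫ z, lift f z
  map_add' f g := integral_add f.integrable_lift g.integrable_lift
  map_smul' c _ := integral_const_mul c _

lemma mean_def : mean f = ∫ z, lift f z := rfl

@[simp] lemma mean_one : mean (1 : SmoothPeriodic ι) = 1 :=
  (integral_const (1 : ℝ)).trans (by simp)

@[simp] lemma mean_algebraMap (c : ℝ) : mean (algebraMap ℝ (SmoothPeriodic ι) c) = c := by
  rw [Algebra.algebraMap_eq_smul_one, map_smul, mean_one, smul_eq_mul, mul_one]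

lemma mean_eq_setIntegral : mean f = ∫ x in unitCube ι, f x := by
  have hcube : ∫ x in unitCube ι, f x = ∫ y in Icc (0 : ι → ℝ) 1, f (WithLp.toLp 2 y) := by
    have hIcc : WithLp.toLp 2 ⁻¹' unitCube ι = Icc (0 : ι → ℝ) 1 := by
      ext y
      simp only [unitCube, mem_preimage, mem_ofPred_eq, mem_Icc, Pi.le_def, Pi.zero_apply,
        Pi.one_apply, forall_and]
    rw [← (EuclideanSpace.volume_preserving_symm_measurableEquiv_toLp ι).setIntegral_preimage_emb
      (MeasurableEquiv.measurableEmbedding _), ← hIcc]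
    rfl
  have hIoc : {y : ι → ℝ | ∀ i, y i ∈ Ioc ((0 : ι → ℝ) i) ((0 : ι → ℝ) i + 1)} =
      Set.pi univ fun i => Ioc ((0 : ι → ℝ) i) ((1 : ι → ℝ) i) := by
    ext y
    simp only [Pi.zero_apply, zero_add, Pi.one_apply, mem_ofPred_eq, mem_univ_pi]
  have hlift (y : ι → ℝ) : (lift f fun i => (y i : UnitAddCircle)) = f (WithLp.toLp 2 y) :=
    f.lift_torusProj (WithLp.toLp 2 y)
  rw [mean_def, UnitAddTorus.integral_preimage _ 0, hcube, hIoc]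
  simp only [hlift]
  exact setIntegral_congr_set Measure.univ_pi_Ioc_ae_eq_Icc

variable {f g} in
lemma mean_mono (h : ∀ x, f x ≤ g x) : mean f ≤ mean g :=
  integral_mono f.integrable_lift g.integrable_lift fun _ => h _

variable {f} in
lemma mean_nonneg (h : ∀ x, 0 ≤ f x) : 0 ≤ mean f := integral_nonneg fun _ => h _

lemma mean_mul_self_nonneg : 0 ≤ mean (f * f) := mean_nonneg fun x => mul_self_nonneg (f x)

variable {f} in
lemma eq_zero_of_mean_mul_self (h : mean (f * f) = 0) : f = 0 := by
  have hnonneg : 0 ≤ lift (f * f) := fun _ => mul_self_nonneg _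
  rw [mean_def, integral_eq_zero_iff_of_nonneg hnonneg (f * f).integrable_lift] at h
  ext x
  have hx := congrFun (Measure.eq_of_ae_eq h (f * f).continuous_lift continuous_const) (torusProj x)
  rw [lift_torusProj] at hx
  exact mul_self_eq_zero.1 hx

lemma mean_translate : mean (translate s f) = mean f := by
  have hlift : lift (translate s f) = fun z => lift f (z + torusProj s) := by
    funext z
    obtain ⟨x, rfl⟩ := isOpenQuotientMap_torusProj.surjective z
    rw [lift_torusProj, ← torusProj_add, lift_torusProj, translate_apply]
  rw [mean_def, hlift]
  exact integral_add_right_eq_self _ _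

-- The mean of `f` translated by `r e` does not depend on `r`; differentiate under the integral.
@[simp] lemma mean_dirDeriv : mean (dirDeriv e f) = 0 := by
  obtain ⟨C, hC⟩ := (dirDeriv e f).exists_abs_le
  have hderiv := (hasDerivAt_integral_of_dominated_loc_of_deriv_le (μ := volume) (x₀ := (0 : ℝ))
    (F := fun r z => lift (translate (r • e) f) z)
    (F' := fun r z => lift (translate (r • e) (dirDeriv e f)) z)
    (s := univ) (bound := fun _ => C) univ_mem
    (Eventually.of_forall fun r => (continuous_lift _).aestronglyMeasurable)
    (integrable_lift _) (continuous_lift _).aestronglyMeasurable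
    (Eventually.of_forall fun z r _ => hC _) (integrable_const _)
    (Eventually.of_forall fun z r _ => f.hasDerivAt_line _ e r)).2
  simp only [← mean_def, mean_translate] at hderiv
  exact hderiv.unique (hasDerivAt_const _ _)

lemma mean_dirDeriv_mul : mean (dirDeriv e f * g) = -mean (f * dirDeriv e g) := by
  have h := mean_dirDeriv (f * g) e
  rw [Derivation.leibniz, smul_eq_mul, smul_eq_mul, map_add, mul_comm g] at h
  linarith

/-- The `L²` norm. -/
noncomputable def l2Norm : ℝ := √(mean (f * f))

lemma l2Norm_nonneg : 0 ≤ l2Norm f := Real.sqrt_nonneg _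

lemma l2Norm_sq : l2Norm f ^ 2 = mean (f * f) := Real.sq_sqrt f.mean_mul_self_nonneg

lemma abs_mean_mul_le : |mean (f * g)| ≤ l2Norm f * l2Norm g := by
  have h := LinearMap.BilinForm.apply_sq_le_of_symm
    ((LinearMap.mul ℝ (SmoothPeriodic ι)).compr₂ mean) mean_mul_self_nonneg
    ⟨fun f g => congrArg mean (mul_comm f g)⟩ f g
  refine abs_le_of_sq_le_sq ?_ (mul_nonneg f.l2Norm_nonneg g.l2Norm_nonneg)
  rw [mul_pow, l2Norm_sq, l2Norm_sq]
  exact h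

lemma l2Norm_add_le : l2Norm (f + g) ≤ l2Norm f + l2Norm g := by
  refine (abs_le_of_sq_le_sq' ?_ (add_nonneg f.l2Norm_nonneg g.l2Norm_nonneg)).2
  have hfg : (f + g) * (f + g) = f * f + (f * g + f * g) + g * g := by ring
  rw [l2Norm_sq, hfg, map_add, map_add, map_add, add_sq, l2Norm_sq, l2Norm_sq]
  linarith [le_of_abs_le (abs_mean_mul_le f g)]

lemma l2Norm_smul (c : ℝ) : l2Norm (c • f) = |c| * l2Norm f := by
  rw [l2Norm, smul_mul_smul_comm, map_smul, smul_eq_mul, Real.sqrt_mul (mul_self_nonneg c),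
    Real.sqrt_mul_self_eq_abs, l2Norm]

@[simp] lemma l2Norm_neg : l2Norm (-f) = l2Norm f := by rw [l2Norm, neg_mul_neg, l2Norm]

lemma l2Norm_sub_le : l2Norm (f - g) ≤ l2Norm f + l2Norm g := by
  rw [sub_eq_add_neg, ← l2Norm_neg g]
  exact l2Norm_add_le _ _

@[simp] lemma l2Norm_algebraMap (c : ℝ) : l2Norm (algebraMap ℝ (SmoothPeriodic ι) c) = |c| := by
  rw [l2Norm, ← map_mul, mean_algebraMap, Real.sqrt_mul_self_eq_abs]

@[simp] lemma l2Norm_zero : l2Norm (0 : SmoothPeriodic ι) = 0 := by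
  rw [l2Norm, mul_zero, map_zero, Real.sqrt_zero]

lemma l2Norm_translate : l2Norm (translate s f) = l2Norm f := by
  rw [l2Norm, ← map_mul, mean_translate, l2Norm]

lemma abs_mean_le_l2Norm : |mean f| ≤ l2Norm f := by
  have h := abs_mean_mul_le f 1
  rwa [mul_one, l2Norm, l2Norm, mul_one, mean_one, Real.sqrt_one, mul_one] at h

variable {f g}

lemma eq_zero_of_l2Norm_eq_zero (h : l2Norm f = 0) : f = 0 :=
  eq_zero_of_mean_mul_self (by rw [← l2Norm_sq, h, zero_pow two_ne_zero])

lemma l2Norm_mono (h : ∀ x, |f x| ≤ |g x|) : l2Norm f ≤ l2Norm g :=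
  Real.sqrt_le_sqrt (mean_mono fun x => abs_le_iff_mul_self_le.1 (h x))

lemma l2Norm_mul_le {C : ℝ} (h : ∀ x, |f x| ≤ C) : l2Norm (f * g) ≤ C * l2Norm g := by
  have hC : 0 ≤ C := (abs_nonneg _).trans (h 0)
  have hfg : l2Norm (f * g) ≤ l2Norm (C • g) := l2Norm_mono fun x => by
    rw [mul_apply, smul_apply, abs_mul, abs_mul, abs_of_nonneg hC]
    exact mul_le_mul_of_nonneg_right (h x) (abs_nonneg _)
  rwa [l2Norm_smul, abs_of_nonneg hC] at hfg

lemma l2Norm_le_of_abs_le {C : ℝ} (h : ∀ x, |f x| ≤ C) : l2Norm f ≤ C := by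
  have hone : l2Norm (1 : SmoothPeriodic ι) = 1 := by rw [l2Norm, mul_one, mean_one, Real.sqrt_one]
  simpa only [mul_one, hone] using l2Norm_mul_le (g := 1) h

/-! ### The Laplacian -/

variable [DecidableEq ι] (f g)

/-- The Laplacian. -/
noncomputable def laplacian : SmoothPeriodic ι →ₗ[ℝ] SmoothPeriodic ι :=
  ∑ i, (dirDeriv (EuclideanSpace.single i 1)).toLinearMap ∘ₗ
    (dirDeriv (EuclideanSpace.single i 1)).toLinearMap

lemma laplacian_apply : laplacian f =
    ∑ i, dirDeriv (EuclideanSpace.single i 1) (dirDeriv (EuclideanSpace.single i 1) f) := by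
  simp only [laplacian, LinearMap.sum_apply, LinearMap.comp_apply, Derivation.coeFn_coe]

lemma dirDeriv_laplacian : dirDeriv e (laplacian f) = laplacian (dirDeriv e f) := by
  simp only [laplacian_apply, map_sum, dirDeriv_comm _ e]

lemma laplacian_translate : laplacian (translate s f) = translate s (laplacian f) := by
  simp only [laplacian_apply, map_sum, dirDeriv_translate]

lemma mean_laplacian_mul : mean (laplacian f * g) = mean (f * laplacian g) := by
  simp only [laplacian_apply, Finset.sum_mul, Finset.mul_sum, map_sum, mean_dirDeriv_mul, neg_neg]

@[simp] lemma mean_laplacian : mean (laplacian f) = 0 := by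
  simp only [laplacian_apply, map_sum, mean_dirDeriv, Finset.sum_const_zero]

lemma mean_mul_laplacian : mean (f * laplacian f) =
    -∑ i, mean (dirDeriv (EuclideanSpace.single i 1) f *
      dirDeriv (EuclideanSpace.single i 1) f) := by
  simp only [laplacian_apply, Finset.mul_sum, map_sum, mean_dirDeriv_mul, Finset.sum_neg_distrib,
    neg_neg]

lemma mean_mul_laplacian_nonpos : mean (f * laplacian f) ≤ 0 := by
  rw [mean_mul_laplacian]
  exact neg_nonpos.2 (Finset.sum_nonneg fun _ _ => mean_mul_self_nonneg _)

end Mean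

/-! ### Fourier series -/

section Modes

variable (f g : SmoothPeriodic ι) (x e : EuclideanSpace ℝ ι) (k : ι → ℤ)

/-- The linear phase `x ↦ 2π ⟨k, x⟩` of the Fourier modes of frequency `k`. -/
noncomputable def phase : EuclideanSpace ℝ ι →L[ℝ] ℝ :=
  (2 * Real.pi) • ∑ i, (k i : ℝ) • EuclideanSpace.proj i

lemma phase_apply : phase k x = 2 * Real.pi * ∑ i, (k i : ℝ) * x i := by
  simp [phase]

@[simp] lemma phase_zero : phase (0 : ι → ℤ) = 0 := by
  ext x
  simp [phase_apply]

lemma phase_single [DecidableEq ι] (i : ι) :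
    phase k (EuclideanSpace.single i 1) = 2 * Real.pi * k i := by
  simp [phase_apply]

lemma exists_phase_eq_of_isLatticeVector {a : EuclideanSpace ℝ ι} (ha : IsLatticeVector a) :
    ∃ n : ℤ, phase k a = n * (2 * Real.pi) := by
  choose m hm using ha
  refine ⟨∑ i, k i * m i, ?_⟩
  simp only [phase_apply, hm, Int.cast_sum, Int.cast_mul]
  ring

/-- The mode `cos (2π ⟨k, x⟩)`. -/
noncomputable def cosMode : SmoothPeriodic ι :=
  ⟨fun x => Real.cos (phase k x), Real.contDiff_cos.comp (phase k).contDiff, fun x a ha => by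
    obtain ⟨n, hn⟩ := exists_phase_eq_of_isLatticeVector k ha
    simp only [map_add, hn, Real.cos_add_int_mul_two_pi]⟩

/-- The mode `sin (2π ⟨k, x⟩)`. -/
noncomputable def sinMode : SmoothPeriodic ι :=
  ⟨fun x => Real.sin (phase k x), Real.contDiff_sin.comp (phase k).contDiff, fun x a ha => by
    obtain ⟨n, hn⟩ := exists_phase_eq_of_isLatticeVector k ha
    simp only [map_add, hn, Real.sin_add_int_mul_two_pi]⟩

lemma cosMode_apply : cosMode k x = Real.cos (phase k x) := rfl

lemma sinMode_apply : sinMode k x = Real.sin (phase k x) := rfl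

@[simp] lemma cosMode_zero : cosMode (0 : ι → ℤ) = 1 := by
  ext x
  simp [cosMode_apply]

@[simp] lemma sinMode_zero : sinMode (0 : ι → ℤ) = 0 := by
  ext x
  simp [sinMode_apply]

lemma dirDeriv_cosMode : dirDeriv e (cosMode k) = -phase k e • sinMode k := by
  ext x
  have h := (phase k).hasFDerivAt (x := x).cos.fderiv
  refine (DFunLike.congr_fun h e).trans ?_
  simp [sinMode_apply, mul_comm]

lemma dirDeriv_sinMode : dirDeriv e (sinMode k) = phase k e • cosMode k := by
  ext x
  have h := (phase k).hasFDerivAt (x := x).sin.fderiv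
  refine (DFunLike.congr_fun h e).trans ?_
  simp [cosMode_apply, mul_comm]

/-- The eigenvalue `4π² |k|²` of `-Δ` on the modes of frequency `k`. -/
noncomputable def freqSq : ℝ := ∑ i, (2 * Real.pi * k i) ^ 2

lemma freqSq_nonneg : 0 ≤ freqSq k := Finset.sum_nonneg fun _ _ => sq_nonneg _

lemma sq_le_freqSq (i : ι) : (k i : ℝ) ^ 2 ≤ freqSq k := by
  have hpi : (1 : ℝ) ≤ (2 * Real.pi) ^ 2 := by nlinarith [Real.pi_gt_three]
  calc (k i : ℝ) ^ 2 ≤ (2 * Real.pi * k i) ^ 2 := by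
        rw [mul_pow]
        exact le_mul_of_one_le_left (sq_nonneg _) hpi
    _ ≤ freqSq k := Finset.single_le_sum (f := fun i => (2 * Real.pi * k i : ℝ) ^ 2)
        (fun _ _ => sq_nonneg _) (Finset.mem_univ i)

variable {k} in
lemma one_le_freqSq (hk : k ≠ 0) : 1 ≤ freqSq k := by
  obtain ⟨i, hi⟩ := Function.ne_iff.1 hk
  have h : 1 ≤ (k i) ^ 2 := sq_pos_of_ne_zero hi
  exact le_trans (by exact_mod_cast h) (sq_le_freqSq k i)

/-! ### Fourier coefficients -/

variable {x} in
lemma mFourier_torusProj : UnitAddTorus.mFourier k (torusProj x) =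
    (cosMode k x : ℂ) + (sinMode k x : ℂ) * Complex.I := by
  change ∏ i, fourier (k i) ((x i : ℝ) : UnitAddCircle) = _
  simp only [fourier_coe_apply]
  rw [← Complex.exp_sum, cosMode_apply, sinMode_apply, Complex.ofReal_cos, Complex.ofReal_sin,
    ← Complex.exp_mul_I, phase_apply]
  push_cast
  rw [Finset.mul_sum, Finset.sum_mul]
  congr 1
  exact Finset.sum_congr rfl fun i _ => by ring

/-- The complex-valued function on the torus induced by a periodic function. -/
noncomputable def liftComplex : C(UnitAddTorus ι, ℂ) :=
  ⟨fun z => (lift f z : ℂ), Complex.continuous_ofReal.comp f.continuous_lift⟩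

lemma liftComplex_torusProj : liftComplex f (torusProj x) = f x :=
  congrArg Complex.ofReal (f.lift_torusProj x)

/-- The Fourier coefficient at the frequency `k`. -/
noncomputable def modeCoeff : ℂ := UnitAddTorus.mFourierCoeff (liftComplex f) k

lemma modeCoeff_eq : modeCoeff f k =
    (mean (f * cosMode k) : ℂ) - (mean (f * sinMode k) : ℂ) * Complex.I := by
  have hmode (z : UnitAddTorus ι) : UnitAddTorus.mFourier (-k) z • liftComplex f z =
      ((lift (f * cosMode k) z : ℝ) : ℂ) - ((lift (f * sinMode k) z : ℝ) : ℂ) * Complex.I := by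
    obtain ⟨x, rfl⟩ := isOpenQuotientMap_torusProj.surjective z
    rw [UnitAddTorus.mFourier_neg, mFourier_torusProj, liftComplex_torusProj, lift_torusProj,
      lift_torusProj, smul_eq_mul, map_add, map_mul, Complex.conj_I, Complex.conj_ofReal,
      Complex.conj_ofReal, mul_apply, mul_apply]
    push_cast
    ring
  have integrable_ofReal_lift (g : SmoothPeriodic ι) : Integrable fun z => ((lift g z : ℝ) : ℂ) :=
    g.integrable_lift.ofReal (𝕜 := ℂ)
  rw [modeCoeff, UnitAddTorus.mFourierCoeff]
  simp_rw [hmode]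
  rw [integral_sub (integrable_ofReal_lift _) ((integrable_ofReal_lift _).mul_const _),
    integral_mul_const, mean_def, mean_def, ← integral_complex_ofReal, ← integral_complex_ofReal]

lemma modeCoeff_sub : modeCoeff (f - g) k = modeCoeff f k - modeCoeff g k := by
  simp only [modeCoeff_eq, sub_mul, map_sub]
  push_cast
  ring

lemma modeCoeff_smul (c : ℝ) : modeCoeff (c • f) k = c * modeCoeff f k := by
  simp only [modeCoeff_eq, smul_mul_assoc, map_smul, smul_eq_mul]
  push_cast
  ring

lemma modeCoeff_zero : modeCoeff f 0 = mean f := by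
  simp [modeCoeff_eq]

lemma modeCoeff_dirDeriv : modeCoeff (dirDeriv e f) k = phase k e * Complex.I * modeCoeff f k := by
  have hcos : mean (dirDeriv e f * cosMode k) = phase k e * mean (f * sinMode k) := by
    rw [mean_dirDeriv_mul, dirDeriv_cosMode, mul_smul_comm, map_smul, smul_eq_mul, neg_mul, neg_neg]
  have hsin : mean (dirDeriv e f * sinMode k) = -(phase k e * mean (f * cosMode k)) := by
    rw [mean_dirDeriv_mul, dirDeriv_sinMode, mul_smul_comm, map_smul, smul_eq_mul]
  rw [modeCoeff_eq, modeCoeff_eq, hcos, hsin]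
  push_cast
  linear_combination (phase k e * mean (f * sinMode k) : ℂ) * Complex.I_sq

lemma hasSum_norm_sq_modeCoeff : HasSum (fun k => ‖modeCoeff f k‖ ^ 2) (mean (f * f)) := by
  have h := UnitAddTorus.hasSum_sq_mFourierCoeff (ContinuousMap.toLp 2 volume ℂ (liftComplex f))
  simp only [UnitAddTorus.mFourierCoeff_toLp] at h
  suffices hmean : mean (f * f) =
      ∫ z, ‖(ContinuousMap.toLp 2 volume ℂ (liftComplex f)) z‖ ^ 2 from hmean ▸ h
  rw [mean_def]
  refine integral_congr_ae ?_
  filter_upwards [ContinuousMap.coeFn_toLp (p := 2) (𝕜 := ℂ) volume (liftComplex f)] with z hz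
  rw [hz]
  change lift f z * lift f z = ‖(lift f z : ℂ)‖ ^ 2
  rw [Complex.norm_real, Real.norm_eq_abs, sq_abs, sq]

variable [DecidableEq ι]

lemma laplacian_cosMode : laplacian (cosMode k) = -freqSq k • cosMode k := by
  simp only [laplacian_apply, dirDeriv_cosMode, dirDeriv_sinMode, Derivation.map_smul,
    phase_single, smul_smul, freqSq, ← Finset.sum_smul, neg_mul, Finset.sum_neg_distrib, sq]

lemma laplacian_sinMode : laplacian (sinMode k) = -freqSq k • sinMode k := by
  simp only [laplacian_apply, dirDeriv_cosMode, dirDeriv_sinMode, Derivation.map_smul,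
    phase_single, smul_smul, freqSq, ← Finset.sum_smul, mul_neg, Finset.sum_neg_distrib, sq]

lemma modeCoeff_laplacian : modeCoeff (laplacian f) k = -freqSq k * modeCoeff f k := by
  have hcos : mean (laplacian f * cosMode k) = -freqSq k * mean (f * cosMode k) := by
    rw [mean_laplacian_mul, laplacian_cosMode, mul_smul_comm, map_smul, smul_eq_mul]
  have hsin : mean (laplacian f * sinMode k) = -freqSq k * mean (f * sinMode k) := by
    rw [mean_laplacian_mul, laplacian_sinMode, mul_smul_comm, map_smul, smul_eq_mul]
  rw [modeCoeff_eq, modeCoeff_eq, hcos, hsin]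
  push_cast
  ring

omit [DecidableEq ι] in
variable {k} in
lemma mean_cosMode (hk : k ≠ 0) : mean (cosMode k) = 0 := by
  classical
  have h := mean_laplacian (cosMode k)
  rw [laplacian_cosMode, map_smul, smul_eq_mul] at h
  exact (mul_eq_zero.1 h).resolve_left (by linarith [one_le_freqSq hk])

omit [DecidableEq ι] in
variable {k} in
lemma mean_sinMode (hk : k ≠ 0) : mean (sinMode k) = 0 := by
  classical
  have h := mean_laplacian (sinMode k)
  rw [laplacian_sinMode, map_smul, smul_eq_mul] at h
  exact (mul_eq_zero.1 h).resolve_left (by linarith [one_le_freqSq hk])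

variable {f} in
lemma mean_mul_self_le_sum_dirDeriv (hf : mean f = 0) : mean (f * f) ≤ ∑ i,
    mean (dirDeriv (EuclideanSpace.single i 1) f * dirDeriv (EuclideanSpace.single i 1) f) := by
  refine hasSum_le (fun k => ?_) (hasSum_norm_sq_modeCoeff f) (hasSum_sum fun i _ =>
    hasSum_norm_sq_modeCoeff (dirDeriv (EuclideanSpace.single i 1) f))
  have hgrad : ∑ i, ‖modeCoeff (dirDeriv (EuclideanSpace.single i 1) f) k‖ ^ 2 =
      freqSq k * ‖modeCoeff f k‖ ^ 2 := by
    rw [freqSq, Finset.sum_mul]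
    refine Finset.sum_congr rfl fun i _ => ?_
    rw [modeCoeff_dirDeriv, phase_single, norm_mul, norm_mul, Complex.norm_I, Complex.norm_real,
      mul_one, mul_pow, Real.norm_eq_abs, sq_abs]
  rw [hgrad]
  rcases eq_or_ne k 0 with rfl | hk
  · simp [modeCoeff_zero, hf]
  · exact le_mul_of_one_le_left (sq_nonneg _) (one_le_freqSq hk)

variable {f} in
lemma l2Norm_le_l2Norm_laplacian (hf : mean f = 0) : l2Norm f ≤ l2Norm (laplacian f) := by
  refine Real.sqrt_le_sqrt (hasSum_le (fun k => ?_) (hasSum_norm_sq_modeCoeff f)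
    (hasSum_norm_sq_modeCoeff (laplacian f)))
  rw [modeCoeff_laplacian, norm_mul, norm_neg, Complex.norm_real,
    Real.norm_of_nonneg (freqSq_nonneg k)]
  rcases eq_or_ne k 0 with rfl | hk
  · simp [modeCoeff_zero, hf]
  · gcongr
    exact le_mul_of_one_le_left (norm_nonneg _) (one_le_freqSq hk)

/-! ### Trigonometric polynomials -/

/-- The sum of the terms of the Fourier series with frequencies in `s`. -/
noncomputable def partialSum (s : Finset (ι → ℤ)) (f : SmoothPeriodic ι) : SmoothPeriodic ι :=
  ∑ k ∈ s, (mean (f * cosMode k) • cosMode k + mean (f * sinMode k) • sinMode k)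

variable (s : Finset (ι → ℤ))

lemma partialSum_laplacian : partialSum s (laplacian f) = laplacian (partialSum s f) := by
  simp only [partialSum, map_sum, map_add, map_smul, laplacian_cosMode, laplacian_sinMode,
    mean_laplacian_mul, mul_smul_comm, smul_smul, smul_eq_mul, mul_comm (-freqSq _)]

omit [DecidableEq ι] in
lemma partialSum_sub : partialSum s (f - g) = partialSum s f - partialSum s g := by
  simp only [partialSum, sub_mul, map_sub, sub_smul, ← Finset.sum_sub_distrib]
  exact Finset.sum_congr rfl fun _ _ => by abel

omit [DecidableEq ι] in
lemma partialSum_apply : partialSum s f x =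
    (∑ k ∈ s, modeCoeff f k • UnitAddTorus.mFourier k (torusProj x)).re := by
  simp only [partialSum, sum_apply, add_apply, smul_apply, Complex.re_sum]
  refine Finset.sum_congr rfl fun k _ => ?_
  rw [mFourier_torusProj, modeCoeff_eq]
  simp

/-- The operator `h ↦ Δh + ∂_e h + ∫ h`; the zeroth order term removes the kernel of constants. -/
noncomputable def driftLaplacian : SmoothPeriodic ι →ₗ[ℝ] SmoothPeriodic ι :=
  laplacian + (dirDeriv e).toLinearMap + Algebra.linearMap ℝ (SmoothPeriodic ι) ∘ₗ mean

lemma driftLaplacian_apply : driftLaplacian e f =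
    laplacian f + dirDeriv e f + algebraMap ℝ (SmoothPeriodic ι) (mean f) := rfl

lemma driftLaplacian_one : driftLaplacian e (1 : SmoothPeriodic ι) = 1 := by
  simp [driftLaplacian_apply, laplacian_apply]

variable {k} in
-- On the span of the two modes of frequency `k ≠ 0` the operator acts as multiplication by
-- `-freqSq k + i phase k e`.
lemma modes_mem_range_driftLaplacian (hk : k ≠ 0) :
    cosMode k ∈ LinearMap.range (driftLaplacian e) ∧
      sinMode k ∈ LinearMap.range (driftLaplacian e) := by
  have hcos : driftLaplacian e (cosMode k) = -freqSq k • cosMode k + -phase k e • sinMode k := by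
    rw [driftLaplacian_apply, mean_cosMode hk, laplacian_cosMode, dirDeriv_cosMode, map_zero,
      add_zero]
  have hsin : driftLaplacian e (sinMode k) = -freqSq k • sinMode k + phase k e • cosMode k := by
    rw [driftLaplacian_apply, mean_sinMode hk, laplacian_sinMode, dirDeriv_sinMode, map_zero,
      add_zero]
  have hdet : freqSq k ^ 2 + phase k e ^ 2 ≠ 0 := by
    have := one_le_freqSq hk
    positivity
  constructor
  · refine ⟨(freqSq k ^ 2 + phase k e ^ 2)⁻¹ • (-freqSq k • cosMode k + phase k e • sinMode k), ?_⟩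
    rw [map_smul, map_add, map_smul, map_smul, hcos, hsin]
    ext x
    simp only [smul_apply, add_apply]
    field_simp
    ring
  · refine ⟨(freqSq k ^ 2 + phase k e ^ 2)⁻¹ • (-freqSq k • sinMode k + -phase k e • cosMode k), ?_⟩
    rw [map_smul, map_add, map_smul, map_smul, hcos, hsin]
    ext x
    simp only [smul_apply, add_apply]
    field_simp
    ring

lemma partialSum_mem_range_driftLaplacian :
    partialSum s f ∈ LinearMap.range (driftLaplacian e) := by
  refine Submodule.sum_mem _ fun k _ => ?_
  rcases eq_or_ne k 0 with rfl | hk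
  · rw [cosMode_zero, sinMode_zero, smul_zero, add_zero]
    exact Submodule.smul_mem _ _ ⟨1, driftLaplacian_one e⟩
  · obtain ⟨hcos, hsin⟩ := modes_mem_range_driftLaplacian e hk
    exact Submodule.add_mem _ (Submodule.smul_mem _ _ hcos) (Submodule.smul_mem _ _ hsin)

/-- The operator `1 - Δ`, whose powers define the Sobolev norms. -/
noncomputable def oneSubLap : SmoothPeriodic ι →ₗ[ℝ] SmoothPeriodic ι := LinearMap.id - laplacian

lemma oneSubLap_apply : oneSubLap f = f - laplacian f := rfl

lemma partialSum_oneSubLap : partialSum s (oneSubLap f) = oneSubLap (partialSum s f) := by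
  rw [oneSubLap_apply, oneSubLap_apply, partialSum_sub, partialSum_laplacian]

end Modes

/-! ### Sobolev embedding in dimension three -/

-- `(1 + |k|²)²` dominates the product of the `(1 + kᵢ²) ^ (2 / 3)`.
lemma summable_inv_one_add_freqSq_sq :
    Summable fun k : Fin 3 → ℤ => ((1 + freqSq k) ^ 2)⁻¹ := by
  set w : ℤ → ℝ := fun a => (1 + (a : ℝ) ^ 2) ^ (-(2 / 3) : ℝ)
  have hw_nonneg : 0 ≤ w := fun _ => by positivity
  have hsum : Summable w := by
    refine Summable.of_norm_bounded_eventually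
      (Real.summable_abs_int_rpow (b := 4 / 3) (by norm_num)) ?_
    filter_upwards [(finite_singleton (0 : ℤ)).compl_mem_cofinite] with a ha
    have ha' : 0 < |(a : ℝ)| := abs_pos.2 (by exact_mod_cast ha)
    rw [Real.norm_of_nonneg (hw_nonneg a)]
    calc w a ≤ (|(a : ℝ)| ^ (2 : ℝ)) ^ (-(2 / 3) : ℝ) := by
          refine Real.rpow_le_rpow_of_nonpos (by positivity) ?_ (by norm_num)
          rw [Real.rpow_two, sq_abs]
          linarith
      _ = |(a : ℝ)| ^ (-(4 / 3) : ℝ) := by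
          rw [← Real.rpow_mul ha'.le]
          norm_num
  have hprod : Summable fun k : Fin 3 → ℤ => w (k 0) * (w (k 1) * w (k 2)) := by
    refine (hsum.mul_of_nonneg (hsum.mul_of_nonneg hsum hw_nonneg hw_nonneg) hw_nonneg
      fun _ => mul_nonneg (hw_nonneg _) (hw_nonneg _)).comp_injective
      (i := fun k : Fin 3 → ℤ => (k 0, k 1, k 2)) fun k l h => ?_
    simp only [Prod.mk.injEq] at h
    funext i
    fin_cases i
    exacts [h.1, h.2.1, h.2.2]
  refine hprod.of_nonneg_of_le (fun _ => by positivity) fun k => ?_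
  have hk := freqSq_nonneg k
  have hle (i : Fin 3) : (1 + freqSq k) ^ (-(2 / 3) : ℝ) ≤ w (k i) :=
    Real.rpow_le_rpow_of_nonpos (by positivity) (by linarith [sq_le_freqSq k i]) (by norm_num)
  have hsplit : ((1 + freqSq k) ^ 2)⁻¹ = (1 + freqSq k) ^ (-(2 / 3) : ℝ) *
      ((1 + freqSq k) ^ (-(2 / 3) : ℝ) * (1 + freqSq k) ^ (-(2 / 3) : ℝ)) := by
    rw [← Real.rpow_add (by positivity), ← Real.rpow_add (by positivity), ← Real.rpow_two,
      ← Real.rpow_neg (by positivity)]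
    norm_num
  rw [hsplit]
  gcongr <;> exact hle _

lemma norm_modeCoeff_smul_sub_laplacian {M : ℝ} (hM : 0 ≤ M) (f : SmoothPeriodic (Fin 3))
    (k : Fin 3 → ℤ) :
    ‖modeCoeff (M • f - laplacian f) k‖ = (M + freqSq k) * ‖modeCoeff f k‖ := by
  have h : modeCoeff (M • f - laplacian f) k = ((M + freqSq k : ℝ) : ℂ) * modeCoeff f k := by
    rw [modeCoeff_sub, modeCoeff_smul, modeCoeff_laplacian]
    push_cast
    ring
  rw [h, norm_mul, Complex.norm_real, Real.norm_of_nonneg (by linarith [freqSq_nonneg k])]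

-- Cauchy–Schwarz for the product of `(M + |k|²)⁻¹` and the coefficients of `M f - Δf`.
lemma summable_modeCoeff_and_tsum_le {M : ℝ} (hM : 1 ≤ M) (f : SmoothPeriodic (Fin 3)) :
    (Summable fun k => ‖modeCoeff f k‖) ∧ ∑' k, ‖modeCoeff f k‖ ≤
      √(∑' k : Fin 3 → ℤ, ((M + freqSq k) ^ 2)⁻¹) * l2Norm (M • f - laplacian f) := by
  have hpos (k : Fin 3 → ℤ) : 0 < M + freqSq k := by linarith [freqSq_nonneg k]
  have hweight : Summable fun k : Fin 3 → ℤ => ((M + freqSq k)⁻¹) ^ (2 : ℝ) := by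
    simp only [Real.rpow_two, inv_pow]
    refine summable_inv_one_add_freqSq_sq.of_nonneg_of_le
      (fun k => inv_nonneg.2 (sq_nonneg _)) fun k => ?_
    have := freqSq_nonneg k
    gcongr
  have hcoeff := hasSum_norm_sq_modeCoeff (M • f - laplacian f)
  have hmul : (fun k => ‖modeCoeff f k‖) = fun k =>
      (M + freqSq k)⁻¹ * ‖modeCoeff (M • f - laplacian f) k‖ := funext fun k => by
    rw [norm_modeCoeff_smul_sub_laplacian (by linarith), inv_mul_cancel_left₀ (hpos k).ne']
  have h := Real.summable_and_inner_le_Lp_mul_Lq_tsum_of_nonneg Real.HolderConjugate.two_two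
    (fun k => inv_nonneg.2 (hpos k).le) (fun _ => norm_nonneg _) hweight
    (by simpa only [Real.rpow_two] using hcoeff.summable)
  rw [← hmul] at h
  refine ⟨h.1, h.2.trans_eq ?_⟩
  simp only [Real.rpow_two, inv_pow, hcoeff.tsum_eq, ← Real.sqrt_eq_rpow, l2Norm]

variable (f : SmoothPeriodic (Fin 3)) (x : EuclideanSpace ℝ (Fin 3))

lemma summable_norm_modeCoeff : Summable fun k => ‖modeCoeff f k‖ :=
  (summable_modeCoeff_and_tsum_le le_rfl f).1

lemma abs_le_tsum_norm_modeCoeff : |f x| ≤ ∑' k, ‖modeCoeff f k‖ := by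
  have hsum := summable_norm_modeCoeff f
  have hterm (k : Fin 3 → ℤ) :
      ‖UnitAddTorus.mFourierCoeff (liftComplex f) k • UnitAddTorus.mFourier k (torusProj x)‖ ≤
        ‖modeCoeff f k‖ := by
    rw [norm_smul]
    exact mul_le_of_le_one_right (norm_nonneg _)
      (((UnitAddTorus.mFourier k).norm_coe_le_norm _).trans_eq UnitAddTorus.mFourier_norm)
  have h := tsum_of_norm_bounded hsum.hasSum hterm
  rwa [(UnitAddTorus.hasSum_mFourier_series_apply_of_summable (f := liftComplex f) hsum.of_norm
    (torusProj x)).tsum_eq, liftComplex_torusProj, Complex.norm_real] at h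

lemma exists_abs_le_l2Norm_oneSubLap : ∃ C, 0 < C ∧
    ∀ (f : SmoothPeriodic (Fin 3)) x, |f x| ≤ C * l2Norm (oneSubLap f) := by
  refine ⟨√(∑' k : Fin 3 → ℤ, ((1 + freqSq k) ^ 2)⁻¹) + 1, by positivity, fun f x => ?_⟩
  have h := (abs_le_tsum_norm_modeCoeff f x).trans (summable_modeCoeff_and_tsum_le le_rfl f).2
  rw [one_smul, ← oneSubLap_apply] at h
  linarith [l2Norm_nonneg (oneSubLap f)]

lemma tendsto_tsum_inv_natCast_add_freqSq_sq :
    Tendsto (fun n : ℕ => ∑' k : Fin 3 → ℤ, (((n + 1 : ℝ) + freqSq k) ^ 2)⁻¹) atTop (𝓝 0) := by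
  rw [← tsum_zero (β := Fin 3 → ℤ)]
  refine tendsto_tsum_of_dominated_convergence summable_inv_one_add_freqSq_sq (fun k => ?_)
    (Eventually.of_forall fun n k => ?_)
  · refine tendsto_inv_atTop_zero.comp ((tendsto_pow_atTop two_ne_zero).comp ?_)
    exact tendsto_atTop_add_const_right _ _
      (tendsto_atTop_add_const_right _ _ tendsto_natCast_atTop_atTop)
  · have := freqSq_nonneg k
    rw [Real.norm_of_nonneg (by positivity)]
    gcongr
    linarith [Nat.cast_nonneg (α := ℝ) n]

lemma exists_abs_le_l2Norm_laplacian_add {ε : ℝ} (hε : 0 < ε) : ∃ C, 0 < C ∧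
    ∀ (f : SmoothPeriodic (Fin 3)) x, |f x| ≤ ε * l2Norm (laplacian f) + C * l2Norm f := by
  obtain ⟨n, hn⟩ := (tendsto_tsum_inv_natCast_add_freqSq_sq.eventually
    (gt_mem_nhds (show (0 : ℝ) < ε ^ 2 by positivity))).exists
  have hsqrt : √(∑' k : Fin 3 → ℤ, (((n + 1 : ℝ) + freqSq k) ^ 2)⁻¹) ≤ ε :=
    (Real.sqrt_le_left hε.le).2 hn.le
  refine ⟨ε * (n + 1), by positivity, fun f x => ?_⟩
  have hnorm : l2Norm ((n + 1 : ℝ) • f - laplacian f) ≤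
      (n + 1) * l2Norm f + l2Norm (laplacian f) := by
    refine (l2Norm_sub_le _ _).trans_eq ?_
    rw [l2Norm_smul, abs_of_nonneg (by positivity)]
  calc |f x| ≤ ∑' k, ‖modeCoeff f k‖ := abs_le_tsum_norm_modeCoeff f x
    _ ≤ _ := (summable_modeCoeff_and_tsum_le (by linarith [Nat.cast_nonneg (α := ℝ) n]) f).2
    _ ≤ ε * ((n + 1) * l2Norm f + l2Norm (laplacian f)) :=
        mul_le_mul hsqrt hnorm (l2Norm_nonneg _) hε.le
    _ = ε * l2Norm (laplacian f) + ε * (n + 1) * l2Norm f := by ring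

lemma exists_abs_le_l2Norm_laplacian : ∃ C, 0 < C ∧
    ∀ f : SmoothPeriodic (Fin 3), mean f = 0 → ∀ x, |f x| ≤ C * l2Norm (laplacian f) := by
  obtain ⟨C, hC, h⟩ := exists_abs_le_l2Norm_oneSubLap
  refine ⟨C * 2, by positivity, fun f hf x => (h f x).trans ?_⟩
  rw [oneSubLap_apply, mul_assoc]
  gcongr
  linarith [l2Norm_sub_le f (laplacian f), l2Norm_le_l2Norm_laplacian hf]

lemma exists_l2Norm_sub_partialSum_le {ε : ℝ} (hε : 0 < ε) :
    ∃ s, l2Norm (f - partialSum s f) ≤ ε := by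
  have h := UnitAddTorus.hasSum_mFourier_series_of_summable (f := liftComplex f)
    (summable_norm_modeCoeff f).of_norm
  obtain ⟨s, hs⟩ := (h.eventually (Metric.closedBall_mem_nhds _ hε)).exists
  refine ⟨s, l2Norm_le_of_abs_le fun x => ?_⟩
  rw [dist_comm, dist_eq_norm] at hs
  have hx := ((liftComplex f - ∑ k ∈ s, UnitAddTorus.mFourierCoeff (liftComplex f) k •
    UnitAddTorus.mFourier k).norm_coe_le_norm (torusProj x)).trans hs
  refine le_trans (le_of_eq ?_) ((Complex.abs_re_le_norm _).trans hx)
  simp only [ContinuousMap.sub_apply, ContinuousMap.coe_sum, Finset.sum_apply,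
    ContinuousMap.smul_apply, liftComplex_torusProj, Complex.sub_re, Complex.ofReal_re, sub_apply,
    partialSum_apply, modeCoeff]

lemma exists_l2Norm_oneSubLap_sub_partialSum_le {ε : ℝ} (hε : 0 < ε) :
    ∃ s, l2Norm (oneSubLap (f - partialSum s f)) ≤ ε := by
  obtain ⟨s, hs⟩ := exists_l2Norm_sub_partialSum_le (oneSubLap f) hε
  exact ⟨s, by rwa [map_sub, ← partialSum_oneSubLap]⟩

end SmoothPeriodic

/-- The coordinate space with coordinates `(x, y, t)`. -/
abbrev E3 := EuclideanSpace ℝ (Fin 3)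

/-- Smooth `ℤ³`-periodic functions of `(x, y, t)`. -/
abbrev TorusFunction := SmoothPeriodic (Fin 3)

namespace SmoothPeriodic

/-! ### The operators of the equation -/

/-- The unit vector along `X`. -/
noncomputable def dirX (θ : ℝ) : E3 :=
  Real.cos θ • EuclideanSpace.single 0 1 + (-Real.sin θ) • EuclideanSpace.single 1 1

/-- The unit vector along `Y`. -/
noncomputable def dirY (θ : ℝ) : E3 :=
  Real.sin θ • EuclideanSpace.single 0 1 + Real.cos θ • EuclideanSpace.single 1 1

/-- The unit vector along `t`. -/
noncomputable def dirT : E3 := EuclideanSpace.single 2 1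

/-- The derivation `∂_X`. -/
noncomputable def derivX (θ : ℝ) : Derivation ℝ TorusFunction TorusFunction := dirDeriv (dirX θ)

/-- The derivation `∂_Y`. -/
noncomputable def derivY (θ : ℝ) : Derivation ℝ TorusFunction TorusFunction := dirDeriv (dirY θ)

/-- The derivation `∂_t`. -/
noncomputable def derivT : Derivation ℝ TorusFunction TorusFunction := dirDeriv dirT

section Frame

variable (θ : ℝ) (e : E3) (f : TorusFunction)

lemma derivY_derivX : derivY θ (derivX θ f) = derivX θ (derivY θ f) := dirDeriv_comm _ _ _

lemma derivT_derivX : derivT (derivX θ f) = derivX θ (derivT f) := dirDeriv_comm _ _ _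

lemma derivT_derivY : derivT (derivY θ f) = derivY θ (derivT f) := dirDeriv_comm _ _ _

lemma dirDeriv_derivX : dirDeriv e (derivX θ f) = derivX θ (dirDeriv e f) := dirDeriv_comm _ _ _

lemma dirDeriv_derivY : dirDeriv e (derivY θ f) = derivY θ (dirDeriv e f) := dirDeriv_comm _ _ _

lemma dirDeriv_derivT : dirDeriv e (derivT f) = derivT (dirDeriv e f) := dirDeriv_comm _ _ _

lemma derivX_eq : derivX θ f = Real.cos θ • dirDeriv (EuclideanSpace.single 0 1) f +
    (-Real.sin θ) • dirDeriv (EuclideanSpace.single 1 1) f := by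
  rw [derivX, dirX, dirDeriv_add_dir, dirDeriv_smul_dir, dirDeriv_smul_dir]

lemma derivY_eq : derivY θ f = Real.sin θ • dirDeriv (EuclideanSpace.single 0 1) f +
    Real.cos θ • dirDeriv (EuclideanSpace.single 1 1) f := by
  rw [derivY, dirY, dirDeriv_add_dir, dirDeriv_smul_dir, dirDeriv_smul_dir]

lemma laplacian_eq :
    laplacian f = derivX θ (derivX θ f) + derivY θ (derivY θ f) + derivT (derivT f) := by
  ext x
  simp only [laplacian_apply, Fin.sum_univ_three, derivX_eq, derivY_eq, derivT, dirT, map_add,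
    Derivation.map_smul, add_apply, smul_apply,
    dirDeriv_comm f (EuclideanSpace.single 1 1) (EuclideanSpace.single 0 1)]
  linear_combination
    (-dirDeriv (EuclideanSpace.single 0 1) (dirDeriv (EuclideanSpace.single 0 1) f) x
      - dirDeriv (EuclideanSpace.single 1 1) (dirDeriv (EuclideanSpace.single 1 1) f) x)
      * Real.sin_sq_add_cos_sq θ

lemma sum_dirDeriv_mul_dirDeriv :
    ∑ i : Fin 3, dirDeriv (EuclideanSpace.single i 1) f * dirDeriv (EuclideanSpace.single i 1) f =
      derivX θ f * derivX θ f + derivY θ f * derivY θ f + derivT f * derivT f := by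
  ext x
  simp only [Fin.sum_univ_three, derivX_eq, derivY_eq, derivT, dirT, add_apply, smul_apply,
    mul_apply]
  linear_combination
    (-dirDeriv (EuclideanSpace.single 0 1) f x ^ 2 - dirDeriv (EuclideanSpace.single 1 1) f x ^ 2)
      * Real.sin_sq_add_cos_sq θ

end Frame

section Operators

variable (θ : ℝ) (e : E3) (u h k : TorusFunction)

/-- The operator `h ↦ h_XX`. -/
noncomputable def opXX : TorusFunction →ₗ[ℝ] TorusFunction :=
  (derivX θ).toLinearMap ∘ₗ (derivX θ).toLinearMap

/-- The operator `h ↦ h_YY + h_tt + h_t`. -/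
noncomputable def opYT : TorusFunction →ₗ[ℝ] TorusFunction :=
  (derivY θ).toLinearMap ∘ₗ (derivY θ).toLinearMap + derivT.toLinearMap ∘ₗ derivT.toLinearMap +
    derivT.toLinearMap

/-- The operator `h ↦ h_XY`. -/
noncomputable def opXY : TorusFunction →ₗ[ℝ] TorusFunction :=
  (derivX θ).toLinearMap ∘ₗ (derivY θ).toLinearMap

/-- The operator `h ↦ h_Xt`. -/
noncomputable def opXT : TorusFunction →ₗ[ℝ] TorusFunction :=
  (derivX θ).toLinearMap ∘ₗ derivT.toLinearMap

lemma opXX_apply : opXX θ h = derivX θ (derivX θ h) := rfl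

lemma opYT_apply : opYT θ h = derivY θ (derivY θ h) + derivT (derivT h) + derivT h := rfl

lemma opXY_apply : opXY θ h = derivX θ (derivY θ h) := rfl

lemma opXT_apply : opXT θ h = derivX θ (derivT h) := rfl

lemma opXX_dirDeriv : opXX θ (dirDeriv e h) = dirDeriv e (opXX θ h) := by
  simp only [opXX_apply, dirDeriv_derivX]

lemma opYT_dirDeriv : opYT θ (dirDeriv e h) = dirDeriv e (opYT θ h) := by
  simp only [opYT_apply, map_add, dirDeriv_derivY, dirDeriv_derivT]

lemma opXY_dirDeriv : opXY θ (dirDeriv e h) = dirDeriv e (opXY θ h) := by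
  simp only [opXY_apply, dirDeriv_derivX, dirDeriv_derivY]

lemma opXT_dirDeriv : opXT θ (dirDeriv e h) = dirDeriv e (opXT θ h) := by
  simp only [opXT_apply, dirDeriv_derivX, dirDeriv_derivT]

/-- The nonlinear operator `u ↦ (1 + u_XX)(1 + u_YY + u_tt + u_t) - u_XY² - u_Xt²`. -/
noncomputable def mongeAmpere : TorusFunction :=
  (1 + opXX θ u) * (1 + opYT θ u) - opXY θ u * opXY θ u - opXT θ u * opXT θ u

/-- The derivative at `u`, in the direction `h`, of the operator `mongeAmpere`. -/
noncomputable def linearization : TorusFunction :=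
  (1 + opYT θ u) * opXX θ h + (1 + opXX θ u) * opYT θ h - 2 * (opXY θ u * opXY θ h)
    - 2 * (opXT θ u * opXT θ h)

/-- The homogeneous quadratic part of the operator `mongeAmpere`. -/
noncomputable def quadraticPart : TorusFunction :=
  opXX θ h * opYT θ h - opXY θ h * opXY θ h - opXT θ h * opXT θ h

@[simp] lemma two_apply (x : E3) : (2 : TorusFunction) x = 2 := by
  rw [← one_add_one_eq_two, add_apply, one_apply, one_add_one_eq_two]

lemma dirDeriv_two : dirDeriv e (2 : TorusFunction) = 0 := by
  exact_mod_cast (dirDeriv e).map_natCast 2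

lemma mongeAmpere_apply (x : E3) : mongeAmpere θ u x =
    (1 + opXX θ u) x * (1 + opYT θ u) x - opXY θ u x * opXY θ u x - opXT θ u x * opXT θ u x := rfl

lemma dirDeriv_mongeAmpere :
    dirDeriv e (mongeAmpere θ u) = linearization θ u (dirDeriv e u) := by
  simp only [mongeAmpere, linearization, map_sub, map_add, Derivation.leibniz, smul_eq_mul,
    opXX_dirDeriv, opYT_dirDeriv, opXY_dirDeriv, opXT_dirDeriv, Derivation.map_one_eq_zero]
  ring

lemma dirDeriv_linearization : dirDeriv e (linearization θ u h) = linearization θ u (dirDeriv e h) +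
    (opYT θ (dirDeriv e u) * opXX θ h + opXX θ (dirDeriv e u) * opYT θ h
      - 2 * (opXY θ (dirDeriv e u) * opXY θ h) - 2 * (opXT θ (dirDeriv e u) * opXT θ h)) := by
  simp only [linearization, map_sub, map_add, Derivation.leibniz, smul_eq_mul, opXX_dirDeriv,
    opYT_dirDeriv, opXY_dirDeriv, opXT_dirDeriv, Derivation.map_one_eq_zero, dirDeriv_two]
  ring

lemma dirDeriv_dirDeriv_mongeAmpere : dirDeriv e (dirDeriv e (mongeAmpere θ u)) =
    linearization θ u (dirDeriv e (dirDeriv e u)) + 2 * quadraticPart θ (dirDeriv e u) := by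
  rw [dirDeriv_mongeAmpere, dirDeriv_linearization, quadraticPart]
  ring

lemma linearization_add :
    linearization θ u (h + k) = linearization θ u h + linearization θ u k := by
  simp only [linearization, map_add]
  ring

lemma linearization_smul (c : ℝ) : linearization θ u (c • h) = c • linearization θ u h := by
  simp only [linearization, map_smul]
  simp only [Algebra.smul_def]
  ring

lemma linearization_sub :
    linearization θ u (h - k) = linearization θ u h - linearization θ u k := by
  simp only [linearization, map_sub]
  ring

lemma linearization_self :
    linearization θ u u = 2 * mongeAmpere θ u - (2 + opXX θ u + opYT θ u) := by
  simp only [linearization, mongeAmpere]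
  ring

lemma mean_linearization : mean (linearization θ u h) = 0 := by
  have divergence_form : linearization θ u h =
      derivX θ (derivX θ h + derivY θ (derivY θ u) * derivX θ h - derivX θ (derivY θ u) * derivY θ h
        + derivT (derivT u) * derivX θ h - derivX θ (derivT u) * derivT h + derivT u * derivX θ h
        + derivX θ u * derivT h)
      + derivY θ (derivY θ h + derivX θ (derivX θ u) * derivY θ h
        - derivX θ (derivY θ u) * derivX θ h)
      + derivT (derivT h + h + derivX θ (derivX θ u) * derivT h - derivX θ (derivT u) * derivX θ h
        - derivX θ u * derivX θ h) := by
    simp only [linearization, opXX_apply, opYT_apply, opXY_apply, opXT_apply, map_add, map_sub,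
      Derivation.leibniz, smul_eq_mul, derivY_derivX, derivT_derivX]
    ring
  rw [divergence_form, map_add, map_add]
  simp only [derivX, derivY, derivT, mean_dirDeriv, add_zero]

lemma l2Norm_laplacian_le_l2Norm_laplacian_add_derivT :
    l2Norm (laplacian u) ≤ l2Norm (laplacian u + derivT u) := by
  have orthogonal : mean (laplacian u * derivT u) = 0 := by
    have h1 : mean (laplacian u * derivT u) = -mean (laplacian u * derivT u) := by
      nth_rw 1 [mul_comm]
      rw [derivT, mean_dirDeriv_mul, dirDeriv_laplacian, mul_comm u, mean_laplacian_mul,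
        mul_comm (laplacian u)]
    linarith
  refine Real.sqrt_le_sqrt ?_
  have expand : (laplacian u + derivT u) * (laplacian u + derivT u) = laplacian u * laplacian u +
      (laplacian u * derivT u + laplacian u * derivT u) + derivT u * derivT u := by ring
  rw [expand, map_add, map_add, map_add, orthogonal]
  linarith [mean_mul_self_nonneg (derivT u)]

end Operators

/-! ### The trace bound -/

/-- A normalized elliptic solution of the equation with right-hand side `E`. -/
structure IsSolution (θ : ℝ) (E u : TorusFunction) : Prop where
  eq : mongeAmpere θ u = E
  pos : ∀ x, 0 < (1 + opXX θ u) x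
  mean_eq_zero : mean u = 0

lemma two_mul_quadratic_le_sq_div {A B C D a b c d E : ℝ} (hA : 0 < A) (hE : 0 < E)
    (h : A * B - C * C - D * D = E) :
    2 * (a * b - c * c - d * d) ≤
      (B * a + A * b - 2 * (C * c) - 2 * (D * d)) ^ 2 / (2 * E) := by
  rw [le_div_iff₀ (by positivity)]
  set L := B * a + A * b - 2 * (C * c) - 2 * (D * d) with hL
  have sum_of_squares : A ^ 2 * (L ^ 2 - 4 * E * (a * b - c * c - d * d)) =
      (A * L - 2 * E * a) ^ 2 + 4 * E * ((A * c - C * a) ^ 2 + (A * d - D * a) ^ 2) := by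
    rw [hL, ← h]
    ring
  have h1 : 0 ≤ A ^ 2 * (L ^ 2 - 4 * E * (a * b - c * c - d * d)) := by
    rw [sum_of_squares]
    positivity
  have h2 := nonneg_of_mul_nonneg_right h1 (by positivity)
  linarith

lemma polarized_quadratic_nonpos {A B C D E p q r s t : ℝ} (hA : 0 < A) (hE : 0 ≤ E)
    (h : A * B - C * C - D * D = E) (hp : p ≤ 0)
    (hq : C ^ 2 * p - 2 * A * C * q + A ^ 2 * s ≤ 0)
    (hr : D ^ 2 * p - 2 * A * D * r + A ^ 2 * t ≤ 0) :
    B * p + A * (s + t) - 2 * (C * q) - 2 * (D * r) ≤ 0 := by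
  refine nonpos_of_mul_nonpos_right (a := A) ?_ hA
  have := mul_nonpos_of_nonneg_of_nonpos hE hp
  subst h
  linarith

section Solution

variable {θ : ℝ} {E u : TorusFunction} (hs : IsSolution θ E u) (hE : ∀ x, 0 < E x)
include hs

lemma IsSolution.det_apply (x : E3) : (1 + opXX θ u) x * (1 + opYT θ u) x -
    opXY θ u x * opXY θ u x - opXT θ u x * opXT θ u x = E x := by
  rw [← mongeAmpere_apply, hs.eq]

include hE

lemma IsSolution.pos_opYT (x : E3) : 0 < (1 + opYT θ u) x := by
  refine pos_of_mul_pos_right (a := (1 + opXX θ u) x) ?_ (hs.pos x).le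
  linarith [hs.det_apply x, hE x, mul_self_nonneg (opXY θ u x), mul_self_nonneg (opXT θ u x)]

lemma IsSolution.two_mul_quadraticPart_le (e x : E3) :
    2 * quadraticPart θ (dirDeriv e u) x ≤ (dirDeriv e E x) ^ 2 / (2 * E x) := by
  have h : dirDeriv e E = linearization θ u (dirDeriv e u) := by rw [← hs.eq, dirDeriv_mongeAmpere]
  rw [h]
  exact two_mul_quadratic_le_sq_div (a := opXX θ (dirDeriv e u) x) (b := opYT θ (dirDeriv e u) x)
    (c := opXY θ (dirDeriv e u) x) (d := opXT θ (dirDeriv e u) x) (hs.pos x) (hE x) (hs.det_apply x)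

lemma IsSolution.linearization_nonpos_of_forall_le {h : TorusFunction} {x : E3}
    (hx : ∀ y, h y ≤ h x) : linearization θ u h x ≤ 0 := by
  have hXY := dirDeriv_dirDeriv_nonpos_of_forall_le
    ((-opXY θ u x) • dirX θ + (1 + opXX θ u) x • dirY θ) hx
  have hXT := dirDeriv_dirDeriv_nonpos_of_forall_le
    ((-opXT θ u x) • dirX θ + (1 + opXX θ u) x • dirT) hx
  simp only [dirDeriv_add_dir, dirDeriv_smul_dir, map_add, Derivation.map_smul, add_apply,
    smul_apply] at hXY hXT
  rw [dirDeriv_comm h (dirY θ) (dirX θ)] at hXY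
  rw [dirDeriv_comm h dirT (dirX θ)] at hXT
  have expand : linearization θ u h x = (1 + opYT θ u) x * dirDeriv (dirX θ) (dirDeriv (dirX θ) h) x
      + (1 + opXX θ u) x * (dirDeriv (dirY θ) (dirDeriv (dirY θ) h) x +
        dirDeriv dirT (dirDeriv dirT h) x + dirDeriv dirT h x)
      - 2 * (opXY θ u x * dirDeriv (dirX θ) (dirDeriv (dirY θ) h) x)
      - 2 * (opXT θ u x * dirDeriv (dirX θ) (dirDeriv dirT h) x) := rfl
  rw [expand, dirDeriv_eq_zero_of_forall_le dirT hx, add_zero]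
  refine polarized_quadratic_nonpos (hs.pos x) (hE x).le (hs.det_apply x)
    (dirDeriv_dirDeriv_nonpos_of_forall_le (dirX θ) hx) ?_ ?_ <;>
  simp only [add_apply, one_apply] at hXY hXT ⊢ <;> linarith

end Solution

/-- The trace `2 + u_XX + u_YY + u_tt + u_t` of the Hessian-type matrix whose determinant is
`mongeAmpere`. -/
noncomputable def ellipticTrace (θ : ℝ) (u : TorusFunction) : TorusFunction :=
  2 + opXX θ u + opYT θ u

/-- A lower bound, depending only on the right-hand side `E`, for the linearized operator applied
to the trace of a solution. -/
noncomputable def traceLowerBound (θ : ℝ) (E : TorusFunction) (x : E3) : ℝ :=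
  (dirDeriv (dirX θ) (dirDeriv (dirX θ) E) x - (dirDeriv (dirX θ) E x) ^ 2 / (2 * E x)) +
  (dirDeriv (dirY θ) (dirDeriv (dirY θ) E) x - (dirDeriv (dirY θ) E x) ^ 2 / (2 * E x)) +
  (dirDeriv dirT (dirDeriv dirT E) x - (dirDeriv dirT E x) ^ 2 / (2 * E x)) + dirDeriv dirT E x

lemma ellipticTrace_apply (θ : ℝ) (u : TorusFunction) (x : E3) :
    ellipticTrace θ u x = (1 + opXX θ u) x + (1 + opYT θ u) x := by
  simp only [ellipticTrace, add_apply, one_apply, two_apply]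
  ring

lemma ellipticTrace_eq (θ : ℝ) (u : TorusFunction) :
    ellipticTrace θ u = 2 + (laplacian u + derivT u) := by
  rw [ellipticTrace, laplacian_eq θ, opXX_apply, opYT_apply]
  ring

section TraceBound

variable {θ : ℝ} {E u : TorusFunction}

lemma IsSolution.linearization_ellipticTrace (hs : IsSolution θ E u) :
    linearization θ u (ellipticTrace θ u) =
      (dirDeriv (dirX θ) (dirDeriv (dirX θ) E) - 2 * quadraticPart θ (dirDeriv (dirX θ) u)) +
      (dirDeriv (dirY θ) (dirDeriv (dirY θ) E) - 2 * quadraticPart θ (dirDeriv (dirY θ) u)) +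
      (dirDeriv dirT (dirDeriv dirT E) - 2 * quadraticPart θ (dirDeriv dirT u)) +
      dirDeriv dirT E := by
  have linearization_two : linearization θ u 2 = 0 := by
    simp [linearization, opXX, opYT, opXY, opXT, derivX, derivY, derivT, dirDeriv_two]
  have linearization_second (e : E3) : linearization θ u (dirDeriv e (dirDeriv e u)) =
      dirDeriv e (dirDeriv e E) - 2 * quadraticPart θ (dirDeriv e u) := by
    rw [← hs.eq, dirDeriv_dirDeriv_mongeAmpere, add_sub_cancel_right]
  rw [ellipticTrace_eq, laplacian_eq θ]
  simp only [linearization_add, linearization_two, zero_add]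
  rw [derivX, derivY, derivT, linearization_second, linearization_second, linearization_second,
    ← dirDeriv_mongeAmpere, hs.eq]

lemma IsSolution.traceLowerBound_le (hs : IsSolution θ E u) (hE : ∀ x, 0 < E x) (x : E3) :
    traceLowerBound θ E x ≤ linearization θ u (ellipticTrace θ u) x := by
  rw [hs.linearization_ellipticTrace]
  simp only [add_apply, sub_apply, mul_apply, two_apply, traceLowerBound]
  linarith [hs.two_mul_quadraticPart_le hE (dirX θ) x, hs.two_mul_quadraticPart_le hE (dirY θ) x,
    hs.two_mul_quadraticPart_le hE dirT x]

lemma IsSolution.mul_ellipticTrace_le (hs : IsSolution θ E u) (hE : ∀ x, 0 < E x) {K : ℝ} {x : E3}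
    (hx : ∀ y, (ellipticTrace θ u - K • u) y ≤ (ellipticTrace θ u - K • u) x) :
    K * ellipticTrace θ u x ≤ K * (2 * E x) - traceLowerBound θ E x := by
  have h1 := hs.linearization_nonpos_of_forall_le hE hx
  rw [linearization_sub, linearization_smul, linearization_self, hs.eq, ← ellipticTrace] at h1
  have h2 := hs.traceLowerBound_le hE x
  simp only [sub_apply, smul_apply, mul_apply, two_apply] at h1
  linarith

lemma IsSolution.l2Norm_laplacian_le (hs : IsSolution θ E u) (hE : ∀ x, 0 < E x) {M : ℝ}
    (hM : ∀ x, ellipticTrace θ u x ≤ M) : l2Norm (laplacian u) ≤ M + 2 := by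
  refine (l2Norm_laplacian_le_l2Norm_laplacian_add_derivT u).trans (l2Norm_le_of_abs_le fun x => ?_)
  have hpos (y : E3) : 0 < ellipticTrace θ u y :=
    ellipticTrace_apply θ u y ▸ add_pos (hs.pos y) (hs.pos_opYT hE y)
  have h : (laplacian u + derivT u) x = ellipticTrace θ u x - 2 := by simp [ellipticTrace_eq]
  rw [h, abs_le]
  constructor <;> linarith [hpos x, hM x]

/-- Compare the trace with a small multiple of `u` at the maximum of the difference: the oscillation
of `u` is controlled by the maximum of the trace itself, hence can be absorbed. -/
lemma exists_ellipticTrace_le : ∃ C₁, 0 < C₁ ∧ ∀ {θ : ℝ} {E u : TorusFunction} {Λ₀ C₀ : ℝ},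
    IsSolution θ E u → (∀ x, 0 < E x) → (∀ x, E x ≤ Λ₀) → (∀ x, -C₀ ≤ traceLowerBound θ E x) →
    ∀ x, ellipticTrace θ u x ≤ 4 * Λ₀ + C₁ * C₀ + 2 := by
  obtain ⟨C, hC, hsup⟩ := exists_abs_le_l2Norm_laplacian
  refine ⟨8 * C, by positivity, fun {θ E u Λ₀ C₀} hs hE hΛ hC₀ x => ?_⟩
  obtain ⟨x₁, hx₁⟩ := (ellipticTrace θ u).exists_forall_le
  obtain ⟨x₀, hx₀⟩ := (ellipticTrace θ u - (1 / (4 * C)) • u).exists_forall_le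
  have trace_le : ellipticTrace θ u x₀ ≤ 2 * Λ₀ + 4 * C * C₀ := by
    have h := mul_le_mul_of_nonneg_left (hs.mul_ellipticTrace_le hE hx₀)
      (by positivity : 0 ≤ 4 * C)
    have h' := mul_le_mul_of_nonneg_left (hC₀ x₀) (by positivity : 0 ≤ 4 * C)
    field_simp at h
    linarith [hΛ x₀]
  have osc_le : 1 / (4 * C) * (u x₁ - u x₀) ≤ (ellipticTrace θ u x₁ + 2) / 2 := by
    have h1 := (abs_le.1 (hsup u hs.mean_eq_zero x₁)).2
    have h0 := (abs_le.1 (hsup u hs.mean_eq_zero x₀)).1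
    have h := mul_le_mul_of_nonneg_left (hs.l2Norm_laplacian_le hE hx₁) hC.le
    field_simp
    linarith
  have compare := hx₀ x₁
  simp only [sub_apply, smul_apply] at compare
  linarith [hx₁ x]

end TraceBound

/-! ### Uniformly bounded families -/

section Families

variable {ι τ : Type*} [Fintype τ] {f g : ι → SmoothPeriodic τ}

/-- A family of functions with a common pointwise bound. -/
def BddSup (f : ι → SmoothPeriodic τ) : Prop := ∃ C, ∀ i x, |f i x| ≤ C

/-- A family of functions with a common `L⁴` bound. -/
def BddL4 (f : ι → SmoothPeriodic τ) : Prop := ∃ C, ∀ i, mean (f i * f i * (f i * f i)) ≤ C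

/-- A family of functions with a common `L²` bound. -/
def BddL2 (f : ι → SmoothPeriodic τ) : Prop := ∃ C, ∀ i, l2Norm (f i) ≤ C

lemma BddSup.exists_pos (hf : BddSup f) : ∃ C, 0 < C ∧ ∀ i x, |f i x| ≤ C := by
  obtain ⟨C, hC⟩ := hf
  exact ⟨|C| + 1, by positivity, fun i x => (hC i x).trans (by linarith [le_abs_self C])⟩

lemma BddSup.const (g : SmoothPeriodic τ) : BddSup fun _ : ι => g := by
  obtain ⟨C, hC⟩ := g.exists_abs_le
  exact ⟨C, fun _ => hC⟩

lemma BddSup.comp {κ : Type*} (hf : BddSup f) (p : κ → ι) : BddSup fun k => f (p k) := by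
  obtain ⟨C, hC⟩ := hf
  exact ⟨C, fun k => hC (p k)⟩

lemma BddSup.add (hf : BddSup f) (hg : BddSup g) : BddSup (f + g) := by
  obtain ⟨C, hC⟩ := hf
  obtain ⟨K, hK⟩ := hg
  exact ⟨C + K, fun i x => (abs_add_le _ _).trans (add_le_add (hC i x) (hK i x))⟩

lemma BddSup.mul (hf : BddSup f) (hg : BddSup g) : BddSup (f * g) := by
  obtain ⟨C, hC0, hC⟩ := hf.exists_pos
  obtain ⟨K, hK⟩ := hg
  exact ⟨C * K, fun i x => (abs_mul _ _).trans_le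
    (mul_le_mul (hC i x) (hK i x) (abs_nonneg _) hC0.le)⟩

lemma BddSup.neg (hf : BddSup f) : BddSup (-f) := by
  obtain ⟨C, hC⟩ := hf
  exact ⟨C, fun i x => (abs_neg _).trans_le (hC i x)⟩

lemma BddSup.smul {c : ι → ℝ} {C : ℝ} (hc : ∀ i, |c i| ≤ C) (hf : BddSup f) :
    BddSup fun i => c i • f i := by
  obtain ⟨K, hK⟩ := hf
  refine ⟨C * K, fun i x => ?_⟩
  rw [smul_apply, abs_mul]
  exact mul_le_mul (hc i) (hK i x) (abs_nonneg _) ((abs_nonneg _).trans (hc i))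

lemma BddL2.zero : BddL2 (0 : ι → SmoothPeriodic τ) := ⟨0, fun _ => l2Norm_zero.le⟩

lemma BddL2.add (hf : BddL2 f) (hg : BddL2 g) : BddL2 (f + g) := by
  obtain ⟨C, hC⟩ := hf
  obtain ⟨K, hK⟩ := hg
  exact ⟨C + K, fun i => (l2Norm_add_le _ _).trans (add_le_add (hC i) (hK i))⟩

lemma BddL2.neg (hf : BddL2 f) : BddL2 (-f) := by
  obtain ⟨C, hC⟩ := hf
  exact ⟨C, fun i => (l2Norm_neg _).trans_le (hC i)⟩

lemma BddL2.mono (hg : BddL2 g) (h : ∀ i x, |f i x| ≤ |g i x|) : BddL2 f := by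
  obtain ⟨C, hC⟩ := hg
  exact ⟨C, fun i => (l2Norm_mono (h i)).trans (hC i)⟩

lemma BddL2.of_mean_mul_self_le {C : ℝ} (h : ∀ i, mean (f i * f i) ≤ C) : BddL2 f :=
  ⟨√C, fun i => Real.sqrt_le_sqrt (h i)⟩

lemma BddL2.exists_mean_mul_self_le (hf : BddL2 f) : ∃ C, 0 ≤ C ∧ ∀ i, mean (f i * f i) ≤ C := by
  obtain ⟨C, hC⟩ := hf
  refine ⟨C ^ 2, sq_nonneg _, fun i => ?_⟩
  rw [← l2Norm_sq]
  exact pow_le_pow_left₀ (l2Norm_nonneg _) (hC i) 2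

lemma BddSup.bddL2 (hf : BddSup f) : BddL2 f := by
  obtain ⟨C, hC⟩ := hf
  exact ⟨C, fun i => l2Norm_le_of_abs_le (hC i)⟩

lemma BddSup.mul_bddL2 (hf : BddSup f) (hg : BddL2 g) : BddL2 (f * g) := by
  obtain ⟨C, hC0, hC⟩ := hf.exists_pos
  obtain ⟨K, hK⟩ := hg
  exact ⟨C * K, fun i => (l2Norm_mul_le (hC i)).trans (mul_le_mul_of_nonneg_left (hK i) hC0.le)⟩

lemma bddL4_iff : BddL4 f ↔ BddL2 (f * f) :=
  ⟨fun ⟨_, h⟩ => BddL2.of_mean_mul_self_le h, fun h =>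
    let ⟨C, _, hC⟩ := h.exists_mean_mul_self_le
    ⟨C, hC⟩⟩

lemma BddSup.bddL4 (hf : BddSup f) : BddL4 f := bddL4_iff.2 (hf.mul hf).bddL2

lemma BddSup.mul_bddL4 (hf : BddSup f) (hg : BddL4 g) : BddL4 (f * g) := by
  rw [bddL4_iff] at hg ⊢
  rw [mul_mul_mul_comm]
  exact (hf.mul hf).mul_bddL2 hg

lemma BddL4.mul (hf : BddL4 f) (hg : BddL4 g) : BddL2 (f * g) := by
  rw [bddL4_iff] at hf hg
  refine (hf.add hg).mono fun i x => ?_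
  simp only [Pi.mul_apply, Pi.add_apply, mul_apply, add_apply]
  rw [abs_of_nonneg (add_nonneg (mul_self_nonneg (f i x)) (mul_self_nonneg (g i x))), abs_le]
  constructor <;> nlinarith [sq_nonneg (f i x - g i x), sq_nonneg (f i x + g i x)]

lemma BddL4.add (hf : BddL4 f) (hg : BddL4 g) : BddL4 (f + g) := by
  rw [bddL4_iff]
  have h : (f + g) * (f + g) = f * f + g * g + (f * g + f * g) := by ring
  rw [h]
  exact ((bddL4_iff.1 hf).add (bddL4_iff.1 hg)).add ((hf.mul hg).add (hf.mul hg))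

lemma BddL4.neg (hf : BddL4 f) : BddL4 (-f) := by
  rw [bddL4_iff] at hf ⊢
  rwa [neg_mul_neg]

end Families

/-! ### Energy estimates for positive functionals -/

section Energy

variable {τ : Type*} [Fintype τ] {μ : SmoothPeriodic τ →ₗ[ℝ] ℝ}

lemma functional_mono (hμ : ∀ f : SmoothPeriodic τ, (∀ x, 0 ≤ f x) → 0 ≤ μ f)
    {f g : SmoothPeriodic τ} (h : ∀ x, f x ≤ g x) : μ f ≤ μ g := by
  have := hμ (g - f) fun x => sub_nonneg.2 (h x)
  rw [map_sub] at this
  linarith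

lemma functional_derivation_mul {D : Derivation ℝ (SmoothPeriodic τ) (SmoothPeriodic τ)}
    (hD : ∀ f, μ (D f) = 0) (f g : SmoothPeriodic τ) : μ (D f * g) = -μ (f * D g) := by
  have h := hD (f * g)
  rw [Derivation.leibniz, map_add, smul_eq_mul, smul_eq_mul, mul_comm g] at h
  linarith

lemma functional_derivation_pow_four_le (hμ : ∀ f : SmoothPeriodic τ, (∀ x, 0 ≤ f x) → 0 ≤ μ f)
    {D : Derivation ℝ (SmoothPeriodic τ) (SmoothPeriodic τ)} (hD : ∀ f, μ (D f) = 0)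
    {f : SmoothPeriodic τ} {s : ℝ} (hs : ∀ x, |f x| ≤ s) :
    μ (D f * D f * (D f * D f)) ≤ 9 * s ^ 2 * μ (D (D f) * D (D f)) := by
  have by_parts : μ (D f * D f * (D f * D f)) = -3 * μ (f * (D f * D f * D (D f))) := by
    have h : f * (D f * (D f * D (D f) + D f * D (D f)) + D f * D f * D (D f)) =
        (3 : ℝ) • (f * (D f * D f * D (D f))) := by
      ext x
      simp only [mul_apply, add_apply, smul_apply]
      ring
    rw [mul_assoc, functional_derivation_mul hD]
    simp only [Derivation.leibniz, smul_eq_mul]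
    rw [h, map_smul, smul_eq_mul, neg_mul]
  have young : -3 * μ (f * (D f * D f * D (D f))) ≤
      μ ((1 / 2 : ℝ) • (D f * D f * (D f * D f)) + (9 / 2 * s ^ 2) • (D (D f) * D (D f))) := by
    rw [← smul_eq_mul, ← map_smul]
    refine functional_mono hμ fun x => ?_
    simp only [mul_apply, add_apply, smul_apply]
    have hsq : f x ^ 2 ≤ s ^ 2 := sq_le_sq.2 ((hs x).trans (le_abs_self s))
    nlinarith [sq_nonneg (D f x * D f x + 3 * f x * D (D f) x),
      mul_le_mul_of_nonneg_right hsq (sq_nonneg (D (D f) x))]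
  rw [← by_parts, map_add, map_smul, map_smul, smul_eq_mul, smul_eq_mul] at young
  linarith

variable {κ : Type*} [Fintype κ] {D : κ → Derivation ℝ (SmoothPeriodic τ) (SmoothPeriodic τ)}
  {a : κ → SmoothPeriodic τ} {q γ β : SmoothPeriodic τ} {d j k : κ}

lemma functional_divergence_mul_self (hD : ∀ j f, μ (D j f) = 0) :
    μ ((∑ j, D j (a j * D j q) + D d q) * q) = -μ (∑ j, a j * (D j q * D j q)) := by
  have drift : μ (D d q * q) = 0 := by
    have := functional_derivation_mul (hD d) q q
    rw [mul_comm q] at this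
    linarith
  rw [add_mul, map_add, drift, add_zero, Finset.sum_mul, map_sum, map_sum, ← Finset.sum_neg_distrib]
  exact Finset.sum_congr rfl fun j _ => by rw [functional_derivation_mul (hD j), mul_assoc]

lemma sq_mul_functional_sum_le (hμ : ∀ f : SmoothPeriodic τ, (∀ x, 0 ≤ f x) → 0 ≤ μ f)
    (hD : ∀ j f, μ (D j f) = 0) {l : ℝ} (hl : 0 < l) (ha : ∀ j x, l ≤ a j x)
    (hq : ∑ j, D j (a j * D j q) + D d q = D j γ + D k β) :
    l ^ 2 * μ (∑ j, D j q * D j q) ≤ 2 * μ (γ * γ) + 2 * μ (β * β) := by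
  have identity : μ (∑ j, a j * (D j q * D j q)) = μ (γ * D j q + β * D k q) := by
    have h := functional_divergence_mul_self (a := a) (q := q) (d := d) hD
    rw [hq, add_mul, map_add, functional_derivation_mul (hD j), functional_derivation_mul (hD k),
      ← neg_add, ← map_add] at h
    linarith
  have coercive : μ (l • ∑ j, D j q * D j q) ≤ μ (∑ j, a j * (D j q * D j q)) := by
    refine functional_mono hμ fun x => ?_
    simp only [smul_apply, sum_apply, mul_apply, Finset.mul_sum]
    exact Finset.sum_le_sum fun j _ => mul_le_mul_of_nonneg_right (ha j x) (mul_self_nonneg _)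
  have young : μ (l • (γ * D j q + β * D k q)) ≤
      μ (γ * γ + β * β + (l ^ 2 / 2) • ∑ j, D j q * D j q) := by
    refine functional_mono hμ fun x => ?_
    have le_sum (i : κ) : D i q x * D i q x ≤ (∑ j, D j q * D j q) x := by
      rw [sum_apply]
      exact Finset.single_le_sum (f := fun j => (D j q * D j q) x)
        (fun j _ => mul_self_nonneg (D j q x)) (Finset.mem_univ i)
    simp only [mul_apply, add_apply, smul_apply]
    nlinarith [sq_nonneg (2 * γ x - l * D j q x), sq_nonneg (2 * β x - l * D k q x),
      mul_le_mul_of_nonneg_left (le_sum j) (sq_nonneg l),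
      mul_le_mul_of_nonneg_left (le_sum k) (sq_nonneg l)]
  rw [identity] at coercive
  simp only [map_smul, map_add μ (γ * γ + β * β), map_add μ (γ * γ), smul_eq_mul] at coercive young
  linarith [mul_le_mul_of_nonneg_left coercive hl.le]

end Energy

/-! ### The adapted frame -/

section Frame

variable (θ : ℝ) (u f : TorusFunction)

lemma derivY_opXX : derivY θ (opXX θ u) = derivX θ (opXY θ u) := by
  simp only [opXX_apply, opXY_apply, derivY_derivX]

lemma derivT_opXX : derivT (opXX θ u) = derivX θ (opXT θ u) := by
  simp only [opXX_apply, opXT_apply, derivT_derivX]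

lemma derivY_opXT : derivY θ (opXT θ u) = derivT (opXY θ u) := by
  simp only [opXY_apply, opXT_apply, derivT_derivX, derivY_derivX, derivT_derivY]

lemma derivX_opYT :
    derivX θ (opYT θ u) = derivY θ (opXY θ u) + derivT (opXT θ u) + opXT θ u := by
  simp only [opYT_apply, opXY_apply, opXT_apply, map_add, derivT_derivX, derivY_derivX]

open Classical in
/-- The function `(1 + u_XX)⁻¹`, with junk value `0` if `1 + u_XX` has a zero. -/
noncomputable def invXX : TorusFunction :=
  if h : ∀ x, (1 + opXX θ u) x ≠ 0 then inv (1 + opXX θ u) h else 0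

/-- The `∂_X`-coefficients of the adapted frame. -/
noncomputable def frameCoeff : Fin 3 → TorusFunction :=
  ![invXX θ u, -(invXX θ u * opXY θ u), -(invXX θ u * opXT θ u)]

/-- The parts of the adapted frame transverse to `∂_X`. -/
noncomputable def frameBase : Fin 3 → Derivation ℝ TorusFunction TorusFunction :=
  ![0, derivY θ, derivT]

/-- The adapted frame
`(1 + u_XX)⁻¹ ∂_X, ∂_Y - (1 + u_XX)⁻¹ u_XY ∂_X, ∂_t - (1 + u_XX)⁻¹ u_Xt ∂_X`, which consists of the
coordinate derivations of the partial Legendre transform `X ↦ X + u_X` of `u`. -/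
noncomputable def frame (j : Fin 3) : Derivation ℝ TorusFunction TorusFunction :=
  frameBase θ j + frameCoeff θ u j • derivX θ

/-- The linearized operator divided by `1 + u_XX`, in the adapted frame. -/
noncomputable def frameLinearization (θ : ℝ) (E u h : TorusFunction) : TorusFunction :=
  frame θ u 0 (E * frame θ u 0 h) + frame θ u 1 (frame θ u 1 h) + frame θ u 2 (frame θ u 2 h) +
    frame θ u 2 h

lemma frame_apply (j : Fin 3) :
    frame θ u j f = frameBase θ j f + frameCoeff θ u j * derivX θ f := rfl

lemma frame_zero : frame θ u 0 f = invXX θ u * derivX θ f := by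
  simp [frame_apply, frameBase, frameCoeff]

lemma frame_one : frame θ u 1 f = derivY θ f - invXX θ u * opXY θ u * derivX θ f := by
  simp [frame_apply, frameBase, frameCoeff, sub_eq_add_neg]

lemma frame_two : frame θ u 2 f = derivT f - invXX θ u * opXT θ u * derivX θ f := by
  simp [frame_apply, frameBase, frameCoeff, sub_eq_add_neg]

lemma frameLinearization_eq_sum (E h : TorusFunction) : frameLinearization θ E u h =
    ∑ j, frame θ u j ((![E, 1, 1] : Fin 3 → TorusFunction) j * frame θ u j h) + frame θ u 2 h := by
  simp [frameLinearization, Fin.sum_univ_three]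

variable {θ u} {E : TorusFunction} (hs : IsSolution θ E u)
include hs

lemma IsSolution.mul_invXX : (1 + opXX θ u) * invXX θ u = 1 := by
  have h : ∀ x, (1 + opXX θ u) x ≠ 0 := fun x => (hs.pos x).ne'
  rw [invXX, dif_pos h, mul_inv]

lemma IsSolution.derivation_invXX (δ : Derivation ℝ TorusFunction TorusFunction) :
    δ (invXX θ u) = -(invXX θ u * invXX θ u * δ (opXX θ u)) := by
  have h := congrArg δ hs.mul_invXX
  simp only [Derivation.leibniz, smul_eq_mul, map_add, Derivation.map_one_eq_zero] at h
  linear_combination invXX θ u * h - δ (invXX θ u) * hs.mul_invXX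

lemma IsSolution.mul_invXX_eq : E * invXX θ u = 1 + opYT θ u -
    invXX θ u * (opXY θ u * opXY θ u + opXT θ u * opXT θ u) := by
  rw [← hs.eq, mongeAmpere]
  linear_combination (1 + opYT θ u) * hs.mul_invXX

lemma IsSolution.frame_frameCoeff (j k : Fin 3) :
    frame θ u j (frameCoeff θ u k) = frame θ u k (frameCoeff θ u j) := by
  have h01 : frame θ u 0 (frameCoeff θ u 1) = frame θ u 1 (frameCoeff θ u 0) := by
    rw [frame_zero, frame_one]
    simp only [frameCoeff, Matrix.cons_val_zero, Matrix.cons_val_one, map_neg, Derivation.leibniz,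
      smul_eq_mul, hs.derivation_invXX, derivY_opXX]
    ring
  have h02 : frame θ u 0 (frameCoeff θ u 2) = frame θ u 2 (frameCoeff θ u 0) := by
    rw [frame_zero, frame_two]
    simp only [frameCoeff, Matrix.cons_val_zero, Matrix.cons_val, map_neg, Derivation.leibniz,
      smul_eq_mul, hs.derivation_invXX, derivT_opXX]
    ring
  have h12 : frame θ u 1 (frameCoeff θ u 2) = frame θ u 2 (frameCoeff θ u 1) := by
    rw [frame_one, frame_two]
    simp only [frameCoeff, Matrix.cons_val_one, Matrix.cons_val, map_neg, Derivation.leibniz,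
      smul_eq_mul, hs.derivation_invXX, derivY_opXX, derivT_opXX, derivY_opXT]
    ring
  fin_cases j <;> fin_cases k <;> first | rfl | assumption | (symm; assumption)

lemma IsSolution.frame_comm (j k : Fin 3) :
    frame θ u j (frame θ u k f) = frame θ u k (frame θ u j f) := by
  have coeff := hs.frame_frameCoeff j k
  have base : frameBase θ j (frameBase θ k f) = frameBase θ k (frameBase θ j f) := by
    fin_cases j <;> fin_cases k <;> simp [frameBase, derivT_derivY]
  have base_derivX (j : Fin 3) : frameBase θ j (derivX θ f) = derivX θ (frameBase θ j f) := by
    fin_cases j <;> simp [frameBase, derivT_derivX, derivY_derivX]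
  rw [frame_apply, frame_apply] at coeff
  simp only [frame_apply, map_add, Derivation.leibniz, smul_eq_mul, base_derivX]
  linear_combination base + derivX θ f * coeff

lemma IsSolution.sum_frame_frameCoeff : frame θ u 0 (E * frameCoeff θ u 0) +
    frame θ u 1 (frameCoeff θ u 1) + frame θ u 2 (frameCoeff θ u 2) + frameCoeff θ u 2 = 0 := by
  rw [frame_zero, frame_one, frame_two]
  simp only [frameCoeff, Matrix.cons_val_zero, Matrix.cons_val_one, Matrix.cons_val, map_neg]
  rw [hs.mul_invXX_eq]
  simp only [map_add, map_sub, Derivation.leibniz, Derivation.map_one_eq_zero, smul_eq_mul,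
    hs.derivation_invXX, derivY_opXX, derivT_opXX, derivX_opYT]
  ring

lemma IsSolution.mul_frameLinearization (h : TorusFunction) :
    (1 + opXX θ u) * frameLinearization θ E u h = linearization θ u h := by
  have expand : frameLinearization θ E u h =
      E * invXX θ u * invXX θ u * derivX θ (derivX θ h) + derivY θ (derivY θ h) + derivT (derivT h)
      + derivT h - 2 * (invXX θ u * opXY θ u) * derivX θ (derivY θ h)
      - 2 * (invXX θ u * opXT θ u) * derivX θ (derivT h)
      + ((invXX θ u * opXY θ u) * (invXX θ u * opXY θ u)
        + (invXX θ u * opXT θ u) * (invXX θ u * opXT θ u)) * derivX θ (derivX θ h) := by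
    have coeff := hs.sum_frame_frameCoeff
    rw [frameLinearization]
    simp only [frame_zero, frame_one, frame_two, frameCoeff, Matrix.cons_val_zero,
      Matrix.cons_val_one, Matrix.cons_val, map_neg, map_sub, Derivation.leibniz, smul_eq_mul,
      derivT_derivX, derivY_derivX] at coeff ⊢
    linear_combination derivX θ h * coeff
  rw [expand, hs.mul_invXX_eq, linearization, opXX_apply θ h, opYT_apply θ h, opXY_apply θ h,
    opXT_apply θ h]
  linear_combination (derivX θ (derivX θ h) * (1 + opYT θ u)
    - 2 * opXY θ u * derivX θ (derivY θ h) - 2 * opXT θ u * derivX θ (derivT h)) * hs.mul_invXX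

lemma IsSolution.mean_mul_frame (j : Fin 3) : mean ((1 + opXX θ u) * frame θ u j f) = 0 := by
  have h0 : (1 + opXX θ u) * frame θ u 0 f = derivX θ f := by
    rw [frame_zero]
    linear_combination derivX θ f * hs.mul_invXX
  have h1 : (1 + opXX θ u) * frame θ u 1 f =
      derivY θ ((1 + opXX θ u) * f) - derivX θ (opXY θ u * f) := by
    rw [frame_one]
    simp only [Derivation.leibniz, map_add, Derivation.map_one_eq_zero, smul_eq_mul, derivY_opXX]
    linear_combination -(opXY θ u * derivX θ f) * hs.mul_invXX
  have h2 : (1 + opXX θ u) * frame θ u 2 f =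
      derivT ((1 + opXX θ u) * f) - derivX θ (opXT θ u * f) := by
    rw [frame_two]
    simp only [Derivation.leibniz, map_add, Derivation.map_one_eq_zero, smul_eq_mul, derivT_opXX]
    linear_combination -(opXT θ u * derivX θ f) * hs.mul_invXX
  match j with
  | 0 => rw [h0, derivX, mean_dirDeriv]
  | 1 => rw [h1, derivX, derivY, map_sub, mean_dirDeriv, mean_dirDeriv, sub_zero]
  | 2 => rw [h2, derivX, derivT, map_sub, mean_dirDeriv, mean_dirDeriv, sub_zero]

lemma IsSolution.frameLinearization_frame (j : Fin 3) (h : TorusFunction) :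
    frameLinearization θ E u (frame θ u j h) =
      frame θ u j (frameLinearization θ E u h) +
        frame θ u 0 (-(frame θ u j E * frame θ u 0 h)) := by
  simp only [frameLinearization, map_add, map_neg, hs.frame_comm _ j, Derivation.leibniz,
    smul_eq_mul]
  ring

lemma IsSolution.frameLinearization_frameCoeff (j : Fin 3) :
    frameLinearization θ E u (frameCoeff θ u j) =
      frame θ u 0 (-(frame θ u j E * frameCoeff θ u 0)) := by
  have h := congrArg (frame θ u j) hs.sum_frame_frameCoeff
  simp only [map_add, map_zero] at h
  rw [hs.frame_comm _ j 0, hs.frame_comm _ j 1, hs.frame_comm _ j 2, hs.frame_frameCoeff j 1,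
    hs.frame_frameCoeff j 2, Derivation.leibniz, smul_eq_mul, smul_eq_mul,
    hs.frame_frameCoeff j 0, map_add] at h
  rw [frameLinearization, map_neg, mul_comm (frame θ u j E)]
  linear_combination h

end Frame

/-! ### A priori estimates for families of solutions -/

section FrameControlled

variable {ι : Type*} {θ : ℝ} {u f g : ι → TorusFunction}

/-- The adapted frame acting on families. -/
noncomputable def frameDeriv (θ : ℝ) (u : ι → TorusFunction) (j : Fin 3) (f : ι → TorusFunction) :
    ι → TorusFunction :=
  fun i => frame θ (u i) j (f i)

lemma frameDeriv_add (j : Fin 3) :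
    frameDeriv θ u j (f + g) = frameDeriv θ u j f + frameDeriv θ u j g :=
  funext fun _ => map_add _ _ _

lemma frameDeriv_neg (j : Fin 3) : frameDeriv θ u j (-f) = -frameDeriv θ u j f :=
  funext fun _ => map_neg _ _

lemma frameDeriv_mul (j : Fin 3) :
    frameDeriv θ u j (f * g) = f * frameDeriv θ u j g + g * frameDeriv θ u j f :=
  funext fun _ => Derivation.leibniz _ _ _

/-- Families with bounded values, first derivatives in `L⁴` and second derivatives in `L²`,
with respect to the adapted frame. -/
structure FrameControlled (θ : ℝ) (u f : ι → TorusFunction) : Prop where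
  bddSup : BddSup f
  bddL4 : ∀ j, BddL4 (frameDeriv θ u j f)
  bddL2 : ∀ j k, BddL2 (frameDeriv θ u j (frameDeriv θ u k f))

lemma FrameControlled.add (hf : FrameControlled θ u f) (hg : FrameControlled θ u g) :
    FrameControlled θ u (f + g) where
  bddSup := hf.bddSup.add hg.bddSup
  bddL4 j := by
    rw [frameDeriv_add]
    exact (hf.bddL4 j).add (hg.bddL4 j)
  bddL2 j k := by
    rw [frameDeriv_add, frameDeriv_add]
    exact (hf.bddL2 j k).add (hg.bddL2 j k)

lemma FrameControlled.neg (hf : FrameControlled θ u f) : FrameControlled θ u (-f) where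
  bddSup := hf.bddSup.neg
  bddL4 j := by
    rw [frameDeriv_neg]
    exact (hf.bddL4 j).neg
  bddL2 j k := by
    rw [frameDeriv_neg, frameDeriv_neg]
    exact (hf.bddL2 j k).neg

lemma FrameControlled.mul (hf : FrameControlled θ u f) (hg : FrameControlled θ u g) :
    FrameControlled θ u (f * g) where
  bddSup := hf.bddSup.mul hg.bddSup
  bddL4 j := by
    rw [frameDeriv_mul]
    exact (hf.bddSup.mul_bddL4 (hg.bddL4 j)).add (hg.bddSup.mul_bddL4 (hf.bddL4 j))
  bddL2 j k := by
    simp only [frameDeriv_mul, frameDeriv_add]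
    exact ((hf.bddSup.mul_bddL2 (hg.bddL2 j k)).add ((hg.bddL4 k).mul (hf.bddL4 j))).add
      ((hg.bddSup.mul_bddL2 (hf.bddL2 j k)).add ((hf.bddL4 k).mul (hg.bddL4 j)))

lemma frameControlled_const (a : ℝ) :
    FrameControlled θ u fun _ => algebraMap ℝ TorusFunction a where
  bddSup := BddSup.const _
  bddL4 j := ⟨0, fun i => by simp [frameDeriv]⟩
  bddL2 j k := ⟨0, fun i => by simp [frameDeriv, l2Norm_zero]⟩

/-- Derivations with controlled coefficients in the adapted frame. -/
def ControlledDerivation (θ : ℝ) (u : ι → TorusFunction)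
    (δ : Derivation ℝ TorusFunction TorusFunction) : Prop :=
  ∃ c : Fin 3 → ι → TorusFunction, (∀ k, FrameControlled θ u (c k)) ∧
    ∀ f : ι → TorusFunction, (fun i => δ (f i)) =
      c 0 * frameDeriv θ u 0 f + c 1 * frameDeriv θ u 1 f + c 2 * frameDeriv θ u 2 f

variable {δ δ' : Derivation ℝ TorusFunction TorusFunction}

lemma ControlledDerivation.bddL4 (h : ControlledDerivation θ u δ) (hf : FrameControlled θ u f) :
    BddL4 fun i => δ (f i) := by
  obtain ⟨c, hc, h⟩ := h
  rw [h]
  exact (((hc 0).bddSup.mul_bddL4 (hf.bddL4 0)).add ((hc 1).bddSup.mul_bddL4 (hf.bddL4 1))).add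
    ((hc 2).bddSup.mul_bddL4 (hf.bddL4 2))

lemma ControlledDerivation.bddL2 (h : ControlledDerivation θ u δ)
    (h' : ControlledDerivation θ u δ') (hf : FrameControlled θ u f) :
    BddL2 fun i => δ' (δ (f i)) := by
  obtain ⟨c, hc, h⟩ := h
  obtain ⟨c', hc', h'⟩ := h'
  have frame_bound (j : Fin 3) : BddL2 (frameDeriv θ u j fun i => δ (f i)) := by
    have term_bound (k : Fin 3) : BddL2 (frameDeriv θ u j (c k * frameDeriv θ u k f)) := by
      rw [frameDeriv_mul]
      exact ((hc k).bddSup.mul_bddL2 (hf.bddL2 j k)).add ((hf.bddL4 k).mul ((hc k).bddL4 j))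
    rw [h, frameDeriv_add, frameDeriv_add]
    exact ((term_bound 0).add (term_bound 1)).add (term_bound 2)
  rw [h' fun i => δ (f i)]
  exact (((hc' 0).bddSup.mul_bddL2 (frame_bound 0)).add
    ((hc' 1).bddSup.mul_bddL2 (frame_bound 1))).add ((hc' 2).bddSup.mul_bddL2 (frame_bound 2))

end FrameControlled

/-- The integral against the density `1 + u_XX`, which annihilates derivatives along the adapted
frame of a solution `u`. -/
noncomputable def weightedMean (θ : ℝ) (u : TorusFunction) : TorusFunction →ₗ[ℝ] ℝ :=
  mean ∘ₗ LinearMap.mulLeft ℝ (1 + opXX θ u)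

lemma weightedMean_apply (θ : ℝ) (u f : TorusFunction) :
    weightedMean θ u f = mean ((1 + opXX θ u) * f) := rfl

lemma exists_neg_le_sub_sq_div {ι τ : Type*} [Fintype τ] {a b E : ι → SmoothPeriodic τ} {l : ℝ}
    (hl : 0 < l) (hE : ∀ i x, l ≤ E i x) (ha : BddSup a) (hb : BddSup b) :
    ∃ K, ∀ i x, -K ≤ b i x - (a i x) ^ 2 / (2 * E i x) := by
  obtain ⟨A, -, hA⟩ := ha.exists_pos
  obtain ⟨B, -, hB⟩ := hb.exists_pos
  refine ⟨B + A ^ 2 / (2 * l), fun i x => ?_⟩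
  have quotient : (a i x) ^ 2 / (2 * E i x) ≤ A ^ 2 / (2 * l) := by
    refine div_le_div₀ (sq_nonneg _) ?_ (by positivity) (by linarith [hE i x])
    rw [← sq_abs]
    exact pow_le_pow_left₀ (abs_nonneg _) (hA i x) 2
  linarith [(abs_le.1 (hB i x)).1]

/-- A family of solutions with uniformly controlled right-hand sides. -/
structure SolutionFamily {ι : Type*} (θ : ℝ) (E u : ι → TorusFunction) : Prop where
  sol : ∀ i, IsSolution θ (E i) (u i)
  exists_pos_le : ∃ l, 0 < l ∧ l ≤ 1 ∧ ∀ i x, l ≤ E i x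
  bddSup_rhs : BddSup E
  bddSup_dirDeriv : ∀ e, BddSup fun i => dirDeriv e (E i)
  bddSup_dirDeriv_dirDeriv : ∀ e e', BddSup fun i => dirDeriv e (dirDeriv e' (E i))

namespace SolutionFamily

variable {ι κ : Type*} {θ : ℝ} {E u f : ι → TorusFunction} (H : SolutionFamily θ E u)
include H

lemma comp (p : κ → ι) : SolutionFamily θ (fun k => E (p k)) (fun k => u (p k)) where
  sol k := H.sol (p k)
  exists_pos_le := by
    obtain ⟨l, h, h1, h2⟩ := H.exists_pos_le
    exact ⟨l, h, h1, fun k => h2 (p k)⟩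
  bddSup_rhs := H.bddSup_rhs.comp p
  bddSup_dirDeriv e := (H.bddSup_dirDeriv e).comp p
  bddSup_dirDeriv_dirDeriv e e' := (H.bddSup_dirDeriv_dirDeriv e e').comp p

lemma pos (i : ι) (x : E3) : 0 < E i x := by
  obtain ⟨l, h, -, h2⟩ := H.exists_pos_le
  exact h.trans_le (h2 i x)

lemma exists_ellipticTrace_le : ∃ M, 1 ≤ M ∧ ∀ i x, ellipticTrace θ (u i) x ≤ M := by
  obtain ⟨C₁, -, hT⟩ := SmoothPeriodic.exists_ellipticTrace_le
  obtain ⟨Λ, -, hΛ⟩ := H.bddSup_rhs.exists_pos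
  obtain ⟨l, hl, -, hlE⟩ := H.exists_pos_le
  have term (e : E3) := exists_neg_le_sub_sq_div hl hlE (H.bddSup_dirDeriv e)
    (H.bddSup_dirDeriv_dirDeriv e e)
  obtain ⟨a, ha⟩ := term (dirX θ)
  obtain ⟨b, hb⟩ := term (dirY θ)
  obtain ⟨c, hc⟩ := term dirT
  obtain ⟨K, -, hK⟩ := (H.bddSup_dirDeriv dirT).exists_pos
  refine ⟨max 1 (4 * Λ + C₁ * (a + b + c + K) + 2), le_max_left _ _, fun i x => ?_⟩
  refine le_trans (hT (H.sol i) (H.pos i) (fun x => (le_abs_self _).trans (hΛ i x))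
    (fun x => ?_) x) (le_max_right _ _)
  have drift := (abs_le.1 (hK i x)).1
  rw [traceLowerBound]
  linarith [ha i x, hb i x, hc i x]

lemma exists_coeff_bounds : ∃ M, 1 ≤ M ∧ ∀ i x, (1 + opXX θ (u i)) x ≤ M ∧
    |opXY θ (u i) x| ≤ M ∧ |opXT θ (u i) x| ≤ M ∧ 0 < invXX θ (u i) x ∧
      invXX θ (u i) x ≤ M := by
  obtain ⟨M, hM1, hM⟩ := H.exists_ellipticTrace_le
  obtain ⟨l, hl, hl1, hlE⟩ := H.exists_pos_le
  refine ⟨M / l, (one_le_div hl).2 (hl1.trans hM1), fun i x => ?_⟩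
  have hMl : M ≤ M / l := le_div_self (by linarith) hl hl1
  have hA := (H.sol i).pos x
  have hB := (H.sol i).pos_opYT (H.pos i) x
  have hAB := hM i x
  rw [ellipticTrace_apply] at hAB
  have hdet := (H.sol i).det_apply x
  have hE := hlE i x
  have hm : (1 + opXX θ (u i)) x * invXX θ (u i) x = 1 := by
    rw [← mul_apply, (H.sol i).mul_invXX, one_apply]
  have hm0 : 0 < invXX θ (u i) x := pos_of_mul_pos_right (hm ▸ one_pos) hA.le
  have mixed_sq : opXY θ (u i) x ^ 2 + opXT θ (u i) x ^ 2 ≤ M ^ 2 := by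
    nlinarith [mul_pos hA hB]
  refine ⟨by linarith, ?_, ?_, hm0, ?_⟩
  · exact (abs_le_of_sq_le_sq (by nlinarith [sq_nonneg (opXT θ (u i) x)]) (by linarith)).trans hMl
  · exact (abs_le_of_sq_le_sq (by nlinarith [sq_nonneg (opXY θ (u i) x)]) (by linarith)).trans hMl
  · rw [le_div_iff₀ hl]
    have h1 : E i x * invXX θ (u i) x = (1 + opYT θ (u i)) x - invXX θ (u i) x *
        (opXY θ (u i) x * opXY θ (u i) x + opXT θ (u i) x * opXT θ (u i) x) :=
      DFunLike.congr_fun (H.sol i).mul_invXX_eq x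
    nlinarith [mul_nonneg hm0.le (add_nonneg (mul_self_nonneg (opXY θ (u i) x))
      (mul_self_nonneg (opXT θ (u i) x))), mul_le_mul_of_nonneg_right hE hm0.le]

lemma bddSup_one_add_opXX : BddSup fun i => 1 + opXX θ (u i) := by
  obtain ⟨M, -, hM⟩ := H.exists_coeff_bounds
  exact ⟨M, fun i x => (abs_of_pos ((H.sol i).pos x)).trans_le (hM i x).1⟩

lemma bddSup_opXY : BddSup fun i => opXY θ (u i) := by
  obtain ⟨M, -, hM⟩ := H.exists_coeff_bounds
  exact ⟨M, fun i x => (hM i x).2.1⟩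

lemma bddSup_opXT : BddSup fun i => opXT θ (u i) := by
  obtain ⟨M, -, hM⟩ := H.exists_coeff_bounds
  exact ⟨M, fun i x => (hM i x).2.2.1⟩

lemma bddSup_invXX : BddSup fun i => invXX θ (u i) := by
  obtain ⟨M, -, hM⟩ := H.exists_coeff_bounds
  exact ⟨M, fun i x => (abs_of_pos (hM i x).2.2.2.1).trans_le (hM i x).2.2.2.2⟩

lemma weightedMean_nonneg (i : ι) (f : TorusFunction) (hf : ∀ x, 0 ≤ f x) :
    0 ≤ weightedMean θ (u i) f :=
  mean_nonneg fun x => mul_nonneg ((H.sol i).pos x).le (hf x)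

lemma weightedMean_frame (i : ι) (j : Fin 3) (f : TorusFunction) :
    weightedMean θ (u i) (frame θ (u i) j f) = 0 :=
  (H.sol i).mean_mul_frame f j

lemma exists_weightedMean_comparison : ∃ M, 1 ≤ M ∧ ∀ i (f : TorusFunction), (∀ x, 0 ≤ f x) →
    weightedMean θ (u i) f ≤ M * mean f ∧ mean f ≤ M * weightedMean θ (u i) f := by
  obtain ⟨M, h1, hM⟩ := H.exists_coeff_bounds
  refine ⟨M, h1, fun i f hf => ⟨?_, ?_⟩⟩
  · rw [weightedMean_apply, ← smul_eq_mul (a := M), ← map_smul]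
    exact mean_mono fun x => mul_le_mul_of_nonneg_right (hM i x).1 (hf x)
  · rw [weightedMean_apply, ← smul_eq_mul (a := M), ← map_smul]
    refine mean_mono fun x => ?_
    have hinv : (1 + opXX θ (u i)) x * invXX θ (u i) x = 1 :=
      DFunLike.congr_fun (H.sol i).mul_invXX x
    calc f x = invXX θ (u i) x * ((1 + opXX θ (u i)) x * f x) := by
          linear_combination -f x * hinv
      _ ≤ _ := mul_le_mul_of_nonneg_right (hM i x).2.2.2.2
          (mul_nonneg ((H.sol i).pos x).le (hf x))

lemma bddL2_of_weightedMean_le {C : ℝ} (h : ∀ i, weightedMean θ (u i) (f i * f i) ≤ C) :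
    BddL2 f := by
  obtain ⟨M, h1, hM⟩ := H.exists_weightedMean_comparison
  refine BddL2.of_mean_mul_self_le (C := M * C) fun i =>
    (hM i _ fun x => mul_self_nonneg (f i x)).2.trans ?_
  exact mul_le_mul_of_nonneg_left (h i) (by linarith)

lemma exists_weightedMean_mul_self_le (h : BddL2 f) :
    ∃ C, 0 ≤ C ∧ ∀ i, weightedMean θ (u i) (f i * f i) ≤ C := by
  obtain ⟨M, h1, hM⟩ := H.exists_weightedMean_comparison
  obtain ⟨C, hC0, hC⟩ := h.exists_mean_mul_self_le
  exact ⟨M * C, by positivity, fun i => (hM i _ fun x => mul_self_nonneg (f i x)).1.trans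
    (mul_le_mul_of_nonneg_left (hC i) (by linarith))⟩

lemma bddL2_frameDeriv_of_frameLinearization {q γ β : ι → TorusFunction} (e : Fin 3)
    (hq : ∀ i, frameLinearization θ (E i) (u i) (q i) =
      frame θ (u i) e (γ i) + frame θ (u i) 0 (β i))
    (hγ : BddL2 γ) (hβ : BddL2 β) (j : Fin 3) : BddL2 (frameDeriv θ u j q) := by
  obtain ⟨l, hl, hl1, hlE⟩ := H.exists_pos_le
  obtain ⟨a, -, ha⟩ := H.exists_weightedMean_mul_self_le hγ
  obtain ⟨b, -, hb⟩ := H.exists_weightedMean_mul_self_le hβ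
  refine H.bddL2_of_weightedMean_le (C := (2 * a + 2 * b) / l ^ 2) fun i => ?_
  have elliptic : ∀ k x, l ≤ (![E i, 1, 1] : Fin 3 → TorusFunction) k x :=
    fun k x => by fin_cases k; exacts [hlE i x, hl1, hl1]
  have energy := sq_mul_functional_sum_le (H.weightedMean_nonneg i) (H.weightedMean_frame i) hl
    elliptic ((frameLinearization_eq_sum _ _ _ _).symm.trans (hq i))
  have le_sum : weightedMean θ (u i) (frame θ (u i) j (q i) * frame θ (u i) j (q i)) ≤
      weightedMean θ (u i) (∑ k, frame θ (u i) k (q i) * frame θ (u i) k (q i)) := by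
    rw [map_sum]
    exact Finset.single_le_sum (f := fun k => weightedMean θ (u i) (frame θ (u i) k (q i) *
      frame θ (u i) k (q i))) (fun k _ => H.weightedMean_nonneg i _ fun x => mul_self_nonneg _)
      (Finset.mem_univ j)
  rw [le_div_iff₀ (by positivity), mul_comm]
  calc _ ≤ _ := mul_le_mul_of_nonneg_left le_sum (sq_nonneg l)
    _ ≤ _ := energy
    _ ≤ _ := by linarith [ha i, hb i]

lemma bddL4_frameDeriv_of_bddL2 (hf : BddSup f) (j : Fin 3)
    (h : BddL2 (frameDeriv θ u j (frameDeriv θ u j f))) : BddL4 (frameDeriv θ u j f) := by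
  obtain ⟨s, -, hs⟩ := hf.exists_pos
  obtain ⟨a, -, ha⟩ := H.exists_weightedMean_mul_self_le h
  refine bddL4_iff.2 (H.bddL2_of_weightedMean_le (C := 9 * s ^ 2 * a) fun i => ?_)
  refine (functional_derivation_pow_four_le (H.weightedMean_nonneg i) (H.weightedMean_frame i j)
    (hs i)).trans ?_
  exact mul_le_mul_of_nonneg_left (ha i) (by positivity)

lemma frameControlled_of_bddL2 (hf : BddSup f)
    (h : ∀ j k, BddL2 (frameDeriv θ u j (frameDeriv θ u k f))) : FrameControlled θ u f :=
  ⟨hf, fun j => H.bddL4_frameDeriv_of_bddL2 hf j (h j j), h⟩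

lemma bddSup_frameBase (k : Fin 3) : BddSup fun i => frameBase θ k (E i) := by
  fin_cases k
  · exact ⟨0, fun i x => by simp [frameBase]⟩
  · exact H.bddSup_dirDeriv (dirY θ)
  · exact H.bddSup_dirDeriv dirT

lemma bddSup_frameBase_dirDeriv (e : E3) (k : Fin 3) :
    BddSup fun i => frameBase θ k (dirDeriv e (E i)) := by
  fin_cases k
  · exact ⟨0, fun i x => by simp [frameBase]⟩
  · exact H.bddSup_dirDeriv_dirDeriv (dirY θ) e
  · exact H.bddSup_dirDeriv_dirDeriv dirT e

lemma bddSup_frameCoeff (k : Fin 3) : BddSup fun i => frameCoeff θ (u i) k := by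
  fin_cases k
  · exact H.bddSup_invXX
  · exact (H.bddSup_invXX.mul H.bddSup_opXY).neg
  · exact (H.bddSup_invXX.mul H.bddSup_opXT).neg

lemma bddSup_frameDeriv (j : Fin 3) : BddSup (frameDeriv θ u j E) :=
  (H.bddSup_frameBase j).add ((H.bddSup_frameCoeff j).mul (H.bddSup_dirDeriv (dirX θ)))

lemma bddSup_frameDeriv_dirDeriv (j : Fin 3) (e : E3) :
    BddSup (frameDeriv θ u j fun i => dirDeriv e (E i)) :=
  (H.bddSup_frameBase_dirDeriv e j).add
    ((H.bddSup_frameCoeff j).mul (H.bddSup_dirDeriv_dirDeriv (dirX θ) e))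

lemma bddSup_frameDeriv_frameBase (j k : Fin 3) :
    BddSup (frameDeriv θ u j fun i => frameBase θ k (E i)) := by
  fin_cases k
  · exact ⟨0, fun i x => by simp [frameBase, frameDeriv]⟩
  · exact H.bddSup_frameDeriv_dirDeriv j (dirY θ)
  · exact H.bddSup_frameDeriv_dirDeriv j dirT

lemma bddL2_frameDeriv_frameCoeff (j k : Fin 3) :
    BddL2 (frameDeriv θ u j fun i => frameCoeff θ (u i) k) := by
  refine H.bddL2_frameDeriv_of_frameLinearization 0 (γ := 0)
    (β := -(frameDeriv θ u k E * fun i => frameCoeff θ (u i) 0)) (fun i => ?_) BddL2.zero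
    ((H.bddSup_frameDeriv k).mul (H.bddSup_frameCoeff 0)).neg.bddL2 j
  rw [(H.sol i).frameLinearization_frameCoeff]
  simp [frameDeriv]

lemma bddL2_frameDeriv_frameDeriv (j k : Fin 3) :
    BddL2 (frameDeriv θ u j (frameDeriv θ u k E)) := by
  have h : frameDeriv θ u k E = (fun i => frameBase θ k (E i)) +
      (fun i => frameCoeff θ (u i) k) * fun i => dirDeriv (dirX θ) (E i) := rfl
  rw [h, frameDeriv_add, frameDeriv_mul]
  exact (H.bddSup_frameDeriv_frameBase j k).bddL2.add
    (((H.bddSup_frameCoeff k).mul (H.bddSup_frameDeriv_dirDeriv j (dirX θ))).bddL2.add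
      ((H.bddSup_dirDeriv (dirX θ)).mul_bddL2 (H.bddL2_frameDeriv_frameCoeff j k)))

lemma frameControlled_rhs : FrameControlled θ u E :=
  H.frameControlled_of_bddL2 H.bddSup_rhs H.bddL2_frameDeriv_frameDeriv

lemma frameControlled_frameCoeff (l : Fin 3) :
    FrameControlled θ u fun i => frameCoeff θ (u i) l := by
  refine H.frameControlled_of_bddL2 (H.bddSup_frameCoeff l) fun j k => ?_
  refine H.bddL2_frameDeriv_of_frameLinearization 0 (γ := 0)
    (β := frameDeriv θ u k (-(frameDeriv θ u l E * fun i => frameCoeff θ (u i) 0)) +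
      -(frameDeriv θ u k E * frameDeriv θ u 0 fun i => frameCoeff θ (u i) l))
    (fun i => ?_) BddL2.zero ?_ j
  · simp only [frameDeriv]
    rw [(H.sol i).frameLinearization_frame, (H.sol i).frameLinearization_frameCoeff,
      (H.sol i).frame_comm _ k 0]
    simp only [Pi.add_apply, Pi.zero_apply, map_add, map_zero, zero_add]
    rfl
  · rw [frameDeriv_neg, frameDeriv_mul]
    exact (((H.bddSup_frameDeriv l).mul_bddL2 (H.bddL2_frameDeriv_frameCoeff k 0)).add
      ((H.bddSup_frameCoeff 0).mul_bddL2 (H.bddL2_frameDeriv_frameDeriv k l))).neg.add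
      ((H.bddSup_frameDeriv k).mul_bddL2 (H.bddL2_frameDeriv_frameCoeff 0 l)).neg

lemma frameControlled_invXX : FrameControlled θ u fun i => invXX θ (u i) :=
  H.frameControlled_frameCoeff 0

lemma frameDeriv_one_add_opXX (j : Fin 3) : frameDeriv θ u j (fun i => 1 + opXX θ (u i)) =
    -(((fun i => 1 + opXX θ (u i)) * fun i => 1 + opXX θ (u i)) *
      frameDeriv θ u j fun i => invXX θ (u i)) := by
  funext i
  have inv := (H.sol i).mul_invXX
  have deriv_inv := congrArg (frame θ (u i) j) inv
  simp only [Derivation.leibniz, smul_eq_mul, Derivation.map_one_eq_zero] at deriv_inv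
  simp only [frameDeriv, Pi.mul_apply, Pi.neg_apply]
  linear_combination (1 + opXX θ (u i)) * deriv_inv - (frame θ (u i) j (1 + opXX θ (u i))) * inv

lemma frameControlled_one_add_opXX : FrameControlled θ u fun i => 1 + opXX θ (u i) := by
  have hm := H.frameControlled_invXX
  have hA := H.bddSup_one_add_opXX
  have first (j : Fin 3) : BddL4 (frameDeriv θ u j fun i => 1 + opXX θ (u i)) := by
    rw [H.frameDeriv_one_add_opXX]
    exact ((hA.mul hA).mul_bddL4 (hm.bddL4 j)).neg
  refine ⟨hA, first, fun j k => ?_⟩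
  rw [H.frameDeriv_one_add_opXX k, frameDeriv_neg, frameDeriv_mul, frameDeriv_mul]
  refine BddL2.neg (((hA.mul hA).mul_bddL2 (hm.bddL2 j k)).add ?_)
  rw [mul_add, mul_left_comm]
  have cross := hA.mul_bddL2 ((hm.bddL4 k).mul (first j))
  exact cross.add cross

lemma frameControlled_opXY : FrameControlled θ u fun i => opXY θ (u i) := by
  have h : (fun i => opXY θ (u i)) =
      -((fun i => 1 + opXX θ (u i)) * fun i => frameCoeff θ (u i) 1) := by
    funext i
    simp only [frameCoeff, Pi.mul_apply, Pi.neg_apply, Matrix.cons_val]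
    linear_combination -opXY θ (u i) * (H.sol i).mul_invXX
  rw [h]
  exact (H.frameControlled_one_add_opXX.mul (H.frameControlled_frameCoeff 1)).neg

lemma frameControlled_opXT : FrameControlled θ u fun i => opXT θ (u i) := by
  have h : (fun i => opXT θ (u i)) =
      -((fun i => 1 + opXX θ (u i)) * fun i => frameCoeff θ (u i) 2) := by
    funext i
    simp only [frameCoeff, Pi.mul_apply, Pi.neg_apply, Matrix.cons_val]
    linear_combination -opXT θ (u i) * (H.sol i).mul_invXX
  rw [h]
  exact (H.frameControlled_one_add_opXX.mul (H.frameControlled_frameCoeff 2)).neg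

lemma frameControlled_one_add_opYT : FrameControlled θ u fun i => 1 + opYT θ (u i) := by
  have h : (fun i => 1 + opYT θ (u i)) = E * (fun i => invXX θ (u i)) +
      (fun i => invXX θ (u i)) * ((fun i => opXY θ (u i)) * (fun i => opXY θ (u i)) +
        (fun i => opXT θ (u i)) * (fun i => opXT θ (u i))) := by
    funext i
    simp only [Pi.mul_apply, Pi.add_apply]
    linear_combination -(H.sol i).mul_invXX_eq
  have hXY := H.frameControlled_opXY
  have hXT := H.frameControlled_opXT
  rw [h]
  exact (H.frameControlled_rhs.mul H.frameControlled_invXX).add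
    (H.frameControlled_invXX.mul ((hXY.mul hXY).add (hXT.mul hXT)))

lemma controlledDerivation_derivX : ControlledDerivation θ u (derivX θ) := by
  refine ⟨![fun i => 1 + opXX θ (u i), fun _ => algebraMap ℝ TorusFunction 0,
    fun _ => algebraMap ℝ TorusFunction 0], fun k => ?_, fun f => ?_⟩
  · fin_cases k
    exacts [H.frameControlled_one_add_opXX, frameControlled_const _, frameControlled_const _]
  · funext i
    simp only [Matrix.cons_val, Pi.mul_apply, Pi.add_apply, frameDeriv, frame_zero, map_zero]
    linear_combination -(derivX θ (f i)) * (H.sol i).mul_invXX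

lemma controlledDerivation_derivY : ControlledDerivation θ u (derivY θ) := by
  refine ⟨![fun i => opXY θ (u i), fun _ => algebraMap ℝ TorusFunction 1,
    fun _ => algebraMap ℝ TorusFunction 0], fun k => ?_, fun f => ?_⟩
  · fin_cases k
    exacts [H.frameControlled_opXY, frameControlled_const _, frameControlled_const _]
  · funext i
    simp only [Matrix.cons_val, Pi.mul_apply, Pi.add_apply, frameDeriv, frame_zero, frame_one,
      map_zero, map_one]
    ring

lemma controlledDerivation_derivT : ControlledDerivation θ u derivT := by
  refine ⟨![fun i => opXT θ (u i), fun _ => algebraMap ℝ TorusFunction 0,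
    fun _ => algebraMap ℝ TorusFunction 1], fun k => ?_, fun f => ?_⟩
  · fin_cases k
    exacts [H.frameControlled_opXT, frameControlled_const _, frameControlled_const _]
  · funext i
    simp only [Matrix.cons_val, Pi.mul_apply, Pi.add_apply, frameDeriv, frame_zero, frame_two,
      map_zero, map_one]
    ring

end SolutionFamily

/-! ### Estimates for the Laplacian -/

section LaplacianEstimates

variable {τ : Type*} [Fintype τ] (f : SmoothPeriodic τ)

lemma mean_dirDeriv_dirDeriv_mul_self (e e' : EuclideanSpace ℝ τ) :
    mean (dirDeriv e (dirDeriv e' f) * dirDeriv e (dirDeriv e' f)) =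
      mean (dirDeriv e (dirDeriv e f) * dirDeriv e' (dirDeriv e' f)) := by
  rw [eq_comm, mean_dirDeriv_mul, mul_comm, dirDeriv_comm _ e e', mean_dirDeriv_mul, neg_neg,
    dirDeriv_comm f e' e]

variable [DecidableEq τ]

lemma mean_oneSubLap_mul_self : mean (oneSubLap f * oneSubLap f) =
    mean (f * f) - 2 * mean (f * laplacian f) + mean (laplacian f * laplacian f) := by
  have expand : oneSubLap f * oneSubLap f =
      f * f - (2 : ℝ) • (f * laplacian f) + laplacian f * laplacian f := by
    ext x
    simp only [oneSubLap_apply, mul_apply, sub_apply, add_apply, smul_apply]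
    ring
  rw [expand, map_add, map_sub, map_smul, smul_eq_mul]

lemma l2Norm_le_l2Norm_oneSubLap : l2Norm f ≤ l2Norm (oneSubLap f) := by
  refine Real.sqrt_le_sqrt ?_
  linarith [mean_oneSubLap_mul_self f, mean_mul_laplacian_nonpos f,
    mean_mul_self_nonneg (laplacian f)]

lemma l2Norm_laplacian_le_l2Norm_oneSubLap : l2Norm (laplacian f) ≤ l2Norm (oneSubLap f) := by
  refine Real.sqrt_le_sqrt ?_
  linarith [mean_oneSubLap_mul_self f, mean_mul_laplacian_nonpos f, mean_mul_self_nonneg f]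

lemma laplacian_algebraMap (c : ℝ) : laplacian (algebraMap ℝ (SmoothPeriodic τ) c) = 0 := by
  simp [laplacian_apply]

lemma l2Norm_oneSubLap_oneSubLap_le : l2Norm (oneSubLap (oneSubLap f)) ≤
    |mean f| + 3 * l2Norm (laplacian f) + l2Norm (laplacian (laplacian f)) := by
  set c := algebraMap ℝ (SmoothPeriodic τ) (mean f) with hc
  have poincare : l2Norm (f - c) ≤ l2Norm (laplacian f) := by
    have := l2Norm_le_l2Norm_laplacian (f := f - c) (by rw [map_sub, hc, mean_algebraMap, sub_self])
    rwa [map_sub, hc, laplacian_algebraMap, sub_zero] at this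
  have expand : oneSubLap (oneSubLap f) =
      c + (f - c - laplacian f - laplacian f + laplacian (laplacian f)) := by
    simp only [oneSubLap_apply, map_sub]
    ring
  rw [expand, ← l2Norm_algebraMap (ι := τ) (mean f), ← hc]
  linarith [l2Norm_add_le c (f - c - laplacian f - laplacian f + laplacian (laplacian f)),
    l2Norm_add_le (f - c - laplacian f - laplacian f) (laplacian (laplacian f)),
    l2Norm_sub_le (f - c - laplacian f) (laplacian f), l2Norm_sub_le (f - c) (laplacian f)]

end LaplacianEstimates

section SecondDerivatives

variable (θ : ℝ) (h : TorusFunction)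

/-- The orthonormal basis dual to the coordinates `X`, `Y`, `t`. -/
noncomputable def rotatedBasis : Fin 3 → E3 := ![dirX θ, dirY θ, dirT]

lemma laplacian_eq_sum : laplacian h =
    ∑ j, dirDeriv (rotatedBasis θ j) (dirDeriv (rotatedBasis θ j) h) := by
  rw [laplacian_eq θ, Fin.sum_univ_three]
  rfl

lemma mean_laplacian_mul_self : mean (laplacian h * laplacian h) =
    ∑ j, ∑ k, mean (dirDeriv (rotatedBasis θ j) (dirDeriv (rotatedBasis θ k) h) *
      dirDeriv (rotatedBasis θ j) (dirDeriv (rotatedBasis θ k) h)) := by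
  simp only [laplacian_eq_sum θ, Finset.sum_mul_sum, map_sum, mean_dirDeriv_dirDeriv_mul_self]

lemma l2Norm_dirDeriv_dirDeriv_le (j k : Fin 3) :
    l2Norm (dirDeriv (rotatedBasis θ j) (dirDeriv (rotatedBasis θ k) h)) ≤
      l2Norm (laplacian h) := by
  refine Real.sqrt_le_sqrt ?_
  rw [mean_laplacian_mul_self θ]
  refine (Finset.single_le_sum (f := fun k => mean (dirDeriv (rotatedBasis θ j)
    (dirDeriv (rotatedBasis θ k) h) * dirDeriv (rotatedBasis θ j) (dirDeriv (rotatedBasis θ k) h)))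
    (fun _ _ => mean_mul_self_nonneg _) (Finset.mem_univ k)).trans ?_
  exact Finset.single_le_sum (f := fun j => ∑ k, mean (dirDeriv (rotatedBasis θ j)
    (dirDeriv (rotatedBasis θ k) h) * dirDeriv (rotatedBasis θ j) (dirDeriv (rotatedBasis θ k) h)))
    (fun _ _ => Finset.sum_nonneg fun _ _ => mean_mul_self_nonneg _) (Finset.mem_univ j)

lemma mean_mul_self_le_of_mean_eq_zero {f : TorusFunction} (hf : mean f = 0) : mean (f * f) ≤
    mean (derivX θ f * derivX θ f) + mean (derivY θ f * derivY θ f) +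
      mean (derivT f * derivT f) := by
  have poincare := mean_mul_self_le_sum_dirDeriv hf
  rwa [← map_sum, sum_dirDeriv_mul_dirDeriv θ, map_add, map_add] at poincare

lemma l2Norm_derivT_le : l2Norm (derivT h) ≤ l2Norm (laplacian h) := by
  refine Real.sqrt_le_sqrt ?_
  have poincare := mean_mul_self_le_of_mean_eq_zero 0 (f := derivT h) (mean_dirDeriv h dirT)
  have expand := mean_laplacian_mul_self 0 h
  simp only [Fin.sum_univ_three, rotatedBasis, Matrix.cons_val] at expand
  simp only [derivX, derivY, derivT] at poincare ⊢
  linarith [mean_mul_self_nonneg (dirDeriv (dirX 0) (dirDeriv (dirX 0) h)),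
    mean_mul_self_nonneg (dirDeriv (dirX 0) (dirDeriv (dirY 0) h)),
    mean_mul_self_nonneg (dirDeriv (dirY 0) (dirDeriv (dirX 0) h)),
    mean_mul_self_nonneg (dirDeriv (dirY 0) (dirDeriv (dirY 0) h)),
    mean_mul_self_nonneg (dirDeriv dirT (dirDeriv (dirX 0) h)),
    mean_mul_self_nonneg (dirDeriv dirT (dirDeriv (dirY 0) h))]

lemma laplacian_opXX : laplacian (opXX θ h) = opXX θ (laplacian h) := by
  simp only [opXX_apply, derivX, dirDeriv_laplacian]

lemma laplacian_opYT : laplacian (opYT θ h) = opYT θ (laplacian h) := by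
  simp only [opYT_apply, derivY, derivT, dirDeriv_laplacian, map_add]

lemma laplacian_opXY : laplacian (opXY θ h) = opXY θ (laplacian h) := by
  simp only [opXY_apply, derivX, derivY, dirDeriv_laplacian]

lemma laplacian_opXT : laplacian (opXT θ h) = opXT θ (laplacian h) := by
  simp only [opXT_apply, derivX, derivT, dirDeriv_laplacian]

lemma l2Norm_opXX_le : l2Norm (opXX θ h) ≤ 3 * l2Norm (laplacian h) := by
  linarith [show l2Norm (opXX θ h) ≤ _ from l2Norm_dirDeriv_dirDeriv_le θ h 0 0,
    l2Norm_nonneg (laplacian h)]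

lemma l2Norm_opYT_le : l2Norm (opYT θ h) ≤ 3 * l2Norm (laplacian h) := by
  rw [opYT_apply]
  linarith [l2Norm_add_le (derivY θ (derivY θ h) + derivT (derivT h)) (derivT h),
    l2Norm_add_le (derivY θ (derivY θ h)) (derivT (derivT h)), l2Norm_derivT_le h,
    show l2Norm (derivY θ (derivY θ h)) ≤ _ from l2Norm_dirDeriv_dirDeriv_le θ h 1 1,
    show l2Norm (derivT (derivT h)) ≤ _ from l2Norm_dirDeriv_dirDeriv_le θ h 2 2]

lemma l2Norm_opXY_le : l2Norm (opXY θ h) ≤ 3 * l2Norm (laplacian h) := by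
  linarith [show l2Norm (opXY θ h) ≤ _ from l2Norm_dirDeriv_dirDeriv_le θ h 0 1,
    l2Norm_nonneg (laplacian h)]

lemma l2Norm_opXT_le : l2Norm (opXT θ h) ≤ 3 * l2Norm (laplacian h) := by
  linarith [show l2Norm (opXT θ h) ≤ _ from l2Norm_dirDeriv_dirDeriv_le θ h 0 2,
    l2Norm_nonneg (laplacian h)]

lemma linearization_algebraMap (u : TorusFunction) (c : ℝ) :
    linearization θ u (algebraMap ℝ TorusFunction c) = 0 := by
  simp [linearization, opXX_apply, opYT_apply, opXY_apply, opXT_apply]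

end SecondDerivatives

/-! ### The linearized equation: second derivatives -/

variable {ι : Type*}

namespace SolutionFamily

variable {θ : ℝ} {E u : ι → TorusFunction} (H : SolutionFamily θ E u)
include H

lemma weightedMean_energy (i : ι) (h : TorusFunction) :
    weightedMean θ (u i) (∑ j, (![E i, 1, 1] : Fin 3 → TorusFunction) j *
      (frame θ (u i) j h * frame θ (u i) j h)) = -mean (h * linearization θ (u i) h) := by
  rw [← neg_eq_iff_eq_neg, ← functional_divergence_mul_self (H.weightedMean_frame i) (d := 2),
    ← frameLinearization_eq_sum, weightedMean_apply, ← mul_assoc,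
    (H.sol i).mul_frameLinearization, mul_comm]

lemma exists_mean_frame_mul_self_le : ∃ K, 0 ≤ K ∧ ∀ i h j,
    mean (frame θ (u i) j h * frame θ (u i) j h) ≤
      K * (l2Norm h * l2Norm (linearization θ (u i) h)) := by
  obtain ⟨l, hl, hl1, hlE⟩ := H.exists_pos_le
  obtain ⟨M, hM, comparison⟩ := H.exists_weightedMean_comparison
  refine ⟨M / l, by positivity, fun i h j => ?_⟩
  have elliptic : ∀ k x, l ≤ (![E i, 1, 1] : Fin 3 → TorusFunction) k x :=
    fun k x => by fin_cases k; exacts [hlE i x, hl1, hl1]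
  have energy : l * weightedMean θ (u i) (frame θ (u i) j h * frame θ (u i) j h) ≤
      l2Norm h * l2Norm (linearization θ (u i) h) := by
    calc l * weightedMean θ (u i) (frame θ (u i) j h * frame θ (u i) j h)
        = weightedMean θ (u i) (l • (frame θ (u i) j h * frame θ (u i) j h)) := by
          rw [map_smul, smul_eq_mul]
      _ ≤ weightedMean θ (u i) (∑ k, (![E i, 1, 1] : Fin 3 → TorusFunction) k *
            (frame θ (u i) k h * frame θ (u i) k h)) := by
          refine functional_mono (H.weightedMean_nonneg i) fun x => ?_
          rw [sum_apply]
          refine (mul_le_mul_of_nonneg_right (elliptic j x) (mul_self_nonneg _)).trans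
            (Finset.single_le_sum (f := fun k => ((![E i, 1, 1] : Fin 3 → TorusFunction) k *
              (frame θ (u i) k h * frame θ (u i) k h)) x) (fun k _ => ?_) (Finset.mem_univ j))
          exact mul_nonneg (hl.le.trans (elliptic k x)) (mul_self_nonneg _)
      _ = -mean (h * linearization θ (u i) h) := H.weightedMean_energy i h
      _ ≤ _ := by linarith [(abs_le.1 (abs_mean_mul_le h (linearization θ (u i) h))).1]
  calc mean (frame θ (u i) j h * frame θ (u i) j h)
      ≤ M * weightedMean θ (u i) (frame θ (u i) j h * frame θ (u i) j h) :=
        (comparison i _ fun x => mul_self_nonneg (frame θ (u i) j h x)).2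
    _ = M / l * (l * weightedMean θ (u i) (frame θ (u i) j h * frame θ (u i) j h)) := by
        field_simp
    _ ≤ _ := mul_le_mul_of_nonneg_left energy (by positivity)

lemma exists_frame_poincare : ∃ M, 0 < M ∧ ∀ i (h : TorusFunction) Q, mean h = 0 →
    (∀ j, l2Norm (frame θ (u i) j h) ≤ Q) → l2Norm h ≤ M * Q := by
  obtain ⟨M, hM1, hM⟩ := H.exists_coeff_bounds
  refine ⟨3 * M, by positivity, fun i h Q hh hQ => ?_⟩
  have Q_nonneg : 0 ≤ Q := (l2Norm_nonneg _).trans (hQ 0)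
  have derivX_le : l2Norm (derivX θ h) ≤ M * Q := by
    have : derivX θ h = (1 + opXX θ (u i)) * frame θ (u i) 0 h := by
      rw [frame_zero]
      linear_combination -(derivX θ h) * (H.sol i).mul_invXX
    rw [this]
    exact (l2Norm_mul_le fun x => (abs_of_pos ((H.sol i).pos x)).trans_le (hM i x).1).trans
      (mul_le_mul_of_nonneg_left (hQ 0) (by linarith))
  have derivY_le : l2Norm (derivY θ h) ≤ 2 * M * Q := by
    have : derivY θ h = frame θ (u i) 1 h + opXY θ (u i) * frame θ (u i) 0 h := by
      rw [frame_zero, frame_one]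
      ring
    rw [this]
    nlinarith [l2Norm_add_le (frame θ (u i) 1 h) (opXY θ (u i) * frame θ (u i) 0 h), hQ 0, hQ 1,
      l2Norm_mul_le (g := frame θ (u i) 0 h) fun x => (hM i x).2.1]
  have derivT_le : l2Norm (derivT h) ≤ 2 * M * Q := by
    have : derivT h = frame θ (u i) 2 h + opXT θ (u i) * frame θ (u i) 0 h := by
      rw [frame_zero, frame_two]
      ring
    rw [this]
    nlinarith [l2Norm_add_le (frame θ (u i) 2 h) (opXT θ (u i) * frame θ (u i) 0 h), hQ 0, hQ 2,
      l2Norm_mul_le (g := frame θ (u i) 0 h) fun x => (hM i x).2.2.1]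
  have poincare := mean_mul_self_le_of_mean_eq_zero θ hh
  simp only [← l2Norm_sq] at poincare
  refine le_of_sq_le_sq ?_ (by positivity)
  linarith [pow_le_pow_left₀ (l2Norm_nonneg _) derivX_le 2,
    pow_le_pow_left₀ (l2Norm_nonneg _) derivY_le 2, pow_le_pow_left₀ (l2Norm_nonneg _) derivT_le 2]

lemma exists_l2Norm_le_l2Norm_linearization : ∃ K, 0 ≤ K ∧ ∀ i (h : TorusFunction),
    mean h = 0 → l2Norm h ≤ K * l2Norm (linearization θ (u i) h) := by
  obtain ⟨K, hK0, energy⟩ := H.exists_mean_frame_mul_self_le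
  obtain ⟨M, hM, poincare⟩ := H.exists_frame_poincare
  refine ⟨M ^ 2 * K, by positivity, fun i h hh => ?_⟩
  have n_nonneg := l2Norm_nonneg h
  have f_nonneg := l2Norm_nonneg (linearization θ (u i) h)
  have n_le := poincare i h _ hh fun j => Real.sqrt_le_sqrt (energy i h j)
  have n_sq_le : l2Norm h * l2Norm h ≤
      l2Norm h * (M ^ 2 * K * l2Norm (linearization θ (u i) h)) := by
    calc l2Norm h * l2Norm h = l2Norm h ^ 2 := (sq _).symm
      _ ≤ (M * √(K * (l2Norm h * l2Norm (linearization θ (u i) h)))) ^ 2 :=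
        pow_le_pow_left₀ n_nonneg n_le 2
      _ = _ := by
        rw [mul_pow, Real.sq_sqrt (by positivity)]
        ring
  rcases n_nonneg.eq_or_lt with n_eq | n_pos
  · rw [← n_eq]
    positivity
  · exact le_of_mul_le_mul_left n_sq_le n_pos

lemma exists_l2Norm_frame_le_l2Norm_linearization : ∃ K, 0 ≤ K ∧ ∀ i (h : TorusFunction),
    mean h = 0 → ∀ j, l2Norm (frame θ (u i) j h) ≤ K * l2Norm (linearization θ (u i) h) := by
  obtain ⟨K, hK0, energy⟩ := H.exists_mean_frame_mul_self_le
  obtain ⟨M, hM0, hM⟩ := H.exists_l2Norm_le_l2Norm_linearization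
  refine ⟨√(K * M), Real.sqrt_nonneg _, fun i h hh j => ?_⟩
  have f_nonneg := l2Norm_nonneg (linearization θ (u i) h)
  refine Real.sqrt_le_iff.2 ⟨by positivity, (energy i h j).trans ?_⟩
  rw [mul_pow, Real.sq_sqrt (by positivity), sq, mul_assoc, ← mul_assoc M]
  exact mul_le_mul_of_nonneg_left (mul_le_mul_of_nonneg_right (hM i h hh) f_nonneg) hK0

lemma bddL2_laplacian {h : ι → TorusFunction} (mean_eq : ∀ i, mean (h i) = 0) (hb : BddSup h)
    (hf : BddL2 fun i => linearization θ (u i) (h i)) : BddL2 fun i => laplacian (h i) := by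
  obtain ⟨K, hK0, hK⟩ := H.exists_l2Norm_frame_le_l2Norm_linearization
  obtain ⟨C, hC⟩ := id hf
  have first (j : Fin 3) : BddL2 (frameDeriv θ u j h) :=
    ⟨K * C, fun i => (hK i (h i) (mean_eq i) j).trans (mul_le_mul_of_nonneg_left (hC i) hK0)⟩
  have frameLinearization_eq (i : ι) : frameLinearization θ (E i) (u i) (h i) =
      invXX θ (u i) * linearization θ (u i) (h i) := by
    rw [← (H.sol i).mul_frameLinearization]
    linear_combination -(frameLinearization θ (E i) (u i) (h i)) * (H.sol i).mul_invXX
  have controlled : FrameControlled θ u h := by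
    refine H.frameControlled_of_bddL2 hb fun j k => H.bddL2_frameDeriv_of_frameLinearization k
      (γ := (fun i => invXX θ (u i)) * fun i => linearization θ (u i) (h i))
      (β := -(frameDeriv θ u k E * frameDeriv θ u 0 h)) (fun i => ?_)
      (H.bddSup_invXX.mul_bddL2 hf) ((H.bddSup_frameDeriv k).mul_bddL2 (first 0)).neg j
    simp only [frameDeriv, Pi.mul_apply, Pi.neg_apply]
    rw [(H.sol i).frameLinearization_frame, frameLinearization_eq]
  simp only [laplacian_eq θ]
  exact ((H.controlledDerivation_derivX.bddL2 H.controlledDerivation_derivX controlled).add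
    (H.controlledDerivation_derivY.bddL2 H.controlledDerivation_derivY controlled)).add
    (H.controlledDerivation_derivT.bddL2 H.controlledDerivation_derivT controlled)

-- A bound uniform over all normalized `h` is a bound for the family indexed by the pairs `(i, h)`.
lemma exists_l2Norm_laplacian_le_add_supNorm : ∃ K, 0 ≤ K ∧ ∀ i (h : TorusFunction), mean h = 0 →
    l2Norm (laplacian h) ≤ K * (l2Norm (linearization θ (u i) h) + supNorm h) := by
  obtain ⟨K, hK⟩ := (H.comp fun p : {p : ι × TorusFunction // mean p.2 = 0 ∧
      l2Norm (linearization θ (u p.1) p.2) ≤ 1 ∧ supNorm p.2 ≤ 1} => p.1.1).bddL2_laplacian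
    (h := fun p => p.1.2) (fun p => p.2.1) ⟨1, fun p x => (abs_le_supNorm _ x).trans p.2.2.2⟩
    ⟨1, fun p => p.2.2.1⟩
  refine ⟨|K|, abs_nonneg K, fun i h hh => ?_⟩
  have f_nonneg := l2Norm_nonneg (linearization θ (u i) h)
  have sup_nonneg := supNorm_nonneg h
  rcases (add_nonneg f_nonneg sup_nonneg).eq_or_lt with c_eq | c_pos
  · have h_eq : h = 0 := by
      ext x
      exact abs_eq_zero.1 (le_antisymm (by linarith [abs_le_supNorm h x]) (abs_nonneg _))
    rw [h_eq, map_zero, l2Norm_zero]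
    exact mul_nonneg (abs_nonneg _) (add_nonneg (l2Norm_nonneg _) (supNorm_nonneg _))
  · set c := l2Norm (linearization θ (u i) h) + supNorm h
    have abs_inv : |c⁻¹| = c⁻¹ := abs_of_pos (inv_pos.2 c_pos)
    have scaled := hK ⟨(i, c⁻¹ • h), by rw [map_smul, hh, smul_zero], by
        rw [linearization_smul, l2Norm_smul, abs_inv, inv_mul_le_one₀ c_pos]
        linarith, supNorm_le fun x => by
        rw [smul_apply, abs_mul, abs_inv, inv_mul_le_one₀ c_pos]
        linarith [abs_le_supNorm h x]⟩
    simp only [map_smul, l2Norm_smul, abs_inv] at scaled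
    rw [inv_mul_le_iff₀ c_pos, mul_comm] at scaled
    exact scaled.trans (mul_le_mul_of_nonneg_right (le_abs_self K) c_pos.le)

lemma exists_l2Norm_laplacian_le_l2Norm_linearization : ∃ K, 0 ≤ K ∧ ∀ i (h : TorusFunction),
    mean h = 0 → l2Norm (laplacian h) ≤ K * l2Norm (linearization θ (u i) h) := by
  obtain ⟨K, hK0, hK⟩ := H.exists_l2Norm_laplacian_le_add_supNorm
  obtain ⟨K₁, hK₁0, hK₁⟩ := H.exists_l2Norm_le_l2Norm_linearization
  obtain ⟨C, hC0, interpolation⟩ :=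
    exists_abs_le_l2Norm_laplacian_add (ε := 1 / (2 * (K + 1))) (by positivity)
  refine ⟨2 * (K * (1 + C * K₁)), by positivity, fun i h hh => ?_⟩
  have sup_le : supNorm h ≤ 1 / (2 * (K + 1)) * l2Norm (laplacian h) +
      C * (K₁ * l2Norm (linearization θ (u i) h)) :=
    supNorm_le fun x => (interpolation h x).trans (by gcongr; exact hK₁ i h hh)
  have absorb : K * (1 / (2 * (K + 1))) * l2Norm (laplacian h) ≤ 1 / 2 * l2Norm (laplacian h) := by
    refine mul_le_mul_of_nonneg_right ?_ (l2Norm_nonneg _)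
    rw [mul_one_div, div_le_div_iff₀ (by positivity) (by positivity)]
    linarith
  linarith [hK i h hh, mul_le_mul_of_nonneg_left sup_le hK0]

end SolutionFamily

/-! ### The linearized equation: fourth derivatives -/

section Products

variable {τ : Type*} [Fintype τ]

lemma sq_l2Norm_mul_le (f g : SmoothPeriodic τ) :
    l2Norm (f * g) ^ 2 ≤ l2Norm (f * f) * l2Norm (g * g) := by
  rw [l2Norm_sq, mul_mul_mul_comm]
  exact (le_abs_self _).trans (abs_mean_mul_le _ _)

lemma l2Norm_dirDeriv_mul_self_le {e : EuclideanSpace ℝ τ} {f : SmoothPeriodic τ} {s : ℝ}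
    (hs : 0 ≤ s) (hf : ∀ x, |f x| ≤ s) :
    l2Norm (dirDeriv e f * dirDeriv e f) ≤ 3 * s * l2Norm (dirDeriv e (dirDeriv e f)) := by
  refine Real.sqrt_le_iff.2 ⟨mul_nonneg (by positivity) (l2Norm_nonneg _), ?_⟩
  calc mean (dirDeriv e f * dirDeriv e f * (dirDeriv e f * dirDeriv e f))
      ≤ 9 * s ^ 2 * mean (dirDeriv e (dirDeriv e f) * dirDeriv e (dirDeriv e f)) :=
        functional_derivation_pow_four_le (fun f hf => mean_nonneg hf)
          (fun f => mean_dirDeriv f e) hf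
    _ = (3 * s * l2Norm (dirDeriv e (dirDeriv e f))) ^ 2 := by
        rw [← l2Norm_sq]
        ring

end Products

lemma exists_l2Norm_mul_dirDeriv_le {F : ι → TorusFunction} (hF : BddL4 F) (e : E3) {ε : ℝ}
    (hε : 0 < ε) : ∃ C, 0 ≤ C ∧ ∀ i (k : TorusFunction),
      l2Norm (F i * dirDeriv e k) ≤ C * supNorm k + ε * l2Norm (dirDeriv e (dirDeriv e k)) := by
  obtain ⟨K, hK⟩ := bddL4_iff.1 hF
  refine ⟨3 * |K| / (2 * ε), by positivity, fun i k => ?_⟩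
  have sup_nonneg := supNorm_nonneg k
  have n_nonneg := l2Norm_nonneg (dirDeriv e (dirDeriv e k))
  have interpolation : l2Norm (dirDeriv e k * dirDeriv e k) ≤
      3 * supNorm k * l2Norm (dirDeriv e (dirDeriv e k)) :=
    l2Norm_dirDeriv_mul_self_le sup_nonneg k.abs_le_supNorm
  refine Real.sqrt_le_iff.2 ⟨by positivity, ?_⟩
  calc mean (F i * dirDeriv e k * (F i * dirDeriv e k))
      ≤ l2Norm (F i * F i) * l2Norm (dirDeriv e k * dirDeriv e k) :=
        (l2Norm_sq _).symm.trans_le (sq_l2Norm_mul_le _ _)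
    _ ≤ |K| * (3 * supNorm k * l2Norm (dirDeriv e (dirDeriv e k))) :=
        mul_le_mul ((hK i).trans (le_abs_self K)) interpolation (l2Norm_nonneg _) (abs_nonneg _)
    _ = 2 * (3 * |K| / (2 * ε) * supNorm k) * (ε * l2Norm (dirDeriv e (dirDeriv e k))) := by
        field_simp
    _ ≤ (3 * |K| / (2 * ε) * supNorm k + ε * l2Norm (dirDeriv e (dirDeriv e k))) ^ 2 := by
        nlinarith [sq_nonneg (3 * |K| / (2 * ε) * supNorm k),
          sq_nonneg (ε * l2Norm (dirDeriv e (dirDeriv e k)))]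

/-- Families of operators that are uniformly small relative to the bi-Laplacian, up to a multiple
of the Laplacian. -/
def LowerOrder (T : ι → TorusFunction → TorusFunction) : Prop :=
  ∀ ε > 0, ∃ C, 0 ≤ C ∧ ∀ i h,
    l2Norm (T i h) ≤ ε * l2Norm (laplacian (laplacian h)) + C * l2Norm (laplacian h)

lemma LowerOrder.add {S T : ι → TorusFunction → TorusFunction} (hS : LowerOrder S)
    (hT : LowerOrder T) : LowerOrder fun i h => S i h + T i h := fun ε hε => by
  obtain ⟨C, hC0, hC⟩ := hS (ε / 2) (by positivity)
  obtain ⟨K, hK0, hK⟩ := hT (ε / 2) (by positivity)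
  exact ⟨C + K, by positivity, fun i h => by
    linarith [l2Norm_add_le (S i h) (T i h), hC i h, hK i h]⟩

lemma LowerOrder.smul {T : ι → TorusFunction → TorusFunction} (hT : LowerOrder T) (c : ℝ) :
    LowerOrder fun i h => c • T i h := fun ε hε => by
  obtain ⟨K, hK0, hK⟩ := hT (ε / (|c| + 1)) (by positivity)
  refine ⟨|c| * K, by positivity, fun i h => ?_⟩
  have scale_le : |c| * (ε / (|c| + 1)) * l2Norm (laplacian (laplacian h)) ≤
      ε * l2Norm (laplacian (laplacian h)) := by
    refine mul_le_mul_of_nonneg_right ?_ (l2Norm_nonneg _)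
    rw [mul_div_assoc', div_le_iff₀ (by positivity)]
    nlinarith
  rw [l2Norm_smul]
  linarith [mul_le_mul_of_nonneg_left (hK i h) (abs_nonneg c)]

/-- The remainder `∂_e²(w g) - w ∂_e² g` of the Leibniz rule. -/
noncomputable def leibnizRemainder (e : E3) (w g : TorusFunction) : TorusFunction :=
  dirDeriv e (dirDeriv e w) * g + (2 : ℝ) • (dirDeriv e w * dirDeriv e g)

lemma dirDeriv_dirDeriv_mul (e : E3) (w g : TorusFunction) : dirDeriv e (dirDeriv e (w * g)) =
    w * dirDeriv e (dirDeriv e g) + leibnizRemainder e w g := by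
  rw [leibnizRemainder, two_smul]
  simp only [Derivation.leibniz, smul_eq_mul, map_add]
  ring

lemma exists_l2Norm_leibnizRemainder_le {e : E3} {w : ι → TorusFunction}
    (h4 : BddL4 fun i => dirDeriv e (w i)) (h2 : BddL2 fun i => dirDeriv e (dirDeriv e (w i)))
    {ε : ℝ} (hε : 0 < ε) : ∃ C, 0 < C ∧ ∀ i (g : TorusFunction),
      l2Norm (leibnizRemainder e (w i) g) ≤
        C * supNorm g + ε * l2Norm (dirDeriv e (dirDeriv e g)) := by
  obtain ⟨K, hK⟩ := h2
  obtain ⟨C, hC0, hC⟩ := exists_l2Norm_mul_dirDeriv_le h4 e (ε := ε / 2) (by positivity)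
  refine ⟨|K| + 2 * C + 1, by positivity, fun i g => ?_⟩
  have zeroth : l2Norm (dirDeriv e (dirDeriv e (w i)) * g) ≤ supNorm g * |K| := by
    rw [mul_comm]
    exact (l2Norm_mul_le g.abs_le_supNorm).trans
      (mul_le_mul_of_nonneg_left ((hK i).trans (le_abs_self K)) (supNorm_nonneg _))
  have triangle := l2Norm_add_le (dirDeriv e (dirDeriv e (w i)) * g)
    ((2 : ℝ) • (dirDeriv e (w i) * dirDeriv e g))
  rw [l2Norm_smul, abs_two] at triangle
  rw [leibnizRemainder]
  linarith [hC i g, supNorm_nonneg g]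

lemma lowerOrder_leibnizRemainder {L : TorusFunction →ₗ[ℝ] TorusFunction}
    (laplacian_comm : ∀ h, laplacian (L h) = L (laplacian h))
    (l2Norm_le : ∀ h, l2Norm (L h) ≤ 3 * l2Norm (laplacian h)) {e : E3}
    (he : ∀ f, l2Norm (dirDeriv e (dirDeriv e f)) ≤ l2Norm (laplacian f)) {w : ι → TorusFunction}
    (h4 : BddL4 fun i => dirDeriv e (w i)) (h2 : BddL2 fun i => dirDeriv e (dirDeriv e (w i))) :
    LowerOrder fun i h => leibnizRemainder e (w i) (L h) := fun ε hε => by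
  obtain ⟨C, hC0, hC⟩ := exists_l2Norm_leibnizRemainder_le h4 h2 (ε := ε / 6) (by positivity)
  obtain ⟨C', hC'0, interpolation⟩ :=
    exists_abs_le_l2Norm_laplacian_add (ε := ε / (6 * C)) (by positivity)
  refine ⟨C * (3 * C'), by positivity, fun i h => ?_⟩
  have laplacian_le : l2Norm (laplacian (L h)) ≤ 3 * l2Norm (laplacian (laplacian h)) := by
    rw [laplacian_comm]
    exact l2Norm_le _
  have sup_le : supNorm (L h) ≤ ε / (6 * C) * (3 * l2Norm (laplacian (laplacian h))) +
      C' * (3 * l2Norm (laplacian h)) :=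
    supNorm_le fun x => (interpolation _ x).trans (by gcongr; exact l2Norm_le h)
  calc l2Norm (leibnizRemainder e (w i) (L h))
      ≤ C * supNorm (L h) + ε / 6 * l2Norm (dirDeriv e (dirDeriv e (L h))) := hC i _
    _ ≤ C * (ε / (6 * C) * (3 * l2Norm (laplacian (laplacian h))) +
          C' * (3 * l2Norm (laplacian h))) + ε / 6 * (3 * l2Norm (laplacian (laplacian h))) := by
        gcongr
        exact (he _).trans laplacian_le
    _ = _ := by
        field_simp
        ring

/-- The commutator of the linearized operator at `u` with `∂_e²`. -/
noncomputable def commutatorTerm (θ : ℝ) (e : E3) (u h : TorusFunction) : TorusFunction :=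
  leibnizRemainder e (1 + opYT θ u) (opXX θ h) + leibnizRemainder e (1 + opXX θ u) (opYT θ h) +
    (-2 : ℝ) • leibnizRemainder e (opXY θ u) (opXY θ h) +
    (-2 : ℝ) • leibnizRemainder e (opXT θ u) (opXT θ h)

lemma dirDeriv_dirDeriv_linearization (θ : ℝ) (e : E3) (u h : TorusFunction) :
    dirDeriv e (dirDeriv e (linearization θ u h)) =
      linearization θ u (dirDeriv e (dirDeriv e h)) + commutatorTerm θ e u h := by
  have two_mul_eq (f : TorusFunction) : 2 * f = (2 : ℝ) • f := by rw [two_smul, two_mul]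
  simp only [linearization, commutatorTerm, two_mul_eq, map_sub, map_add, Derivation.map_smul,
    dirDeriv_dirDeriv_mul, opXX_dirDeriv, opYT_dirDeriv, opXY_dirDeriv, opXT_dirDeriv]
  module

lemma abs_mean_le_l2Norm_linearization_add (θ : ℝ) (u h : TorusFunction) :
    |mean h| ≤ l2Norm (linearization θ u h + algebraMap ℝ TorusFunction (mean h)) := by
  have : mean (linearization θ u h + algebraMap ℝ TorusFunction (mean h)) = mean h := by
    rw [map_add, mean_linearization, mean_algebraMap, zero_add]
  simpa only [this] using
    abs_mean_le_l2Norm (linearization θ u h + algebraMap ℝ TorusFunction (mean h))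

lemma l2Norm_linearization_le (θ : ℝ) (u h : TorusFunction) : l2Norm (linearization θ u h) ≤
    2 * l2Norm (linearization θ u h + algebraMap ℝ TorusFunction (mean h)) := by
  have triangle := l2Norm_sub_le (linearization θ u h + algebraMap ℝ TorusFunction (mean h))
    (algebraMap ℝ TorusFunction (mean h))
  rw [l2Norm_algebraMap, add_sub_cancel_right] at triangle
  linarith [abs_mean_le_l2Norm_linearization_add θ u h]

namespace SolutionFamily

variable {θ : ℝ} {E u : ι → TorusFunction} (H : SolutionFamily θ E u)
include H

lemma lowerOrder_commutatorTerm {e : E3}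
    (he : ∀ f, l2Norm (dirDeriv e (dirDeriv e f)) ≤ l2Norm (laplacian f))
    (hδ : ControlledDerivation θ u (dirDeriv e)) :
    LowerOrder fun i h => commutatorTerm θ e (u i) h := by
  have remainder {w : ι → TorusFunction} (hw : FrameControlled θ u w)
      {L : TorusFunction →ₗ[ℝ] TorusFunction} (hL : ∀ h, laplacian (L h) = L (laplacian h))
      (hL' : ∀ h, l2Norm (L h) ≤ 3 * l2Norm (laplacian h)) :
      LowerOrder fun i h => leibnizRemainder e (w i) (L h) :=
    lowerOrder_leibnizRemainder hL hL' he (hδ.bddL4 hw) (hδ.bddL2 hδ hw)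
  exact (((remainder H.frameControlled_one_add_opYT (laplacian_opXX θ) (l2Norm_opXX_le θ)).add
    (remainder H.frameControlled_one_add_opXX (laplacian_opYT θ) (l2Norm_opYT_le θ))).add
    ((remainder H.frameControlled_opXY (laplacian_opXY θ) (l2Norm_opXY_le θ)).smul _)).add
    ((remainder H.frameControlled_opXT (laplacian_opXT θ) (l2Norm_opXT_le θ)).smul _)

lemma exists_l2Norm_laplacian_laplacian_le : ∃ K, 0 ≤ K ∧ ∀ i (h : TorusFunction), mean h = 0 →
    l2Norm (laplacian (laplacian h)) ≤
      K * (l2Norm (laplacian (linearization θ (u i) h)) + l2Norm (linearization θ (u i) h)) := by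
  obtain ⟨K, hK0, hK⟩ := H.exists_l2Norm_laplacian_le_l2Norm_linearization
  have lowerOrder := ((H.lowerOrder_commutatorTerm (e := dirX θ)
      (fun f => l2Norm_dirDeriv_dirDeriv_le θ f 0 0) H.controlledDerivation_derivX).add
    (H.lowerOrder_commutatorTerm (e := dirY θ)
      (fun f => l2Norm_dirDeriv_dirDeriv_le θ f 1 1) H.controlledDerivation_derivY)).add
    (H.lowerOrder_commutatorTerm (e := dirT)
      (fun f => l2Norm_dirDeriv_dirDeriv_le θ f 2 2) H.controlledDerivation_derivT)
  obtain ⟨C, hC0, hC⟩ := lowerOrder (1 / (2 * (K + 1))) (by positivity)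
  refine ⟨2 * K * (1 + C * K), by positivity, fun i h hh => ?_⟩
  set R := commutatorTerm θ (dirX θ) (u i) h + commutatorTerm θ (dirY θ) (u i) h +
    commutatorTerm θ dirT (u i) h
  set f := linearization θ (u i) h
  have commute : linearization θ (u i) (laplacian h) = laplacian f - R := by
    rw [laplacian_eq θ, laplacian_eq θ, linearization_add, linearization_add]
    simp only [f, R, derivX, derivY, derivT, dirDeriv_dirDeriv_linearization]
    ring
  have absorb : K * (1 / (2 * (K + 1))) * l2Norm (laplacian (laplacian h)) ≤
      1 / 2 * l2Norm (laplacian (laplacian h)) := by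
    refine mul_le_mul_of_nonneg_right ?_ (l2Norm_nonneg _)
    rw [mul_one_div, div_le_div_iff₀ (by positivity) (by positivity)]
    linarith
  have second := mul_le_mul_of_nonneg_left (hK i h hh) (mul_nonneg hK0 hC0)
  have bilaplacian : l2Norm (laplacian (laplacian h)) ≤ K * (l2Norm (laplacian f) +
      (1 / (2 * (K + 1)) * l2Norm (laplacian (laplacian h)) + C * l2Norm (laplacian h))) := by
    refine (hK i (laplacian h) (mean_laplacian h)).trans (mul_le_mul_of_nonneg_left ?_ hK0)
    rw [commute]
    exact (l2Norm_sub_le _ _).trans (add_le_add_right (hC i h) _)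
  have f_nonneg : 0 ≤ K * l2Norm f := mul_nonneg hK0 (l2Norm_nonneg f)
  have laplacian_nonneg : 0 ≤ K * (C * K) * l2Norm (laplacian f) :=
    mul_nonneg (by positivity) (l2Norm_nonneg _)
  linarith

lemma exists_l2Norm_oneSubLap_oneSubLap_le : ∃ K, 0 < K ∧ ∀ i (h : TorusFunction),
    l2Norm (oneSubLap (oneSubLap h)) ≤
      K * l2Norm (oneSubLap (linearization θ (u i) h + algebraMap ℝ TorusFunction (mean h))) := by
  obtain ⟨K, hK0, hK⟩ := H.exists_l2Norm_laplacian_laplacian_le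
  obtain ⟨K₂, hK₂0, hK₂⟩ := H.exists_l2Norm_laplacian_le_l2Norm_linearization
  refine ⟨1 + 3 * (2 * K₂) + 3 * K, by positivity, fun i h => ?_⟩
  set c := algebraMap ℝ TorusFunction (mean h) with hc
  set f := linearization θ (u i) h
  set G := f + c
  have mean_sub : mean (h - c) = 0 := by rw [map_sub, hc, mean_algebraMap, sub_self]
  have linearization_sub_eq : linearization θ (u i) (h - c) = f := by
    rw [linearization_sub, hc, linearization_algebraMap, sub_zero]
  have laplacian_sub : laplacian (h - c) = laplacian h := by
    rw [map_sub, hc, laplacian_algebraMap, sub_zero]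
  have laplacian_f : laplacian f = laplacian G := by
    rw [map_add, hc, laplacian_algebraMap, add_zero]
  have fourth := hK i (h - c) mean_sub
  have second := hK₂ i (h - c) mean_sub
  rw [linearization_sub_eq, laplacian_sub] at fourth second
  have mean_le : |mean h| ≤ l2Norm G := abs_mean_le_l2Norm_linearization_add θ (u i) h
  have f_le : l2Norm f ≤ 2 * l2Norm G := l2Norm_linearization_le θ (u i) h
  have G_le := l2Norm_le_l2Norm_oneSubLap G
  rw [laplacian_f] at fourth
  calc l2Norm (oneSubLap (oneSubLap h))
      ≤ |mean h| + 3 * l2Norm (laplacian h) + l2Norm (laplacian (laplacian h)) :=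
        l2Norm_oneSubLap_oneSubLap_le h
    _ ≤ l2Norm (oneSubLap G) + 3 * (K₂ * (2 * l2Norm (oneSubLap G))) +
          K * (l2Norm (oneSubLap G) + 2 * l2Norm (oneSubLap G)) := by
        refine add_le_add (add_le_add (mean_le.trans G_le) ?_) (fourth.trans ?_)
        · exact mul_le_mul_of_nonneg_left (second.trans (by gcongr; linarith)) (by norm_num)
        · gcongr
          exacts [l2Norm_laplacian_le_l2Norm_oneSubLap G, f_le.trans (by linarith)]
    _ = _ := by ring

end SolutionFamily

end SmoothPeriodic

/-! ### Quadratic equations in Banach spaces -/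

section QuadraticEquations

open Metric
open scoped NNReal

/-- A continuous quadratic polynomial between normed spaces. The bilinear part need not be
symmetric. -/
structure QuadraticOperator (X Y : Type*) [NormedAddCommGroup X] [NormedSpace ℝ X]
    [NormedAddCommGroup Y] [NormedSpace ℝ Y] where
  const : Y
  linear : X →L[ℝ] Y
  bilinear : X →L[ℝ] X →L[ℝ] Y

section Perturbation

variable {X Y : Type*} [NormedAddCommGroup X] [NormedSpace ℝ X] [NormedAddCommGroup Y]
  [NormedSpace ℝ Y] {T S : X →L[ℝ] Y} {K : ℝ}

lemma exists_nonlinearRightInverse (hK : 0 ≤ K) (hT : Function.Surjective T)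
    (hb : ∀ h, ‖h‖ ≤ K * ‖T h‖) : ∃ g : T.NonlinearRightInverse, (g.nnnorm : ℝ) = K := by
  choose g hg using hT
  exact ⟨⟨g, NNReal.mk K hK, fun y => by simpa only [hg] using! hb (g y), hg⟩, rfl⟩

lemma inv_two_mul_le_inv_sub {ε : ℝ} (hK : 0 < K) (hε : ε * K ≤ 1 / 2) :
    (2 * K)⁻¹ ≤ K⁻¹ - ε := by
  have half : ε ≤ 2⁻¹ * K⁻¹ := by
    rw [← div_eq_mul_inv, le_div_iff₀ hK]
    linarith
  rw [mul_inv]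
  linarith

lemma norm_le_two_mul_norm_of_norm_sub_le {ε : ℝ} (hK : 0 ≤ K) (hb : ∀ h, ‖h‖ ≤ K * ‖T h‖)
    (hS : ∀ h, ‖S h - T h‖ ≤ ε * ‖h‖) (hε : ε * K ≤ 1 / 2) (h : X) : ‖h‖ ≤ 2 * K * ‖S h‖ := by
  have triangle : ‖T h‖ ≤ ‖S h‖ + ε * ‖h‖ := by
    rw [← sub_sub_cancel (S h) (T h)]
    exact (norm_sub_le _ _).trans (add_le_add_right (hS h) _)
  have bound := (hb h).trans (mul_le_mul_of_nonneg_left triangle hK)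
  have absorb := mul_le_mul_of_nonneg_right hε (norm_nonneg h)
  linarith

lemma surjective_of_norm_sub_le [CompleteSpace X] {ε : ℝ} (hK : 0 < K) (hε₀ : 0 ≤ ε)
    (hT : Function.Surjective T) (hb : ∀ h, ‖h‖ ≤ K * ‖T h‖) (hS : ∀ h, ‖S h - T h‖ ≤ ε * ‖h‖)
    (hε : ε * K ≤ 1 / 2) : Function.Surjective S := by
  obtain ⟨g, hg⟩ := exists_nonlinearRightInverse hK.le hT hb
  have approx : ApproximatesLinearOn S T univ (NNReal.mk ε hε₀) := fun x _ y _ => by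
    rw [← map_sub]
    exact hS _
  intro z
  obtain ⟨x, -, hx⟩ := approx.surjOn_closedBall_of_nonlinearRightInverse (b := 0)
    (ε := 2 * K * ‖z‖) g (by positivity) (subset_univ _) (show z ∈ _ by
      rw [mem_closedBall_iff_norm, hg, NNReal.coe_mk, map_zero, sub_zero]
      calc ‖z‖ = (2 * K)⁻¹ * (2 * K * ‖z‖) := by field_simp
        _ ≤ _ := mul_le_mul_of_nonneg_right (inv_two_mul_le_inv_sub hK hε) (by positivity))
  exact ⟨x, hx⟩

end Perturbation

namespace QuadraticOperator

variable {X Y : Type*} [NormedAddCommGroup X] [NormedSpace ℝ X] [NormedAddCommGroup Y]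
  [NormedSpace ℝ Y] (q : QuadraticOperator X Y)

/-- The map `X → Y` given by the quadratic polynomial `q`. -/
noncomputable def toFun (u : X) : Y := q.const + q.linear u + q.bilinear u u

/-- The derivative of `q.toFun` at `u`. -/
noncomputable def deriv (u : X) : X →L[ℝ] Y := q.linear + q.bilinear u + q.bilinear.flip u

lemma deriv_apply (u h : X) :
    q.deriv u h = q.linear h + q.bilinear u h + q.bilinear h u := rfl

lemma norm_deriv_sub_le (u v h : X) :
    ‖q.deriv u h - q.deriv v h‖ ≤ 2 * ‖q.bilinear‖ * ‖u - v‖ * ‖h‖ := by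
  have deriv_sub : q.deriv u h - q.deriv v h = q.bilinear (u - v) h + q.bilinear h (u - v) := by
    simp only [deriv_apply, map_sub, sub_apply]
    abel
  calc ‖q.deriv u h - q.deriv v h‖
      ≤ ‖q.bilinear‖ * ‖u - v‖ * ‖h‖ + ‖q.bilinear‖ * ‖h‖ * ‖u - v‖ := by
        rw [deriv_sub]
        exact (norm_add_le _ _).trans
          (add_le_add (q.bilinear.le_opNorm₂ _ _) (q.bilinear.le_opNorm₂ _ _))
    _ = _ := by ring

lemma toFun_sub_toFun (x y : X) :
    q.toFun x - q.toFun y = q.deriv ((2⁻¹ : ℝ) • (x + y)) (x - y) := by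
  simp only [toFun, deriv_apply, map_sub, map_smul, map_add, add_apply, smul_apply]
  module

lemma approximatesLinearOn (u₀ : X) {r : ℝ} (hr : 0 ≤ r) :
    ApproximatesLinearOn q.toFun (q.deriv u₀) (closedBall u₀ r)
      (NNReal.mk (2 * ‖q.bilinear‖ * r) (by positivity)) := by
  intro x hx y hy
  rw [toFun_sub_toFun]
  refine (q.norm_deriv_sub_le _ _ _).trans ?_
  rw [NNReal.coe_mk]
  gcongr
  have midpoint_mem := convex_closedBall u₀ r hx hy (show (0 : ℝ) ≤ 2⁻¹ by norm_num)
    (show (0 : ℝ) ≤ 2⁻¹ by norm_num) (by norm_num)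
  rw [← smul_add] at midpoint_mem
  exact mem_closedBall_iff_norm.1 midpoint_mem

lemma contDiff_toFun : ContDiff ℝ ∞ q.toFun := by
  unfold toFun
  fun_prop

lemma hasFDerivAt_toFun (u : X) : HasFDerivAt q.toFun (q.deriv u) u := by
  have bilinear := q.bilinear.hasFDerivAt_of_bilinear (hasFDerivAt_id u) (hasFDerivAt_id u)
  refine ((q.linear.hasFDerivAt.const_add q.const).add bilinear).congr_fderiv ?_
  ext h
  simp [deriv_apply, add_assoc]

variable [CompleteSpace X] {u₀ : X} {K : ℝ}

lemma exists_toFun_eq (hK : 0 < K) (hs : Function.Surjective (q.deriv u₀))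
    (hb : ∀ h, ‖h‖ ≤ K * ‖q.deriv u₀ h‖) {r : ℝ} (hr : 0 ≤ r)
    (hrK : 2 * ‖q.bilinear‖ * r * K ≤ 1 / 2) {y : Y} (hy : ‖y - q.toFun u₀‖ ≤ r / (2 * K)) :
    ∃ u, ‖u - u₀‖ ≤ r ∧ q.toFun u = y ∧
      Function.Surjective (q.deriv u) ∧ ∀ h, ‖h‖ ≤ 2 * K * ‖q.deriv u h‖ := by
  obtain ⟨g, hg⟩ := exists_nonlinearRightInverse hK.le hs hb
  obtain ⟨u, hu, huy⟩ :=
    (q.approximatesLinearOn u₀ hr).surjOn_closedBall_of_nonlinearRightInverse g hr subset_rfl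
      (show y ∈ _ by
        rw [mem_closedBall_iff_norm, hg, NNReal.coe_mk]
        refine hy.trans ?_
        rw [div_eq_inv_mul]
        exact mul_le_mul_of_nonneg_right (inv_two_mul_le_inv_sub hK hrK) hr)
  rw [mem_closedBall_iff_norm] at hu
  have near (h : X) : ‖q.deriv u h - q.deriv u₀ h‖ ≤ 2 * ‖q.bilinear‖ * r * ‖h‖ :=
    (q.norm_deriv_sub_le _ _ _).trans (by gcongr)
  exact ⟨u, hu, huy, surjective_of_norm_sub_le hK (by positivity) hs hb near hrK,
    norm_le_two_mul_norm_of_norm_sub_le hK.le hb near hrK⟩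

lemma contDiffAt_of_contDiffAt_toFun [CompleteSpace Y] {S : Type*} [NormedAddCommGroup S]
    [NormedSpace ℝ S] {s₀ : S} {σ : S → X} (hσ : ContinuousAt σ s₀)
    (hs : Function.Surjective (q.deriv (σ s₀))) (hb : ∀ h, ‖h‖ ≤ K * ‖q.deriv (σ s₀) h‖)
    (hτ : ContDiffAt ℝ ∞ (fun s => q.toFun (σ s)) s₀) : ContDiffAt ℝ ∞ σ s₀ := by
  have injective : Function.Injective (q.deriv (σ s₀)) :=
    (injective_iff_map_eq_zero _).2 fun h hh =>
      norm_le_zero_iff.1 (by simpa only [hh, norm_zero, mul_zero] using hb h)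
  let e : X ≃L[ℝ] Y := ContinuousLinearEquiv.ofBijective (q.deriv (σ s₀))
    (LinearMap.ker_eq_bot.2 injective) (LinearMap.range_eq_top.2 hs)
  have contDiffAt : ContDiffAt ℝ ∞ q.toFun (σ s₀) := q.contDiff_toFun.contDiffAt
  have hasFDerivAt : HasFDerivAt q.toFun (e : X →L[ℝ] Y) (σ s₀) :=
    (q.hasFDerivAt_toFun _).congr_fderiv (by ext; rfl)
  have leftInverse :=
    (contDiffAt.hasStrictFDerivAt' hasFDerivAt (by simp)).eventually_left_inverse
  exact ((contDiffAt.to_localInverse hasFDerivAt (by simp)).comp s₀ hτ).congr_of_eventuallyEq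
    ((hσ.eventually leftInverse).mono fun s hs => hs.symm)

end QuadraticOperator

end QuadraticEquations

namespace SmoothPeriodic

/-! ### The Sobolev completions -/

section MeanConst

variable (τ : Type*) [Fintype τ]

/-- The projection onto the constants, `h ↦ mean h`. -/
noncomputable def meanConst : SmoothPeriodic τ →ₗ[ℝ] SmoothPeriodic τ :=
  Algebra.linearMap ℝ (SmoothPeriodic τ) ∘ₗ mean

lemma meanConst_apply (h : SmoothPeriodic τ) :
    meanConst τ h = algebraMap ℝ (SmoothPeriodic τ) (mean h) := rfl

end MeanConst

section OneSubLaplacian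

variable {τ : Type*} [Fintype τ] [DecidableEq τ] (f g : SmoothPeriodic τ)

lemma oneSubLap_algebraMap (c : ℝ) :
    oneSubLap (algebraMap ℝ (SmoothPeriodic τ) c) = algebraMap ℝ (SmoothPeriodic τ) c := by
  rw [oneSubLap_apply, laplacian_algebraMap, sub_zero]

lemma oneSubLap_translate (s : EuclideanSpace ℝ τ) :
    oneSubLap (translate s f) = translate s (oneSubLap f) := by
  simp only [oneSubLap_apply, laplacian_translate, map_sub]

lemma dirDeriv_oneSubLap (e : EuclideanSpace ℝ τ) :
    dirDeriv e (oneSubLap f) = oneSubLap (dirDeriv e f) := by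
  simp only [oneSubLap_apply, dirDeriv_laplacian, map_sub]

lemma mean_oneSubLap_mul : mean (oneSubLap f * g) = mean (f * oneSubLap g) := by
  simp only [oneSubLap_apply, sub_mul, mul_sub, map_sub, mean_laplacian_mul]

variable {f}

lemma eq_zero_of_l2Norm_oneSubLap_eq_zero (h : l2Norm (oneSubLap f) = 0) : f = 0 :=
  eq_zero_of_l2Norm_eq_zero (le_antisymm (h ▸ l2Norm_le_l2Norm_oneSubLap f) (l2Norm_nonneg f))

lemma l2Norm_oneSubLap_map_le {L : SmoothPeriodic τ →ₗ[ℝ] SmoothPeriodic τ} {C : ℝ} (hC : 0 ≤ C)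
    (hL : ∀ h, laplacian (L h) = L (laplacian h))
    (hN : ∀ h, l2Norm (L h) ≤ C * l2Norm (laplacian h)) (h : SmoothPeriodic τ) :
    l2Norm (oneSubLap (L h)) ≤ C * l2Norm (oneSubLap (oneSubLap h)) := by
  have commute : oneSubLap (L h) = L (oneSubLap h) := by simp only [oneSubLap_apply, hL, map_sub]
  rw [commute]
  exact (hN _).trans
    (mul_le_mul_of_nonneg_left (l2Norm_laplacian_le_l2Norm_oneSubLap (oneSubLap h)) hC)

lemma l2Norm_oneSubLap_meanConst_le (h : SmoothPeriodic τ) :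
    l2Norm (oneSubLap (meanConst τ h)) ≤ 1 * l2Norm (oneSubLap (oneSubLap h)) := by
  rw [meanConst_apply, oneSubLap_algebraMap, l2Norm_algebraMap, one_mul]
  exact (abs_mean_le_l2Norm h).trans
    ((l2Norm_le_l2Norm_oneSubLap h).trans (l2Norm_le_l2Norm_oneSubLap _))

end OneSubLaplacian

section Products

variable {τ : Type*} [Fintype τ] [DecidableEq τ]

lemma l2Norm_dirDeriv_mul_dirDeriv_le {C : ℝ} (hC : 0 ≤ C)
    (hs : ∀ (f : SmoothPeriodic τ) x, |f x| ≤ C * l2Norm (oneSubLap f)) {e : EuclideanSpace ℝ τ}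
    (he : ∀ f, l2Norm (dirDeriv e (dirDeriv e f)) ≤ l2Norm (laplacian f))
    (f g : SmoothPeriodic τ) : l2Norm (dirDeriv e f * dirDeriv e g) ≤
      3 * C * (l2Norm (oneSubLap f) * l2Norm (oneSubLap g)) := by
  have square (f : SmoothPeriodic τ) :
      l2Norm (dirDeriv e f * dirDeriv e f) ≤ 3 * C * l2Norm (oneSubLap f) ^ 2 := by
    have nonneg := l2Norm_nonneg (oneSubLap f)
    calc l2Norm (dirDeriv e f * dirDeriv e f)
        ≤ 3 * (C * l2Norm (oneSubLap f)) * l2Norm (dirDeriv e (dirDeriv e f)) :=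
          l2Norm_dirDeriv_mul_self_le (mul_nonneg hC nonneg) (hs f)
      _ ≤ 3 * (C * l2Norm (oneSubLap f)) * l2Norm (oneSubLap f) := by
          gcongr
          exact (he f).trans (l2Norm_laplacian_le_l2Norm_oneSubLap f)
      _ = _ := by ring
  refine (abs_le_of_sq_le_sq' ?_ (mul_nonneg (by positivity)
    (mul_nonneg (l2Norm_nonneg _) (l2Norm_nonneg _)))).2
  calc l2Norm (dirDeriv e f * dirDeriv e g) ^ 2
      ≤ l2Norm (dirDeriv e f * dirDeriv e f) * l2Norm (dirDeriv e g * dirDeriv e g) :=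
        sq_l2Norm_mul_le _ _
    _ ≤ (3 * C * l2Norm (oneSubLap f) ^ 2) * (3 * C * l2Norm (oneSubLap g) ^ 2) :=
        mul_le_mul (square f) (square g) (l2Norm_nonneg _) (by positivity)
    _ = _ := by ring

end Products

lemma oneSubLap_mul (θ : ℝ) (f g : TorusFunction) : oneSubLap (f * g) =
    f * oneSubLap g - g * laplacian f - (2 : ℝ) • (derivX θ f * derivX θ g) -
      (2 : ℝ) • (derivY θ f * derivY θ g) - (2 : ℝ) • (derivT f * derivT g) := by
  rw [oneSubLap_apply, oneSubLap_apply, laplacian_eq θ, laplacian_eq θ f, laplacian_eq θ g]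
  simp only [Derivation.leibniz, smul_eq_mul, map_add, two_smul]
  ring

lemma exists_l2Norm_oneSubLap_mul_le : ∃ C, 0 < C ∧ ∀ f g : TorusFunction,
    l2Norm (oneSubLap (f * g)) ≤ C * (l2Norm (oneSubLap f) * l2Norm (oneSubLap g)) := by
  obtain ⟨C, hC, hs⟩ := exists_abs_le_l2Norm_oneSubLap
  refine ⟨20 * C, by positivity, fun f g => ?_⟩
  set P := l2Norm (oneSubLap f) * l2Norm (oneSubLap g)
  have mul_oneSubLap : l2Norm (f * oneSubLap g) ≤ C * P :=
    (l2Norm_mul_le (hs f)).trans_eq (mul_assoc _ _ _)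
  have mul_laplacian : l2Norm (g * laplacian f) ≤ C * P :=
    calc l2Norm (g * laplacian f) ≤ C * l2Norm (oneSubLap g) * l2Norm (laplacian f) :=
          l2Norm_mul_le (hs g)
      _ ≤ C * l2Norm (oneSubLap g) * l2Norm (oneSubLap f) :=
          mul_le_mul_of_nonneg_left (l2Norm_laplacian_le_l2Norm_oneSubLap f)
            (mul_nonneg hC.le (l2Norm_nonneg _))
      _ = C * P := by ring
  have gradient (j : Fin 3) : l2Norm ((2 : ℝ) •
      (dirDeriv (rotatedBasis 0 j) f * dirDeriv (rotatedBasis 0 j) g)) ≤ 6 * (C * P) := by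
    rw [l2Norm_smul, abs_two]
    linarith [l2Norm_dirDeriv_mul_dirDeriv_le hC.le hs
      (fun h => l2Norm_dirDeriv_dirDeriv_le 0 h j j) f g]
  rw [oneSubLap_mul 0]
  refine (l2Norm_sub_le _ _).trans ((add_le_add ((l2Norm_sub_le _ _).trans (add_le_add
    ((l2Norm_sub_le _ _).trans (add_le_add ((l2Norm_sub_le _ _).trans
      (add_le_add mul_oneSubLap mul_laplacian)) (gradient 0))) (gradient 1)))
        (gradient 2)).trans ?_)
  linarith

/-- The `H⁴` norm `‖(1 - Δ)² f‖` on smooth periodic functions. -/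
noncomputable def h4GroupNorm : AddGroupNorm TorusFunction where
  toFun f := l2Norm (oneSubLap (oneSubLap f))
  map_zero' := by rw [map_zero, map_zero, l2Norm_zero]
  add_le' f g := by
    rw [map_add, map_add]
    exact l2Norm_add_le _ _
  neg' f := by rw [map_neg, map_neg, l2Norm_neg]
  eq_zero_of_map_eq_zero' f h :=
    eq_zero_of_l2Norm_oneSubLap_eq_zero (eq_zero_of_l2Norm_oneSubLap_eq_zero h ▸ l2Norm_zero)

/-- A constant for which `f ↦ h2MulConst * ‖(1 - Δ) f‖` is submultiplicative. -/
noncomputable def h2MulConst : ℝ := exists_l2Norm_oneSubLap_mul_le.choose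

lemma h2MulConst_pos : 0 < h2MulConst := exists_l2Norm_oneSubLap_mul_le.choose_spec.1

/-- The `H²` norm `‖(1 - Δ) f‖`, scaled so as to be submultiplicative. -/
noncomputable def h2RingNorm : RingNorm TorusFunction where
  toFun f := h2MulConst * l2Norm (oneSubLap f)
  map_zero' := by rw [map_zero, l2Norm_zero, mul_zero]
  add_le' f g := by
    rw [map_add, ← mul_add]
    exact mul_le_mul_of_nonneg_left (l2Norm_add_le _ _) h2MulConst_pos.le
  neg' f := by rw [map_neg, l2Norm_neg]
  mul_le' f g := by
    refine (mul_le_mul_of_nonneg_left (exists_l2Norm_oneSubLap_mul_le.choose_spec.2 f g)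
      h2MulConst_pos.le).trans_eq ?_
    rw [← h2MulConst]
    ring
  eq_zero_of_map_eq_zero' f h :=
    eq_zero_of_l2Norm_oneSubLap_eq_zero ((mul_eq_zero.1 h).resolve_left h2MulConst_pos.ne')

/-- Smooth periodic functions with the `H⁴` norm. -/
def PreH4 : Type := TorusFunction

/-- Smooth periodic functions with the `H²` norm. -/
def PreH2 : Type := TorusFunction

namespace PreH4

noncomputable instance : AddCommGroup PreH4 := inferInstanceAs (AddCommGroup TorusFunction)
noncomputable instance : Module ℝ PreH4 := inferInstanceAs (Module ℝ TorusFunction)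

noncomputable instance : NormedAddCommGroup PreH4 :=
  AddGroupNorm.toNormedAddCommGroup (E := PreH4) h4GroupNorm

noncomputable instance : NormedSpace ℝ PreH4 where
  norm_smul_le c (f : TorusFunction) := by
    change l2Norm (oneSubLap (oneSubLap (c • f))) ≤ |c| * l2Norm (oneSubLap (oneSubLap f))
    rw [map_smul, map_smul, l2Norm_smul]

end PreH4

namespace PreH2

noncomputable instance : CommRing PreH2 := inferInstanceAs (CommRing TorusFunction)
noncomputable instance : Algebra ℝ PreH2 := inferInstanceAs (Algebra ℝ TorusFunction)

noncomputable instance : NormedCommRing PreH2 :=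
  { RingNorm.toNormedRing (R := PreH2) h2RingNorm, (inferInstance : CommRing PreH2) with }

noncomputable instance : NormedAlgebra ℝ PreH2 where
  norm_smul_le c (f : TorusFunction) := by
    change h2MulConst * l2Norm (oneSubLap (c • f)) ≤ |c| * (h2MulConst * l2Norm (oneSubLap f))
    rw [map_smul, l2Norm_smul, mul_left_comm]

end PreH2

/-- The Sobolev space `H⁴` of the torus, as a completion of the smooth functions. -/
abbrev H4 := UniformSpace.Completion PreH4

/-- The Sobolev algebra `H²` of the torus, as a completion of the smooth functions. -/
abbrev H2 := UniformSpace.Completion PreH2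

/-- The inclusion of the smooth functions in `H4`. -/
noncomputable def toH4 : TorusFunction →ₗ[ℝ] H4 :=
  (UniformSpace.Completion.toComplL : PreH4 →L[ℝ] H4).toLinearMap

/-- The inclusion of the smooth functions in `H2`. -/
noncomputable def toH2 : TorusFunction →ₗ[ℝ] H2 :=
  (UniformSpace.Completion.toComplL : PreH2 →L[ℝ] H2).toLinearMap

lemma norm_toH4 (f : TorusFunction) : ‖toH4 f‖ = l2Norm (oneSubLap (oneSubLap f)) :=
  UniformSpace.Completion.norm_coe (E := PreH4) f

lemma norm_toH2 (f : TorusFunction) : ‖toH2 f‖ = h2MulConst * l2Norm (oneSubLap f) :=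
  UniformSpace.Completion.norm_coe (E := PreH2) f

lemma denseRange_toH4 : DenseRange toH4 := UniformSpace.Completion.denseRange_coe (α := PreH4)

lemma denseRange_toH2 : DenseRange toH2 := UniformSpace.Completion.denseRange_coe (α := PreH2)

lemma toH2_mul (f g : TorusFunction) : toH2 (f * g) = toH2 f * toH2 g :=
  UniformSpace.Completion.coe_mul (α := PreH2) f g

lemma toH2_one : toH2 1 = 1 := UniformSpace.Completion.coe_one (α := PreH2)

lemma toH2_injective : Function.Injective toH2 := UniformSpace.Completion.coe_injective PreH2

/-! ### Translations -/

section Translation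

variable {τ : Type*} [Fintype τ] (f : SmoothPeriodic τ)

lemma abs_taylor_le (x e : EuclideanSpace ℝ τ) :
    |f (x + e) - f x - dirDeriv e f x| ≤ supNorm (dirDeriv e (dirDeriv e f)) := by
  set B := supNorm (dirDeriv e (dirDeriv e f))
  have dirDeriv_le (t : ℝ) (ht : t ∈ Icc (0 : ℝ) 1) :
      |dirDeriv e f (x + t • e) - dirDeriv e f x| ≤ B := by
    have segment := norm_image_sub_le_of_norm_deriv_le_segment'
      (f := fun s => dirDeriv e f (x + s • e))
      (f' := fun s => dirDeriv e (dirDeriv e f) (x + s • e)) (C := B) (a := 0) (b := 1)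
      (fun s _ => (hasDerivAt_line _ _ _ _).hasDerivWithinAt)
      (fun s _ => (dirDeriv e (dirDeriv e f)).abs_le_supNorm _) t ht
    simp only [zero_smul, add_zero, sub_zero, Real.norm_eq_abs] at segment
    exact segment.trans (mul_le_of_le_one_right (supNorm_nonneg _) ht.2)
  have segment := norm_image_sub_le_of_norm_deriv_le_segment'
    (f := fun s => f (x + s • e) - s * dirDeriv e f x)
    (f' := fun s => dirDeriv e f (x + s • e) - 1 * dirDeriv e f x) (C := B) (a := 0) (b := 1)
    (fun s _ => ((hasDerivAt_line _ _ _ _).sub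
      ((hasDerivAt_id s).mul_const (dirDeriv e f x))).hasDerivWithinAt)
    (fun s hs => by
      rw [one_mul]
      exact dirDeriv_le s ⟨hs.1, hs.2.le⟩) 1 (by simp)
  simp only [one_smul, one_mul, zero_smul, add_zero, zero_mul, sub_zero, mul_one,
    Real.norm_eq_abs] at segment
  rwa [sub_right_comm]

lemma exists_supNorm_dirDeriv_dirDeriv_le : ∃ C, 0 ≤ C ∧ ∀ e : EuclideanSpace ℝ τ,
    supNorm (dirDeriv e (dirDeriv e f)) ≤ C * ‖e‖ ^ 2 := by
  classical
  let partial₂ (i j : τ) : SmoothPeriodic τ :=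
    dirDeriv (EuclideanSpace.single i 1) (dirDeriv (EuclideanSpace.single j 1) f)
  refine ⟨∑ i, ∑ j, supNorm (partial₂ i j),
    Finset.sum_nonneg fun i _ => Finset.sum_nonneg fun j _ => supNorm_nonneg _,
    fun e => supNorm_le fun x => ?_⟩
  have coord_le (i : τ) : |e i| ≤ ‖e‖ := PiLp.norm_apply_le e i
  rw [dirDeriv_eq_sum (dirDeriv e f) e, dirDeriv_eq_sum f e, sum_apply, Finset.sum_mul]
  refine (Finset.abs_sum_le_sum_abs _ _).trans (Finset.sum_le_sum fun i _ => ?_)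
  rw [map_sum, smul_apply, sum_apply, Finset.mul_sum, Finset.sum_mul]
  refine (Finset.abs_sum_le_sum_abs _ _).trans (Finset.sum_le_sum fun j _ => ?_)
  rw [Derivation.map_smul, smul_apply, abs_mul, abs_mul]
  calc |e i| * (|e j| * |partial₂ i j x|) ≤ ‖e‖ * (‖e‖ * supNorm (partial₂ i j)) := by
        gcongr
        exacts [coord_le i, coord_le j, (partial₂ i j).abs_le_supNorm x]
    _ = _ := by ring

variable [DecidableEq τ] {V : Type*} [NormedAddCommGroup V] [NormedSpace ℝ V]
  {j : SmoothPeriodic τ →ₗ[ℝ] V} {C : ℝ}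

lemma hasFDerivAt_translate (hC : 0 ≤ C)
    (hj : ∀ f, ‖j f‖ ≤ C * l2Norm (oneSubLap (oneSubLap f))) (s : EuclideanSpace ℝ τ) :
    HasFDerivAt (fun s => j (translate s f))
      (∑ i, (EuclideanSpace.proj i : EuclideanSpace ℝ τ →L[ℝ] ℝ).smulRight
        (j (translate s (dirDeriv (EuclideanSpace.single i 1) f)))) s := by
  have derivative_apply (e : EuclideanSpace ℝ τ) :
      (∑ i, (EuclideanSpace.proj i : EuclideanSpace ℝ τ →L[ℝ] ℝ).smulRight
        (j (translate s (dirDeriv (EuclideanSpace.single i 1) f)))) e =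
        j (dirDeriv e (translate s f)) := by
    rw [dirDeriv_eq_sum]
    simp [dirDeriv_translate]
  obtain ⟨B, -, hB⟩ :=
    exists_supNorm_dirDeriv_dirDeriv_le (oneSubLap (oneSubLap (translate s f)))
  have taylor (e : EuclideanSpace ℝ τ) : ‖j (translate (s + e) f) - j (translate s f) -
      j (dirDeriv e (translate s f))‖ ≤ C * B * ‖e‖ ^ 2 := by
    rw [← map_sub, ← map_sub, mul_assoc]
    refine (hj _).trans (mul_le_mul_of_nonneg_left (l2Norm_le_of_abs_le fun x => ?_) hC)
    rw [add_comm s e, ← translate_translate]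
    simp only [map_sub, oneSubLap_translate _ e, ← dirDeriv_oneSubLap]
    exact (abs_taylor_le _ x e).trans (hB e)
  rw [hasFDerivAt_iff_isLittleO_nhds_zero]
  simp only [derivative_apply]
  refine (Asymptotics.IsBigO.of_bound (C * B) (Eventually.of_forall fun e => ?_)).trans_isLittleO
    (Asymptotics.isLittleO_norm_pow_id one_lt_two)
  rw [norm_pow, norm_norm]
  exact taylor e

lemma contDiff_translate (hC : 0 ≤ C)
    (hj : ∀ f, ‖j f‖ ≤ C * l2Norm (oneSubLap (oneSubLap f))) :
    ContDiff ℝ ∞ fun s => j (translate s f) := by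
  refine contDiff_infty.2 fun n => ?_
  induction n generalizing f with
  | zero =>
    exact contDiff_zero.2 (continuous_iff_continuousAt.2 fun s =>
      (hasFDerivAt_translate f hC hj s).continuousAt)
  | succ n ih =>
    refine contDiff_succ_iff_hasFDerivAt.2 ⟨_, ?_, hasFDerivAt_translate f hC hj⟩
    exact ContDiff.sum fun i _ => contDiff_const.smulRight (ih _)

end Translation

/-! ### Extension of operators to the completions -/

/-- The extension to `H4 → H2` of a linear operator on smooth functions; it is meaningful if the
operator is bounded for the `H⁴` and `H²` norms. -/
noncomputable def extendH4H2 (L : TorusFunction →ₗ[ℝ] TorusFunction) : H4 →L[ℝ] H2 :=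
  (toH2 ∘ₗ L).extendOfNorm toH4

lemma extendH4H2_toH4 {L : TorusFunction →ₗ[ℝ] TorusFunction} {C : ℝ}
    (hL : ∀ h, l2Norm (oneSubLap (L h)) ≤ C * l2Norm (oneSubLap (oneSubLap h)))
    (h : TorusFunction) : extendH4H2 L (toH4 h) = toH2 (L h) := by
  refine LinearMap.extendOfNorm_eq denseRange_toH4 ⟨h2MulConst * C, fun h => ?_⟩ h
  rw [norm_toH4, LinearMap.comp_apply, norm_toH2, mul_assoc]
  exact mul_le_mul_of_nonneg_left (hL h) h2MulConst_pos.le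

lemma norm_toH4_translate (s : E3) (h : TorusFunction) : ‖toH4 (translate s h)‖ = ‖toH4 h‖ := by
  rw [norm_toH4, norm_toH4, oneSubLap_translate, oneSubLap_translate, l2Norm_translate]

lemma norm_toH2_translate (s : E3) (h : TorusFunction) : ‖toH2 (translate s h)‖ = ‖toH2 h‖ := by
  rw [norm_toH2, norm_toH2, oneSubLap_translate, l2Norm_translate]

lemma eq_of_forall_toH4 {Z : Type*} [TopologicalSpace Z] [T2Space Z] {f g : H4 → Z}
    (hf : Continuous f) (hg : Continuous g) (h : ∀ k : TorusFunction, f (toH4 k) = g (toH4 k))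
    (u : H4) : f u = g u :=
  congrFun (denseRange_toH4.equalizer hf hg (funext h)) u

lemma nonpos_of_forall_toH4 {A B : ℝ} (hB : 0 ≤ B) (w : H4)
    (h : ∀ k : TorusFunction, A ≤ B * ‖w - toH4 k‖) : A ≤ 0 := by
  refine le_of_forall_pos_le_add fun ε hε => ?_
  obtain ⟨k, hk⟩ := denseRange_toH4.exists_dist_lt w (ε := ε / (B + 1)) (by positivity)
  rw [dist_eq_norm] at hk
  calc A ≤ B * (ε / (B + 1)) := (h k).trans (mul_le_mul_of_nonneg_left hk.le hB)
    _ = B / (B + 1) * ε := by ring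
    _ ≤ 0 + ε := by
        rw [zero_add]
        exact mul_le_of_le_one_left hε.le ((div_le_one (by positivity)).2 (by linarith))

/-- Translation on `H4`. -/
noncomputable def translateH4 (s : E3) : H4 →L[ℝ] H4 :=
  (toH4 ∘ₗ (translate s).toLinearMap).extendOfNorm toH4

lemma translateH4_toH4 (s : E3) (h : TorusFunction) :
    translateH4 s (toH4 h) = toH4 (translate s h) :=
  LinearMap.extendOfNorm_eq (f := toH4 ∘ₗ (translate s).toLinearMap) denseRange_toH4
    ⟨1, fun h => (norm_toH4_translate s h).trans_le (one_mul _).ge⟩ h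

lemma norm_translateH4_le (s : E3) (u : H4) : ‖translateH4 s u‖ ≤ ‖u‖ :=
  (LinearMap.norm_extendOfNorm_apply_le (f := toH4 ∘ₗ (translate s).toLinearMap) denseRange_toH4 1
    (fun h => (norm_toH4_translate s h).trans_le (one_mul _).ge) u).trans_eq (one_mul _)

lemma translateH4_zero (u : H4) : translateH4 0 u = u :=
  eq_of_forall_toH4 (translateH4 0).continuous continuous_id
    (fun k => by rw [translateH4_toH4, translate_zero, id]) u

lemma translateH4_add (s s' : E3) (u : H4) :
    translateH4 (s + s') u = translateH4 s (translateH4 s' u) :=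
  eq_of_forall_toH4 (translateH4 _).continuous
    ((translateH4 s).continuous.comp (translateH4 s').continuous)
    (fun k => by simp only [Function.comp, translateH4_toH4, translate_translate]) u

lemma translateH4_add_of_isLatticeVector (s : E3) {a : E3} (ha : IsLatticeVector a) (u : H4) :
    translateH4 (s + a) u = translateH4 s u :=
  eq_of_forall_toH4 (translateH4 _).continuous (translateH4 s).continuous (fun k => by
    rw [translateH4_toH4, translateH4_toH4]
    congr 1
    ext x
    rw [translate_apply, translate_apply, ← add_assoc, k.periodic _ ha]) u

lemma continuousAt_translateH4 (u : H4) : ContinuousAt (fun s => translateH4 s u) 0 := by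
  rw [Metric.continuousAt_iff']
  intro ε hε
  obtain ⟨k, hk⟩ := denseRange_toH4.exists_dist_lt u (ε := ε / 3) (by positivity)
  have continuous_smooth : ContinuousAt (fun s => toH4 (translate s k)) 0 :=
    (contDiff_translate k zero_le_one
      (fun f => by rw [norm_toH4, one_mul])).continuous.continuousAt
  filter_upwards [Metric.continuousAt_iff'.1 continuous_smooth (ε / 3) (by positivity)] with s hs
  rw [translate_zero] at hs
  rw [translateH4_zero]
  have near : dist (translateH4 s u) (toH4 (translate s k)) < ε / 3 := by
    rw [← translateH4_toH4, dist_eq_norm, ← map_sub]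
    exact (norm_translateH4_le _ _).trans_lt (by rwa [← dist_eq_norm])
  have triangle := dist_triangle4 (translateH4 s u) (toH4 (translate s k)) (toH4 k) u
  rw [dist_comm (toH4 k)] at triangle
  linarith

/-- Evaluation at a point on `H4`. -/
noncomputable def evalH4 (x : E3) : H4 →L[ℝ] ℝ := (evalAt x).toLinearMap.extendOfNorm toH4

lemma exists_abs_le_norm_toH4 : ∃ C, 0 < C ∧ ∀ x (h : TorusFunction), |h x| ≤ C * ‖toH4 h‖ := by
  obtain ⟨C, hC, h⟩ := exists_abs_le_l2Norm_oneSubLap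
  refine ⟨C, hC, fun x f => (h f x).trans ?_⟩
  rw [norm_toH4]
  exact mul_le_mul_of_nonneg_left (l2Norm_le_l2Norm_oneSubLap _) hC.le

lemma evalH4_toH4 (x : E3) (h : TorusFunction) : evalH4 x (toH4 h) = h x := by
  obtain ⟨C, -, hC⟩ := exists_abs_le_norm_toH4
  exact LinearMap.extendOfNorm_eq (f := (evalAt x).toLinearMap) denseRange_toH4 ⟨C, hC x⟩ h

lemma exists_abs_evalH4_le : ∃ C, 0 < C ∧ ∀ x u, |evalH4 x u| ≤ C * ‖u‖ := by
  obtain ⟨C, hC0, hC⟩ := exists_abs_le_norm_toH4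
  exact ⟨C, hC0, fun x u => LinearMap.norm_extendOfNorm_apply_le (f := (evalAt x).toLinearMap)
    denseRange_toH4 C (hC x) u⟩

lemma evalH4_translateH4 (x : E3) (u : H4) : evalH4 0 (translateH4 x u) = evalH4 x u :=
  eq_of_forall_toH4 ((evalH4 0).continuous.comp (translateH4 x).continuous) (evalH4 x).continuous
    (fun k => by simp only [Function.comp, translateH4_toH4, evalH4_toH4, translate_apply,
      zero_add]) u

lemma sq_norm_toH4_le (k h : TorusFunction) : ‖toH4 k‖ ^ 2 ≤ ‖toH4 (k - h)‖ * ‖toH4 k‖ +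
    l2Norm h * l2Norm (oneSubLap (oneSubLap (oneSubLap (oneSubLap k)))) := by
  have decompose : ‖toH4 k‖ ^ 2 =
      mean (oneSubLap (oneSubLap (k - h)) * oneSubLap (oneSubLap k)) +
        mean (h * oneSubLap (oneSubLap (oneSubLap (oneSubLap k)))) := by
    rw [norm_toH4, l2Norm_sq, ← mean_oneSubLap_mul h, ← mean_oneSubLap_mul (oneSubLap h),
      ← map_add, ← add_mul, ← map_add, ← map_add, sub_add_cancel]
  rw [decompose, norm_toH4, norm_toH4]
  exact add_le_add ((le_abs_self _).trans (abs_mean_mul_le _ _))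
    ((le_abs_self _).trans (abs_mean_mul_le _ _))

/- Pairing with `(1 - Δ)⁴ k` only sees the values of an element of `H4`, so an element vanishing
at every point is orthogonal to `toH4 k`. -/
lemma norm_toH4_le_norm_sub {w : H4} (hw : ∀ x, evalH4 x w = 0) (k : TorusFunction) :
    ‖toH4 k‖ ≤ ‖w - toH4 k‖ := by
  obtain ⟨C, hC0, hC⟩ := exists_abs_evalH4_le
  set M := l2Norm (oneSubLap (oneSubLap (oneSubLap (oneSubLap k))))
  have hM : 0 ≤ M := l2Norm_nonneg _
  have l2Norm_le (h : TorusFunction) : l2Norm h ≤ C * ‖w - toH4 h‖ :=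
    l2Norm_le_of_abs_le fun x => by simpa [hw, evalH4_toH4] using hC x (w - toH4 h)
  have triangle (h : TorusFunction) : ‖toH4 (k - h)‖ ≤ ‖w - toH4 k‖ + ‖w - toH4 h‖ := by
    rw [map_sub, ← sub_sub_sub_cancel_left (toH4 h) (toH4 k) w, add_comm]
    exact norm_sub_le _ _
  have nonpos : ‖toH4 k‖ * (‖toH4 k‖ - ‖w - toH4 k‖) ≤ 0 := by
    refine nonpos_of_forall_toH4 (B := ‖toH4 k‖ + C * M) (by positivity) w fun h => ?_
    have first := mul_le_mul_of_nonneg_right (triangle h) (norm_nonneg (toH4 k))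
    have second := mul_le_mul_of_nonneg_right (l2Norm_le h) hM
    linarith [sq_norm_toH4_le k h]
  by_contra! hlt
  exact nonpos.not_gt (mul_pos ((norm_nonneg _).trans_lt hlt) (sub_pos.2 hlt))

lemma eq_zero_of_evalH4 {w : H4} (hw : ∀ x, evalH4 x w = 0) : w = 0 := by
  refine norm_le_zero_iff.1 (nonpos_of_forall_toH4 zero_le_two w fun k => ?_)
  have triangle := norm_add_le (w - toH4 k) (toH4 k)
  rw [sub_add_cancel] at triangle
  linarith [norm_toH4_le_norm_sub hw k]

/-! ### The Monge–Ampère operator on the completions -/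

/-- The extension of `u ↦ mongeAmpere θ u + mean u` to the completions; the mean makes its
derivatives invertible. -/
noncomputable def mongeAmpereOp (θ : ℝ) : QuadraticOperator H4 H2 where
  const := 1
  linear := extendH4H2 (opXX θ) + extendH4H2 (opYT θ) + extendH4H2 (meanConst (Fin 3))
  bilinear :=
    (ContinuousLinearMap.mul ℝ H2).bilinearComp (extendH4H2 (opXX θ)) (extendH4H2 (opYT θ)) -
      (ContinuousLinearMap.mul ℝ H2).bilinearComp (extendH4H2 (opXY θ)) (extendH4H2 (opXY θ)) -
      (ContinuousLinearMap.mul ℝ H2).bilinearComp (extendH4H2 (opXT θ)) (extendH4H2 (opXT θ))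

section MongeAmpereOp

variable (θ : ℝ) (u h : TorusFunction)

lemma l2Norm_oneSubLap_opXX_le :
    l2Norm (oneSubLap (opXX θ h)) ≤ 3 * l2Norm (oneSubLap (oneSubLap h)) :=
  l2Norm_oneSubLap_map_le zero_le_three (laplacian_opXX θ) (l2Norm_opXX_le θ) h

lemma extendH4H2_opXX : extendH4H2 (opXX θ) (toH4 h) = toH2 (opXX θ h) :=
  extendH4H2_toH4 (l2Norm_oneSubLap_opXX_le θ) h

lemma extendH4H2_opYT : extendH4H2 (opYT θ) (toH4 h) = toH2 (opYT θ h) :=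
  extendH4H2_toH4 (l2Norm_oneSubLap_map_le zero_le_three (laplacian_opYT θ) (l2Norm_opYT_le θ)) h

lemma extendH4H2_opXY : extendH4H2 (opXY θ) (toH4 h) = toH2 (opXY θ h) :=
  extendH4H2_toH4 (l2Norm_oneSubLap_map_le zero_le_three (laplacian_opXY θ) (l2Norm_opXY_le θ)) h

lemma extendH4H2_opXT : extendH4H2 (opXT θ) (toH4 h) = toH2 (opXT θ h) :=
  extendH4H2_toH4 (l2Norm_oneSubLap_map_le zero_le_three (laplacian_opXT θ) (l2Norm_opXT_le θ)) h

lemma extendH4H2_meanConst :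
    extendH4H2 (meanConst (Fin 3)) (toH4 h) = toH2 (meanConst (Fin 3) h) :=
  extendH4H2_toH4 l2Norm_oneSubLap_meanConst_le h

lemma linear_mongeAmpereOp_toH4 :
    (mongeAmpereOp θ).linear (toH4 h) = toH2 (opXX θ h + opYT θ h + meanConst (Fin 3) h) := by
  rw [map_add, map_add, ← extendH4H2_opXX, ← extendH4H2_opYT, ← extendH4H2_meanConst]
  rfl

lemma bilinear_mongeAmpereOp_toH4 : (mongeAmpereOp θ).bilinear (toH4 u) (toH4 h) =
    toH2 (opXX θ u * opYT θ h - opXY θ u * opXY θ h - opXT θ u * opXT θ h) := by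
  rw [map_sub, map_sub, toH2_mul, toH2_mul, toH2_mul, ← extendH4H2_opXX, ← extendH4H2_opYT,
    ← extendH4H2_opXY, ← extendH4H2_opXY, ← extendH4H2_opXT, ← extendH4H2_opXT]
  rfl

lemma toFun_mongeAmpereOp_toH4 :
    (mongeAmpereOp θ).toFun (toH4 u) = toH2 (mongeAmpere θ u + meanConst (Fin 3) u) := by
  rw [QuadraticOperator.toFun, linear_mongeAmpereOp_toH4, bilinear_mongeAmpereOp_toH4]
  change 1 + _ + _ = _
  rw [← toH2_one, ← map_add, ← map_add, mongeAmpere]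
  congr 1
  ring

lemma deriv_mongeAmpereOp_toH4 : (mongeAmpereOp θ).deriv (toH4 u) (toH4 h) =
    toH2 (linearization θ u h + meanConst (Fin 3) h) := by
  rw [QuadraticOperator.deriv_apply, linear_mongeAmpereOp_toH4, bilinear_mongeAmpereOp_toH4,
    bilinear_mongeAmpereOp_toH4, ← map_add, ← map_add, linearization]
  congr 1
  ring

lemma mongeAmpere_translate (s : E3) :
    mongeAmpere θ (translate s u) = translate s (mongeAmpere θ u) := by
  simp only [mongeAmpere, opXX_apply, opYT_apply, opXY_apply, opXT_apply, derivX, derivY, derivT,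
    dirDeriv_translate, map_add, map_sub, map_mul, map_one]

lemma meanConst_translate (s : E3) :
    meanConst (Fin 3) (translate s u) = translate s (meanConst (Fin 3) u) := by
  rw [meanConst_apply, meanConst_apply, mean_translate, AlgHom.commutes]

lemma mean_mongeAmpere : mean (mongeAmpere θ u) = 1 := by
  have mean_trace : mean (2 + opXX θ u + opYT θ u) = 2 := by
    have two : (2 : TorusFunction) = algebraMap ℝ TorusFunction 2 := by rw [map_ofNat]
    simp only [two, opXX_apply, opYT_apply, map_add, mean_algebraMap, derivX, derivY, derivT,
      mean_dirDeriv, add_zero]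
  have zero := mean_linearization θ u u
  rw [linearization_self, map_sub, mean_trace, two_mul, map_add] at zero
  linarith

lemma linearization_zero : linearization θ 0 h = laplacian h + derivT h := by
  simp only [linearization, map_zero, add_zero, one_mul, zero_mul, mul_zero, sub_zero,
    laplacian_eq θ, opXX_apply, opYT_apply]
  ring

variable {θ u}

lemma norm_le_of_l2Norm_linearization {K : ℝ}
    (hb : ∀ h, l2Norm (oneSubLap (oneSubLap h)) ≤
      K * l2Norm (oneSubLap (linearization θ u h + algebraMap ℝ TorusFunction (mean h))))
    (w : H4) : ‖w‖ ≤ K / h2MulConst * ‖(mongeAmpereOp θ).deriv (toH4 u) w‖ := by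
  refine denseRange_toH4.induction_on w (isClosed_le continuous_norm
    (continuous_const.mul ((mongeAmpereOp θ).deriv (toH4 u)).continuous.norm)) fun k => ?_
  rw [deriv_mongeAmpereOp_toH4, norm_toH4, norm_toH2, meanConst_apply, ← mul_assoc,
    div_mul_cancel₀ _ h2MulConst_pos.ne']
  exact hb k

variable {v : H4} {E : TorusFunction}

lemma toFun_mongeAmpereOp_translateH4 (hv : (mongeAmpereOp θ).toFun v = toH2 E) (s : E3) :
    (mongeAmpereOp θ).toFun (translateH4 s v) = toH2 (translate s E) := by
  have continuous := (mongeAmpereOp θ).contDiff_toFun.continuous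
  have norm_eq : ‖(mongeAmpereOp θ).toFun (translateH4 s v) - toH2 (translate s E)‖ =
      ‖(mongeAmpereOp θ).toFun v - toH2 E‖ := by
    refine eq_of_forall_toH4
      (f := fun v => ‖(mongeAmpereOp θ).toFun (translateH4 s v) - toH2 (translate s E)‖)
      (g := fun v => ‖(mongeAmpereOp θ).toFun v - toH2 E‖)
      ((continuous.comp (translateH4 s).continuous).sub continuous_const).norm
      (continuous.sub continuous_const).norm (fun k => ?_) v
    rw [translateH4_toH4, toFun_mongeAmpereOp_toH4, toFun_mongeAmpereOp_toH4,
      mongeAmpere_translate, meanConst_translate, ← map_add, ← map_sub, ← map_sub, ← map_sub,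
      norm_toH2_translate]
  rw [hv, sub_self, norm_zero] at norm_eq
  exact sub_eq_zero.1 (norm_eq_zero.1 norm_eq)

lemma contDiff_translateH4 (h : ContDiffAt ℝ ∞ (fun s => translateH4 s v) 0) :
    ContDiff ℝ ∞ fun s => translateH4 s v := by
  refine contDiff_iff_contDiffAt.2 fun s => ?_
  have recenter : (fun s' => translateH4 s' v) =
      fun s' => translateH4 s (translateH4 (s' - s) v) := by
    funext s'
    rw [← translateH4_add, add_sub_cancel]
  rw [recenter]
  refine (translateH4 s).contDiff.contDiffAt.comp s ?_
  refine ContDiffAt.comp (g := fun s => translateH4 s v) (f := fun s' => s' - s) s ?_ (by fun_prop)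
  rwa [sub_self]

lemma exists_toH4_eq_of_contDiff (h : ContDiff ℝ ∞ fun s => translateH4 s v) :
    ∃ u : TorusFunction, toH4 u = v := by
  let u : TorusFunction := ⟨fun x => evalH4 0 (translateH4 x v), (evalH4 0).contDiff.comp h,
    fun x a ha => by simp only [translateH4_add_of_isLatticeVector x ha]⟩
  refine ⟨u, sub_eq_zero.1 (eq_zero_of_evalH4 fun x => ?_)⟩
  rw [map_sub, evalH4_toH4, sub_eq_zero]
  exact evalH4_translateH4 x v

/-- Elliptic regularity: the translates of `v` solve the translated equations, hence depend
smoothly on the translation by the inverse function theorem. -/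
lemma exists_toH4_eq_of_toFun_eq {K : ℝ} (hv : (mongeAmpereOp θ).toFun v = toH2 E)
    (hs : Function.Surjective ((mongeAmpereOp θ).deriv v))
    (hb : ∀ h, ‖h‖ ≤ K * ‖(mongeAmpereOp θ).deriv v h‖) : ∃ u : TorusFunction, toH4 u = v := by
  refine exists_toH4_eq_of_contDiff (contDiff_translateH4 ?_)
  refine (mongeAmpereOp θ).contDiffAt_of_contDiffAt_toFun (K := K) (continuousAt_translateH4 v)
    (by rwa [translateH4_zero]) (by rwa [translateH4_zero]) ?_
  simp only [toFun_mongeAmpereOp_translateH4 hv]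
  refine (contDiff_translate (j := toH2) E h2MulConst_pos.le fun f => ?_).contDiffAt
  rw [norm_toH2]
  exact mul_le_mul_of_nonneg_left (l2Norm_le_l2Norm_oneSubLap _) h2MulConst_pos.le

end MongeAmpereOp

/-! ### The continuity method -/

/-- The right-hand side at time `τ` of the continuity method joining `1` to `E`. -/
noncomputable def pathRHS (E : TorusFunction) (τ : ℝ) : TorusFunction := 1 + τ • (E - 1)

/-- Solvability at time `τ` of the continuity method. -/
def SolvableAt (θ : ℝ) (E : TorusFunction) (τ : ℝ) : Prop :=
  ∃ u, IsSolution θ (pathRHS E τ) u ∧ Function.Surjective ((mongeAmpereOp θ).deriv (toH4 u))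

/-- The pairs of a time in `[0, 1]` and a solution at that time. -/
def PathSolution (θ : ℝ) (E : TorusFunction) : Type :=
  {p : ℝ × TorusFunction // p.1 ∈ Icc (0 : ℝ) 1 ∧ IsSolution θ (pathRHS E p.1) p.2}

section Path

variable {θ : ℝ} {E u : TorusFunction} {τ : ℝ}

lemma pathRHS_one (E : TorusFunction) : pathRHS E 1 = E := by simp [pathRHS]

lemma pathRHS_sub_pathRHS (E : TorusFunction) (τ' τ : ℝ) :
    pathRHS E τ' - pathRHS E τ = (τ' - τ) • (E - 1) := by
  simp only [pathRHS, sub_smul]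
  abel

lemma dirDeriv_pathRHS (E : TorusFunction) (τ : ℝ) (e : E3) :
    dirDeriv e (pathRHS E τ) = τ • dirDeriv e E := by
  simp only [pathRHS, map_add, map_sub, Derivation.map_smul, Derivation.map_one_eq_zero, zero_add,
    sub_zero]

lemma mean_pathRHS (hE : mean E = 1) (τ : ℝ) : mean (pathRHS E τ) = 1 := by
  rw [pathRHS, map_add, map_smul, map_sub, hE, mean_one, sub_self, smul_zero, add_zero]

lemma min_one_le_pathRHS {l : ℝ} {x : E3} (hl : l ≤ E x) (hτ : τ ∈ Icc (0 : ℝ) 1) :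
    min 1 l ≤ pathRHS E τ x := by
  simp only [pathRHS, add_apply, one_apply, smul_apply, sub_apply]
  linarith [mul_le_mul_of_nonneg_left ((min_le_right 1 l).trans hl) hτ.1,
    mul_le_mul_of_nonneg_left (min_le_left 1 l) (sub_nonneg.2 hτ.2)]

lemma solutionFamily_path (θ : ℝ) (hE : ∀ x, 0 < E x) :
    SolutionFamily θ (fun i : PathSolution θ E => pathRHS E i.1.1) (fun i => i.1.2) := by
  have time_le (i : PathSolution θ E) : |i.1.1| ≤ 1 := abs_le.2 ⟨by linarith [i.2.1.1], i.2.1.2⟩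
  refine ⟨fun i => i.2.2, ?_, ?_, fun e => ?_, fun e e' => ?_⟩
  · obtain ⟨x, hx⟩ := exists_forall_le (-E)
    exact ⟨min 1 (E x), lt_min one_pos (hE x), min_le_left _ _,
      fun i y => min_one_le_pathRHS (neg_le_neg_iff.1 (hx y)) i.2.1⟩
  · exact (BddSup.const 1).add ((BddSup.const (E - 1)).smul time_le)
  · simp only [dirDeriv_pathRHS]
    exact (BddSup.const _).smul time_le
  · simp only [dirDeriv_pathRHS, Derivation.map_smul]
    exact (BddSup.const _).smul time_le

lemma IsSolution.toFun_mongeAmpereOp (hu : IsSolution θ E u) :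
    (mongeAmpereOp θ).toFun (toH4 u) = toH2 E := by
  rw [toFun_mongeAmpereOp_toH4, hu.eq, meanConst_apply, hu.mean_eq_zero, map_zero, add_zero]

lemma mongeAmpere_eq_and_mean_eq_zero (hE : mean E = 1)
    (hu : (mongeAmpereOp θ).toFun (toH4 u) = toH2 E) : mongeAmpere θ u = E ∧ mean u = 0 := by
  rw [toFun_mongeAmpereOp_toH4] at hu
  have equation := toH2_injective hu
  have mean_zero : mean u = 0 := by
    have h := congrArg mean equation
    rw [map_add, mean_mongeAmpere, meanConst_apply, mean_algebraMap, hE] at h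
    linarith
  rw [meanConst_apply, mean_zero, map_zero, add_zero] at equation
  exact ⟨equation, mean_zero⟩

lemma exists_abs_opXX_le (θ : ℝ) :
    ∃ C, 0 < C ∧ ∀ (h : TorusFunction) x, |opXX θ h x| ≤ C * ‖toH4 h‖ := by
  obtain ⟨C, hC, hsup⟩ := exists_abs_le_l2Norm_oneSubLap
  refine ⟨C * 3, by positivity, fun h x => (hsup _ x).trans ?_⟩
  rw [norm_toH4, mul_assoc]
  exact mul_le_mul_of_nonneg_left (l2Norm_oneSubLap_opXX_le θ h) hC.le

lemma IsSolution.inv_le {M : ℝ} {x : E3} (hu : IsSolution θ E u) (hM : 0 < M)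
    (h : invXX θ u x ≤ M) : M⁻¹ ≤ (1 + opXX θ u) x := by
  have product := DFunLike.congr_fun hu.mul_invXX x
  rw [mul_apply, one_apply] at product
  rw [inv_le_iff_one_le_mul₀ hM, ← product]
  exact mul_le_mul_of_nonneg_left h (hu.pos x).le

lemma IsSolution.pos_of_near {u' : TorusFunction} {M C r : ℝ} (hu : IsSolution θ E u)
    (hM : 0 < M) (hinv : ∀ x, invXX θ u x ≤ M) (hC : 0 ≤ C)
    (hsup : ∀ (h : TorusFunction) x, |opXX θ h x| ≤ C * ‖toH4 h‖)
    (hr : C * r < M⁻¹) (hnear : ‖toH4 u' - toH4 u‖ ≤ r) (x : E3) : 0 < (1 + opXX θ u') x := by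
  have decompose : (1 + opXX θ u') x = (1 + opXX θ u) x + opXX θ (u' - u) x := by
    rw [map_sub]
    simp only [add_apply, sub_apply]
    ring
  have small : |opXX θ (u' - u) x| ≤ C * r := by
    refine (hsup _ x).trans (mul_le_mul_of_nonneg_left ?_ hC)
    rwa [map_sub]
  rw [decompose]
  linarith [neg_le_of_abs_le small, hu.inv_le hM (hinv x)]

lemma exists_pos_mul_lt_and_mul_lt (A C : ℝ) {a c : ℝ} (ha : 0 < a) (hc : 0 < c) :
    ∃ r, 0 < r ∧ A * r < a ∧ C * r < c := by
  have first : ∀ᶠ r in 𝓝 (0 : ℝ), A * r < a :=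
    ((continuous_const_mul A).tendsto' 0 0 (mul_zero A)).eventually_lt_const ha
  have second : ∀ᶠ r in 𝓝 (0 : ℝ), C * r < c :=
    ((continuous_const_mul C).tendsto' 0 0 (mul_zero C)).eventually_lt_const hc
  obtain ⟨r, hr, hr₀⟩ := ((first.and second).filter_mono nhdsWithin_le_nhds |>.and
    (self_mem_nhdsWithin (s := Ioi (0 : ℝ)))).exists
  exact ⟨r, hr₀, hr⟩

lemma exists_pos_step (θ : ℝ) (hE : ∀ x, 0 < E x) (hmean : mean E = 1) : ∃ δ, 0 < δ ∧
    ∀ τ ∈ Icc (0 : ℝ) 1, ∀ τ', |τ' - τ| ≤ δ → SolvableAt θ E τ → SolvableAt θ E τ' := by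
  have H := solutionFamily_path θ hE
  obtain ⟨K₀, hK₀, apriori⟩ := H.exists_l2Norm_oneSubLap_oneSubLap_le
  obtain ⟨M, hM, coeff⟩ := H.exists_coeff_bounds
  have hM₀ : 0 < M := one_pos.trans_le hM
  obtain ⟨C, hC, hsup⟩ := exists_abs_opXX_le θ
  set K := K₀ / h2MulConst
  have hK : 0 < K := div_pos hK₀ h2MulConst_pos
  obtain ⟨r, hr, hrK, hrM⟩ := exists_pos_mul_lt_and_mul_lt
    (2 * ‖(mongeAmpereOp θ).bilinear‖ * K) C one_half_pos (inv_pos.2 hM₀)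
  rw [mul_right_comm] at hrK
  refine ⟨r / (2 * K) / (‖toH2 (E - 1)‖ + 1), by positivity, ?_⟩
  rintro τ hτ τ' hstep ⟨u, hu, surjective⟩
  let i : PathSolution θ E := ⟨(τ, u), hτ, hu⟩
  have near : ‖toH2 (pathRHS E τ') - (mongeAmpereOp θ).toFun (toH4 u)‖ ≤ r / (2 * K) := by
    rw [hu.toFun_mongeAmpereOp, ← map_sub, pathRHS_sub_pathRHS, map_smul, norm_smul,
      Real.norm_eq_abs]
    calc |τ' - τ| * ‖toH2 (E - 1)‖
        ≤ r / (2 * K) / (‖toH2 (E - 1)‖ + 1) * (‖toH2 (E - 1)‖ + 1) := by gcongr; linarith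
      _ = r / (2 * K) := div_mul_cancel₀ _ (by positivity)
  obtain ⟨v, hvu, hv, surjective', bound⟩ := (mongeAmpereOp θ).exists_toFun_eq hK surjective
    (norm_le_of_l2Norm_linearization (apriori i)) hr.le hrK.le near
  obtain ⟨u', rfl⟩ := exists_toH4_eq_of_toFun_eq hv surjective' bound
  obtain ⟨equation, mean_zero⟩ := mongeAmpere_eq_and_mean_eq_zero (mean_pathRHS hmean τ') hv
  exact ⟨u', ⟨equation, hu.pos_of_near hM₀ (fun x => (coeff i x).2.2.2.2) hC.le hsup hrM hvu,
    mean_zero⟩, surjective'⟩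

lemma isSolution_zero (θ : ℝ) (E : TorusFunction) : IsSolution θ (pathRHS E 0) 0 := by
  refine ⟨by simp [mongeAmpere, pathRHS], fun x => ?_, map_zero _⟩
  rw [map_zero, add_zero, one_apply]
  exact one_pos

lemma toH2_mem_closure_range_deriv_zero (θ : ℝ) (f : TorusFunction) :
    toH2 f ∈ closure (range ((mongeAmpereOp θ).deriv (toH4 0))) := by
  rw [Metric.mem_closure_iff]
  intro ε hε
  have hc := h2MulConst_pos
  obtain ⟨s, hs⟩ := exists_l2Norm_oneSubLap_sub_partialSum_le f (ε := ε / (2 * h2MulConst))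
    (by positivity)
  obtain ⟨h, hh⟩ := partialSum_mem_range_driftLaplacian f dirT s
  refine ⟨_, ⟨toH4 h, rfl⟩, ?_⟩
  have solve : (mongeAmpereOp θ).deriv (toH4 0) (toH4 h) = toH2 (partialSum s f) := by
    rw [deriv_mongeAmpereOp_toH4, linearization_zero, ← hh]
    rfl
  rw [solve, dist_eq_norm, ← map_sub, norm_toH2]
  calc h2MulConst * l2Norm (oneSubLap (f - partialSum s f))
      ≤ h2MulConst * (ε / (2 * h2MulConst)) := mul_le_mul_of_nonneg_left hs hc.le
    _ = ε / 2 := by field_simp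
    _ < ε := half_lt_self hε

lemma solvableAt_zero (θ : ℝ) (hE : ∀ x, 0 < E x) : SolvableAt θ E 0 := by
  refine ⟨0, isSolution_zero θ E, ?_⟩
  obtain ⟨K, hK, apriori⟩ := (solutionFamily_path θ hE).exists_l2Norm_oneSubLap_oneSubLap_le
  have bound := norm_le_of_l2Norm_linearization
    (apriori ⟨(0, 0), ⟨le_rfl, zero_le_one⟩, isSolution_zero θ E⟩)
  set A := (mongeAmpereOp θ).deriv (toH4 0)
  have closed : IsClosed (range A) :=
    (AddMonoidHomClass.antilipschitz_of_bound A
      (K := NNReal.mk (K / h2MulConst) (div_pos hK h2MulConst_pos).le) bound).isClosed_range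
      A.uniformContinuous
  have subset : closure (range toH2) ⊆ range A := by
    refine closed.closure_subset_iff.2 ?_
    rintro _ ⟨f, rfl⟩
    exact closed.closure_eq ▸ toH2_mem_closure_range_deriv_zero θ f
  exact fun y => subset (denseRange_toH2 y)

theorem exists_isSolution (θ : ℝ) (hE : ∀ x, 0 < E x) (hmean : mean E = 1) :
    ∃ u, IsSolution θ E u := by
  obtain ⟨δ, hδ, step⟩ := exists_pos_step θ hE hmean
  have solvable (n : ℕ) : SolvableAt θ E (min 1 (n * δ)) := by
    induction n with
    | zero =>
      rw [Nat.cast_zero, zero_mul, min_eq_right zero_le_one]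
      exact solvableAt_zero θ hE
    | succ n ih =>
      refine step _ ⟨by positivity, min_le_left _ _⟩ _ ?_ ih
      refine (abs_min_sub_min_le_max 1 (((n + 1 : ℕ) : ℝ) * δ) 1 (n * δ)).trans
        (max_le (by simpa using hδ.le) ?_)
      rw [Nat.cast_succ, add_one_mul, add_sub_cancel_left, abs_of_pos hδ]
  obtain ⟨n, hn⟩ := exists_nat_gt (1 / δ)
  obtain ⟨u, hu, -⟩ := solvable n
  rw [min_eq_left ((div_lt_iff₀ hδ).1 hn).le, pathRHS_one] at hu
  exact ⟨u, hu⟩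

end Path

section Coordinates

variable (θ : ℝ) (f : TorusFunction)

lemma Xd_coe : Xd θ f = derivX θ f := by
  funext x
  simp only [Xd, pd, derivX, dirDeriv_apply, dirX, map_add, map_smul, smul_eq_mul]
  ring

lemma Yd_coe : Yd θ f = derivY θ f := by
  funext x
  simp only [Yd, pd, derivY, dirDeriv_apply, dirY, map_add, map_smul, smul_eq_mul]

lemma pd_two_coe : pd 2 f = derivT f := rfl

variable {θ} {E u : TorusFunction}

lemma IsSolution.Xd_Yd_pd (hu : IsSolution θ E u) (hE : ∀ x, 0 < E x) :
    (∀ x, (Xd θ (Xd θ u) x + 1) * (Yd θ (Yd θ u) x + pd 2 (pd 2 u) x + pd 2 u x + 1) -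
        (Yd θ (Xd θ u) x) ^ 2 - (pd 2 (Xd θ u) x) ^ 2 = E x) ∧
      (∀ x, 0 < Xd θ (Xd θ u) x + 1) ∧
      (∀ x, 0 < Yd θ (Yd θ u) x + pd 2 (pd 2 u) x + pd 2 u x + 1) := by
  simp only [Xd_coe, Yd_coe, pd_two_coe, derivY_derivX, derivT_derivX]
  have pos_opXX := hu.pos
  have pos_opYT := hu.pos_opYT hE
  simp only [opXX_apply, opYT_apply, add_apply, one_apply] at pos_opXX pos_opYT
  refine ⟨fun x => ?_, fun x => ?_, fun x => ?_⟩
  · rw [← hu.eq, mongeAmpere_apply]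
    simp only [opXX_apply, opYT_apply, opXY_apply, opXT_apply, add_apply, one_apply]
    ring
  · linarith [pos_opXX x]
  · linarith [pos_opYT x]

end Coordinates

end SmoothPeriodic

end KodairaThurston

/-- The scalar PDE form of Theorem 1.1: for any `θ` and any smooth `ℤ³`-periodic `F` with
`∫_{[0,1]³} (e^F − 1) = 0`, the reduced Calabi–Yau equation
`(u_XX + 1)(u_YY + u_tt + u_t + 1) − u_XY² − u_Xt² = e^F` admits a smooth `ℤ³`-periodic
solution satisfying the ellipticity conditions. -/
theorem solvability_kodaira_thurston (θ : ℝ)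
    (F : EuclideanSpace ℝ (Fin 3) → ℝ) (hF : ContDiff ℝ (⊤ : ℕ∞) F)
    (hFper : ∀ (x a : EuclideanSpace ℝ (Fin 3)), (∀ i, ∃ k : ℤ, a i = (k : ℝ)) →
      F (x + a) = F x)
    (hnorm : ∫ x in {x : EuclideanSpace ℝ (Fin 3) | ∀ i, 0 ≤ x i ∧ x i ≤ 1},
      (Real.exp (F x) - 1) = 0) :
    ∃ u : EuclideanSpace ℝ (Fin 3) → ℝ,
      ContDiff ℝ (⊤ : ℕ∞) u ∧
      (∀ (x a : EuclideanSpace ℝ (Fin 3)), (∀ i, ∃ k : ℤ, a i = (k : ℝ)) →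
        u (x + a) = u x) ∧
      (∀ x, (Xd θ (Xd θ u) x + 1) *
            (Yd θ (Yd θ u) x + pd 2 (pd 2 u) x + pd 2 u x + 1) -
          (Yd θ (Xd θ u) x) ^ 2 - (pd 2 (Xd θ u) x) ^ 2 = Real.exp (F x)) ∧
      (∀ x, 0 < Xd θ (Xd θ u) x + 1) ∧
      (∀ x, 0 < Yd θ (Yd θ u) x + pd 2 (pd 2 u) x + pd 2 u x + 1) := by
  let E : KodairaThurston.TorusFunction :=
    .comp Real.exp Real.contDiff_exp ⟨F, hF, hFper⟩
  have mean_E : KodairaThurston.SmoothPeriodic.mean E = 1 := by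
    have mean_sub_one : KodairaThurston.SmoothPeriodic.mean (E - 1) = 0 :=
      (KodairaThurston.SmoothPeriodic.mean_eq_setIntegral _).trans hnorm
    rwa [map_sub, KodairaThurston.SmoothPeriodic.mean_one, sub_eq_zero] at mean_sub_one
  have pos_E (x) : 0 < E x := Real.exp_pos (F x)
  obtain ⟨u, hu⟩ := KodairaThurston.SmoothPeriodic.exists_isSolution θ pos_E mean_E
  exact ⟨u, u.contDiff, fun x _ ha => u.periodic x ha, hu.Xd_Yd_pd pos_E⟩
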